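/- arXiv:math/0111182 — 6 statements merged into one kernel-verified Lean document; each statement's English description precedes it below -/
import Mathlib

section
/- Let X be a compact, second countable, Hausdorff, totally disconnected space, let R = ∪_n R_n be an AF equivalence relation on X (with (R_n) an increasing sequence of proper equivalence relations), let A be a locally compact, second countable, Hausdorff topological group, and let c : R → A be a continuous cocycle. Then c is continuously cohomologous to a continuous cocycle taking finitely many values on the graph of each R_n: there exists a continuous map ψ : X → A such that the map (x,y) ↦ ψ(x) c(x,y) ψ(y)^{-1} is a continuous cocycle on R which takes only finitely many values on the graph of each R_n. -/
/-- An equivalence relation `r` on a topological space `X` is proper if its graph is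
closed in `X × X` and the quotient map onto the quotient space (with the quotient
topology) is a local homeomorphism. -/
def IsProperEquivRel {X : Type*} [TopologicalSpace X] (r : X → X → Prop) : Prop :=
  Equivalence r ∧ IsClosed {p : X × X | r p.1 p.2} ∧ IsLocalHomeomorph (Quot.mk r)

open Filter Topology in
theorem aux_limit (A : Type*) [Group A] [TopologicalSpace A] [IsTopologicalGroup A]
    [LocallyCompactSpace A] [SecondCountableTopology A] (X : Type*) [TopologicalSpace X] :
    ∃ U : ℕ → Set A, (∀ n, U n ∈ 𝓝 (1 : A)) ∧
      ∀ f : ℕ → X → A, (∀ n, Continuous (f n)) →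
        (∀ n x, f (n + 1) x * (f n x)⁻¹ ∈ U n) →
        ∃ g : X → A, Continuous g ∧ ∀ x, Tendsto (fun n => f n x) atTop (𝓝 (g x)) := by
  let u : UniformSpace A := IsTopologicalGroup.rightUniformSpace A
  have : IsRightUniformGroup A := ⟨rfl⟩
  have : CompleteSpace A := IsRightUniformGroup.completeSpace_of_weaklyLocallyCompactSpace
  have : IsCountablyGenerated (uniformity A) := by
    rw [uniformity_eq_comap_mul_inv_nhds_one]
    infer_instance
  let : PseudoMetricSpace A := UniformSpace.pseudoMetricSpace A
  have key : ∀ n : ℕ, ∃ U ∈ 𝓝 (1 : A), ∀ a b : A, b * a⁻¹ ∈ U → dist a b ≤ 1 / 2 / 2 ^ n := by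
    intro n
    have h := Metric.dist_mem_uniformity (α := A) (ε := 1 / 2 / 2 ^ n) (by positivity)
    rw [uniformity_eq_comap_mul_inv_nhds_one] at h
    obtain ⟨U, hU, hs⟩ := h
    refine ⟨U, hU, fun a b hab => ?_⟩
    have : (a, b) ∈ {p : A × A | dist p.1 p.2 < 1 / 2 / 2 ^ n} := hs hab
    exact le_of_lt this
  choose U hU hd using key
  refine ⟨U, hU, fun f hf hfU => ?_⟩
  have hdist : ∀ x n, dist (f n x) (f (n + 1) x) ≤ 1 / 2 / 2 ^ n :=
    fun x n => hd n _ _ (hfU n x)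
  have hlim : ∀ x, ∃ a, Tendsto (fun n => f n x) atTop (𝓝 a) := fun x =>
    cauchySeq_tendsto_of_complete (cauchySeq_of_le_geometric_two (hdist x))
  choose g hg using hlim
  refine ⟨g, ?_, hg⟩
  have hu : TendstoUniformly f g atTop := by
    rw [Metric.tendstoUniformly_iff]
    intro ε hε
    have h2 : Tendsto (fun n : ℕ => (1 : ℝ) / 2 ^ n) atTop (𝓝 0) := by
      simpa using tendsto_pow_atTop_nhds_zero_of_lt_one (r := (1 / 2 : ℝ)) (by norm_num) (by norm_num)
    filter_upwards [h2.eventually (gt_mem_nhds hε)] with n hn x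
    rw [dist_comm]
    exact (dist_le_of_le_geometric_two_of_tendsto (hdist x) (hg x) n).trans_lt hn
  exact hu.continuous (Frequently.of_forall hf)

open Filter Topology in
theorem aux_approx {X : Type*} [TopologicalSpace X] [CompactSpace X] [T2Space X]
    [TotallyDisconnectedSpace X]
    {A : Type*} [Group A] [TopologicalSpace A] [IsTopologicalGroup A]
    (b : X → A) (hb : Continuous b) (V : Set A) (hV : V ∈ 𝓝 (1 : A)) :
    ∃ f : X → A, Continuous f ∧ (Set.range f).Finite ∧ ∀ x, f x * (b x)⁻¹ ∈ V := by
  classical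
  have H : ∃ K : Set X, IsClopen K ∧ Set.univ ⊆ K ∧ ∃ f : X → A, Continuous f ∧
      (Set.range f).Finite ∧ ∀ x ∈ K, f x * (b x)⁻¹ ∈ V := by
    refine isCompact_univ.induction_on (p := fun S => ∃ K : Set X, IsClopen K ∧ S ⊆ K ∧
      ∃ f : X → A, Continuous f ∧ (Set.range f).Finite ∧ ∀ x ∈ K, f x * (b x)⁻¹ ∈ V) ?_ ?_ ?_ ?_
    · exact ⟨∅, isClopen_empty, subset_rfl, fun _ => 1, continuous_const,
        Set.finite_range_const, by simp⟩
    · rintro S T hST ⟨K, hK, hTK, h⟩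
      exact ⟨K, hK, hST.trans hTK, h⟩
    · rintro S T ⟨K, hK, hSK, f, hf, hfr, hfV⟩ ⟨L, hL, hTL, g, hg, hgr, hgV⟩
      refine ⟨K ∪ L, hK.union hL, Set.union_subset_union hSK hTL, K.piecewise f g, ?_, ?_, ?_⟩
      · refine Continuous.piecewise ?_ hf hg
        simp [hK.frontier_eq]
      · refine (hfr.union hgr).subset ?_
        rintro _ ⟨x, rfl⟩
        by_cases hx : x ∈ K <;> simp [hx]
      · intro x hx
        by_cases hxK : x ∈ K
        · simpa [hxK] using hfV x hxK
        · simpa [hxK] using hgV x (hx.resolve_left hxK)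
    · intro x _
      have hc : Continuous fun y => b x * (b y)⁻¹ := by fun_prop
      have hm : (fun y => b x * (b y)⁻¹) ⁻¹' V ∈ 𝓝 x :=
        hc.continuousAt (by simpa using hV)
      obtain ⟨W, hW, hxW, hWV⟩ := compact_exists_isClopen_in_isOpen
        isOpen_interior (mem_interior_iff_mem_nhds.2 hm)
      exact ⟨W, mem_nhdsWithin_of_mem_nhds (hW.isOpen.mem_nhds hxW), W, hW, subset_rfl,
        fun _ => b x, continuous_const, Set.finite_range_const,
        fun y hy => (interior_subset (hWV hy) : y ∈ (fun y => b x * (b y)⁻¹) ⁻¹' V)⟩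
  obtain ⟨K, -, hK, f, hf, hfr, hfV⟩ := H
  exact ⟨f, hf, hfr, fun x => hfV x (hK trivial)⟩

open Filter Topology in
theorem aux_section {X : Type*} [TopologicalSpace X] [CompactSpace X] [T2Space X]
    [TotallyDisconnectedSpace X] (r : X → X → Prop) (hr : IsProperEquivRel r) :
    ∃ s : X → X, Continuous s ∧ (∀ x, r x (s x)) ∧ ∀ x y, r x y → s x = s y := by
  obtain ⟨heq, hcl, hloc⟩ := hr
  have hq : ∀ x y, Quot.mk r x = Quot.mk r y ↔ r x y := fun x y => by
    rw [Quot.eq, heq.eqvGen_iff]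
  have satclosed : ∀ T : Set X, IsClosed T → IsClosed {x | ∃ t ∈ T, r x t} := by
    intro T hT
    have h1 : IsClosed ({p : X × X | r p.1 p.2} ∩ Prod.snd ⁻¹' T) :=
      hcl.inter (hT.preimage continuous_snd)
    have h2 := (h1.isCompact.image continuous_fst).isClosed
    convert h2 using 1
    ext x
    simp [and_comm]
  have satopen : ∀ T : Set X, IsOpen T → IsOpen {x | ∃ t ∈ T, r x t} := by
    intro T hT
    have h2 := (hloc.isOpenMap _ hT).preimage hloc.continuous
    convert h2 using 1
    ext x
    simp only [Set.mem_setOf_eq, Set.mem_preimage, Set.mem_image, hq]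
    exact ⟨fun ⟨t, h, h'⟩ => ⟨t, h, heq.symm h'⟩, fun ⟨t, h, h'⟩ => ⟨t, h, heq.symm h'⟩⟩
  have H : ∃ T : Set X, IsClopen T ∧ (∀ x ∈ T, ∀ y ∈ T, r x y → x = y) ∧
      Set.univ ⊆ {x | ∃ t ∈ T, r x t} := by
    refine isCompact_univ.induction_on (p := fun S => ∃ T : Set X, IsClopen T ∧
      (∀ x ∈ T, ∀ y ∈ T, r x y → x = y) ∧ S ⊆ {x | ∃ t ∈ T, r x t}) ?_ ?_ ?_ ?_
    · exact ⟨∅, isClopen_empty, by simp, by simp⟩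
    · rintro S S' hSS ⟨T, hT, hi, hs⟩
      exact ⟨T, hT, hi, hSS.trans hs⟩
    · rintro S S' ⟨T, hT, hi, hs⟩ ⟨T', hT', hi', hs'⟩
      refine ⟨T ∪ (T' \ {x | ∃ t ∈ T, r x t}),
        hT.union (hT'.diff ⟨satclosed T hT.isClosed, satopen T hT.isOpen⟩), ?_, ?_⟩
      · rintro x (hx | ⟨hx, hx'⟩) y (hy | ⟨hy, hy'⟩) hxy
        · exact hi x hx y hy hxy
        · exact (hy' ⟨x, hx, heq.symm hxy⟩).elim
        · exact (hx' ⟨y, hy, hxy⟩).elim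
        · exact hi' x hx y hy hxy
      · rintro x (hx | hx)
        · obtain ⟨t, ht, hxt⟩ := hs hx
          exact ⟨t, Or.inl ht, hxt⟩
        · obtain ⟨t, ht, hxt⟩ := hs' hx
          by_cases h : ∃ t' ∈ T, r t t'
          · obtain ⟨t', ht', htt⟩ := h
            exact ⟨t', Or.inl ht', heq.trans hxt htt⟩
          · exact ⟨t, Or.inr ⟨ht, h⟩, hxt⟩
    · intro x _
      obtain ⟨e, hxe, he⟩ := hloc x
      obtain ⟨W, hW, hxW, hWe⟩ := compact_exists_isClopen_in_isOpen e.open_source hxe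
      refine ⟨W, mem_nhdsWithin_of_mem_nhds (hW.isOpen.mem_nhds hxW), W, hW, ?_, ?_⟩
      · intro y hy z hz hyz
        refine e.injOn (hWe hy) (hWe hz) ?_
        rw [← he]
        exact (hq y z).2 hyz
      · exact fun y hy => ⟨y, hy, heq.refl y⟩
  obtain ⟨T, hT, hi, hs⟩ := H
  have hs' : ∀ x, ∃ t ∈ T, r x t := fun x => hs trivial
  choose s hsT hsr using hs'
  have hu : ∀ x t, t ∈ T → r x t → s x = t := fun x t ht h =>
    hi _ (hsT x) _ ht (heq.trans (heq.symm (hsr x)) h)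
  refine ⟨s, ?_, hsr, fun x y hxy => hu x _ (hsT y) (heq.trans hxy (hsr y))⟩
  rw [continuous_iff_isClosed]
  intro C hC
  convert satclosed (T ∩ C) (hT.isClosed.inter hC) using 1
  ext x
  constructor
  · intro h
    exact ⟨s x, ⟨hsT x, h⟩, hsr x⟩
  · rintro ⟨t, ⟨ht, htC⟩, hxt⟩
    change s x ∈ C
    rwa [hu x t ht hxt]

open Filter Topology in
theorem aux_step {X : Type*} [TopologicalSpace X] [CompactSpace X] [T2Space X]
    [TotallyDisconnectedSpace X]
    {A : Type*} [Group A] [TopologicalSpace A] [IsTopologicalGroup A]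
    (r r' : X → X → Prop) (hr : Equivalence r) (hr' : Equivalence r')
    (hrr : ∀ x y, r x y → r' x y)
    (s s' : X → X) (hs : Continuous s) (hs' : Continuous s')
    (hsr : ∀ x, r x (s x)) (hsr' : ∀ x, r' x (s' x))
    (hsi : ∀ x y, r x y → s x = s y) (hsi' : ∀ x y, r' x y → s' x = s' y)
    (c : X → X → A)
    (hcoc : ∀ x y z, r' x y → r' y z → c x y * c y z = c x z)
    (hcont : ContinuousOn (fun p : X × X => c p.1 p.2) {p | r' p.1 p.2})
    (hfin : {a : A | ∃ x y, r x y ∧ c x y = a}.Finite)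
    (U : Set A) (hU : U ∈ 𝓝 (1 : A)) :
    ∃ h : X → A, Continuous h ∧ (∀ x, h x ∈ U) ∧
      (∀ x y, r x y → h x * c x y * (h y)⁻¹ = c x y) ∧
      {a : A | ∃ x y, r' x y ∧ h x * c x y * (h y)⁻¹ = a}.Finite := by
  have hone : ∀ x, c x x = 1 := fun x => by
    simpa using hcoc x x x (hr'.refl x) (hr'.refl x)
  have hinv : ∀ x y, r' x y → c y x = (c x y)⁻¹ := fun x y h => by
    rw [eq_inv_iff_mul_eq_one, hcoc y x y (hr'.symm h) h, hone]
  set F := {a : A | ∃ x y, r x y ∧ c x y = a} with hF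
  have hfF : ∀ x, c x (s x) ∈ F := fun x => ⟨x, s x, hsr x, rfl⟩
  have hV : (⋂ a ∈ F, (fun v : A => a * v * a⁻¹) ⁻¹' U) ∈ 𝓝 (1 : A) := by
    rw [biInter_mem hfin]
    intro a _
    have hc : Continuous fun v : A => a * v * a⁻¹ := by fun_prop
    exact hc.continuousAt (by simpa using hU)
  have hss : ∀ x, r' (s x) (s' x) := fun x =>
    hr'.trans (hr'.symm (hrr _ _ (hsr x))) (hsr' x)
  have hb : Continuous fun x => c x (s' x) :=
    hcont.comp_continuous (f := fun x => (x, s' x)) (by fun_prop) (fun x => hsr' x)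
  have hfc : Continuous fun x => c x (s x) :=
    hcont.comp_continuous (f := fun x => (x, s x)) (by fun_prop) (fun x => hrr _ _ (hsr x))
  obtain ⟨g, hg, hgr, hgV⟩ := aux_approx _ hb _ hV
  have hs's : ∀ x, s' (s x) = s' x := fun x => (hsi' _ _ (hrr _ _ (hsr x))).symm
  refine ⟨fun x => c x (s x) * (g (s x) * (c (s x) (s' (s x)))⁻¹) * (c x (s x))⁻¹,
    ?_, ?_, ?_, ?_⟩
  · have h1 : Continuous fun x => c (s x) (s' (s x)) := hb.comp hs
    have h2 : Continuous fun x => g (s x) := hg.comp hs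
    exact (hfc.mul (h2.mul h1.inv)).mul hfc.inv
  · intro x
    have := hgV (s x)
    simp only [Set.mem_iInter] at this
    exact this _ (hfF x)
  · intro x y hxy
    have e : c x y = c x (s x) * (c y (s x))⁻¹ := by
      rw [← hinv y (s x) (by rw [hsi x y hxy]; exact hrr _ _ (hsr y)), hcoc]
      · exact hrr _ _ (hsr x)
      · rw [hsi x y hxy]; exact hr'.symm (hrr _ _ (hsr y))
    dsimp only
    rw [e, ← hsi x y hxy]
    group
  · have hG : (Set.image2 (fun p q : A × A => p.1 * p.2 * (q.1 * q.2)⁻¹)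
        (F ×ˢ Set.range g) (F ×ˢ Set.range g)).Finite :=
      Set.Finite.image2 _ (hfin.prod hgr) (hfin.prod hgr)
    refine hG.subset ?_
    rintro a ⟨x, y, hxy, rfl⟩
    refine ⟨(c x (s x), g (s x)), ⟨hfF x, s x, rfl⟩, (c y (s y), g (s y)),
      ⟨hfF y, s y, rfl⟩, ?_⟩
    have e1 : ∀ x, c x (s' x) = c x (s x) * c (s x) (s' x) := fun x =>
      (hcoc _ _ _ (hrr _ _ (hsr x)) (hss x)).symm
    have e : c x y = c x (s x) * c (s x) (s' x) * (c y (s y) * c (s y) (s' y))⁻¹ := by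
      rw [← e1, ← e1, ← hinv _ _ (hsr' y), ← hsi' x y hxy, hcoc]
      · exact hsr' x
      · rw [hsi' x y hxy]; exact hr'.symm (hsr' y)
    dsimp only
    rw [e, hs's, hs's]
    group

/-- **Every continuous cocycle on an AF equivalence relation is continuously cohomologous
to one taking finitely many values on each finite stage.** Let `X` be a compact, second
countable, Hausdorff, totally disconnected space, let `R = ⋃ n, R n` be an AF equivalence
relation on `X` (with `(R n)` an increasing sequence of proper equivalence relations),
let `A` be a locally compact second countable Hausdorff topological group and let `c` be
a continuous cocycle on `R` with values in `A`. Then there is a continuous `ψ : X → A`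
such that `(x, y) ↦ ψ x * c (x, y) * (ψ y)⁻¹` is a continuous cocycle on `R` taking only
finitely many values on (the graph of) each `R n`. -/
theorem continuous_cocycle_cohomologous_finitely_many_values
    {X : Type*} [TopologicalSpace X] [CompactSpace X] [T2Space X]
    [SecondCountableTopology X] [TotallyDisconnectedSpace X]
    {A : Type*} [Group A] [TopologicalSpace A] [IsTopologicalGroup A]
    [LocallyCompactSpace A] [SecondCountableTopology A] [T2Space A]
    (R : ℕ → X → X → Prop)
    (hproper : ∀ n, IsProperEquivRel (R n))
    (hmono : ∀ n x y, R n x y → R (n + 1) x y)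
    (c : X → X → A)
    (hcoc : ∀ x y z, (∃ n, R n x y) → (∃ n, R n y z) → c x y * c y z = c x z)
    (hcont : ∀ n, ContinuousOn (fun p : X × X => c p.1 p.2) {p | R n p.1 p.2}) :
    ∃ ψ : X → A, Continuous ψ ∧
      (∀ x y z, (∃ n, R n x y) → (∃ n, R n y z) →
        (ψ x * c x y * (ψ y)⁻¹) * (ψ y * c y z * (ψ z)⁻¹) = ψ x * c x z * (ψ z)⁻¹) ∧
      (∀ n, ContinuousOn (fun p : X × X => ψ p.1 * c p.1 p.2 * (ψ p.2)⁻¹)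
        {p | R n p.1 p.2}) ∧
      (∀ n, {a : A | ∃ x y, R n x y ∧ ψ x * c x y * (ψ y)⁻¹ = a}.Finite) := by
  choose s hs hsr hsi using fun n => aux_section (R n) (hproper n)
  obtain ⟨U, hU, hlim⟩ := aux_limit A X
  have heq : ∀ n, Equivalence (R n) := fun n => (hproper n).1
  have hcontψ : ∀ (ψ : X → A), Continuous ψ → ∀ n,
      ContinuousOn (fun p : X × X => ψ p.1 * c p.1 p.2 * (ψ p.2)⁻¹) {p | R n p.1 p.2} := by
    intro ψ hψ n
    have h1 : Continuous fun p : X × X => ψ p.1 := hψ.comp continuous_fst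
    have h2 : Continuous fun p : X × X => (ψ p.2)⁻¹ := (hψ.comp continuous_snd).inv
    exact (h1.continuousOn.mul (hcont n)).mul h2.continuousOn
  have hcocψ : ∀ (ψ : X → A) (x y z : X), (∃ n, R n x y) → (∃ n, R n y z) →
      (ψ x * c x y * (ψ y)⁻¹) * (ψ y * c y z * (ψ z)⁻¹) = ψ x * c x z * (ψ z)⁻¹ := by
    intro ψ x y z h h'
    rw [← hcoc x y z h h']
    group
  let P : ℕ → (X → A) → Prop := fun n ψ => Continuous ψ ∧
    {a : A | ∃ x y, R n x y ∧ ψ x * c x y * (ψ y)⁻¹ = a}.Finite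
  have h0 : ∃ ψ, P 0 ψ := by
    have hb : Continuous fun x => c x (s 0 x) :=
      (hcont 0).comp_continuous (f := fun x => (x, s 0 x))
        (continuous_id.prodMk (hs 0)) (fun x => hsr 0 x)
    refine ⟨fun x => (c x (s 0 x))⁻¹, hb.inv, (Set.finite_singleton (1 : A)).subset ?_⟩
    rintro a ⟨x, y, hxy, rfl⟩
    have e : c x y * c y (s 0 y) = c x (s 0 x) := by
      rw [hcoc x y _ ⟨0, hxy⟩ ⟨0, hsr 0 y⟩, hsi 0 x y hxy]
    simp only [Set.mem_singleton_iff, inv_inv]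
    rw [mul_assoc, e, inv_mul_cancel]
  have hstep : ∀ n ψ, P n ψ → ∃ ψ', P (n + 1) ψ' ∧ (∀ x, ψ' x * (ψ x)⁻¹ ∈ U n) ∧
      ∀ x y, R n x y → ψ' x * c x y * (ψ' y)⁻¹ = ψ x * c x y * (ψ y)⁻¹ := by
    rintro n ψ ⟨hψ, hfin⟩
    obtain ⟨h, hh, hhU, hhc, hhf⟩ := aux_step (R n) (R (n + 1)) (heq n) (heq (n + 1)) (hmono n)
      (s n) (s (n + 1)) (hs n) (hs (n + 1)) (hsr n) (hsr (n + 1)) (hsi n) (hsi (n + 1))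
      (fun x y => ψ x * c x y * (ψ y)⁻¹)
      (fun x y z h h' => hcocψ ψ x y z ⟨_, h⟩ ⟨_, h'⟩) (hcontψ ψ hψ (n + 1)) hfin (U n) (hU n)
    have e : ∀ x y, (h x * ψ x) * c x y * (h y * ψ y)⁻¹ =
        h x * (ψ x * c x y * (ψ y)⁻¹) * (h y)⁻¹ := fun x y => by group
    refine ⟨fun x => h x * ψ x, ⟨hh.mul hψ, ?_⟩, fun x => ?_, fun x y hxy => ?_⟩
    · simpa only [e] using hhf
    · simpa using hhU x
    · rw [e]; exact hhc x y hxy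
  obtain ⟨ψ0, hψ0⟩ := h0
  choose! N hN hNU hNc using hstep
  let f : ℕ → X → A := fun n => Nat.rec ψ0 (fun k ψ => N k ψ) n
  have hf : ∀ n, P n (f n) := by
    intro n
    induction n with
    | zero => exact hψ0
    | succ k ih => exact hN k _ ih
  obtain ⟨ψ, hψ, hψlim⟩ := hlim f (fun n => (hf n).1) (fun n x => hNU n _ (hf n) x)
  refine ⟨ψ, hψ, hcocψ ψ, hcontψ ψ hψ, fun n => (hf n).2.subset ?_⟩
  rintro a ⟨x, y, hxy, rfl⟩
  refine ⟨x, y, hxy, ?_⟩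
  have hR : ∀ k, R (n + k) x y := by
    intro k
    induction k with
    | zero => exact hxy
    | succ k ih => exact hmono _ _ _ ih
  have hconst : ∀ k, f (n + k) x * c x y * (f (n + k) y)⁻¹ = f n x * c x y * (f n y)⁻¹ := by
    intro k
    induction k with
    | zero => rfl
    | succ k ih => rw [← ih]; exact hNc (n + k) _ (hf _) x y (hR k)
  have ht := ((hψlim x).mul_const (c x y)).mul (hψlim y).inv
  refine tendsto_nhds_unique (f := fun _ : ℕ => f n x * c x y * (f n y)⁻¹)
    tendsto_const_nhds (ht.congr' ?_)
  filter_upwards [Filter.eventually_ge_atTop n] with m hm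
  obtain ⟨k, rfl⟩ := Nat.exists_eq_add_of_le hm
  exact hconst k
end

section
/- Let T be a surjective local homeomorphism of a compact metric space X onto itself and let φ ∈ C(X,ℝ). A Borel probability measure μ on X satisfies the Radon–Nikodym equation D_μ = e^{c_φ} if and only if ∫_X L_φ f dμ = ∫_X f dμ for every continuous function f : X → ℝ. -/
open MeasureTheory

/-- The Birkhoff sum `∑_{k < n} φ(T^k x)`. -/
def birkhoff {X : Type*} (T : X → X) (φ : X → ℝ) (n : ℕ) (x : X) : ℝ :=
  ∑ k ∈ Finset.range n, φ (T^[k] x)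

/-- The Ruelle transfer operator `L_φ f (x) = ∑_{T y = x} e^{φ(y)} f(y)` associated to a
map `T` with finite fibers and a potential `φ`. -/
noncomputable def ruelle {X : Type*} (T : X → X) (φ : X → ℝ) (f : X → ℝ) (x : X) : ℝ :=
  ∑ᶠ y ∈ {y | T y = x}, Real.exp (φ y) * f y

/-- A Borel probability measure `μ` on `X` satisfies the Radon–Nikodym equation
`D_μ = e^{c_φ}` for the groupoid `G(X, T)` if for all `m, n ∈ ℕ`, every Borel set `A`
and every injective Borel map `h` on `A` with `T^m (h x) = T^n x` on `A`, one has
`μ(h(A)) = ∫_A e^{c_φ(h x, m - n, x)} dμ(x)`, where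
`c_φ(h x, m - n, x) = ∑_{k < m} φ(T^k (h x)) - ∑_{k < n} φ(T^k x)`. -/
def SatisfiesRN {X : Type*} [MeasurableSpace X] (T : X → X) (φ : X → ℝ)
    (μ : Measure X) : Prop :=
  ∀ (m n : ℕ) (A : Set X) (h : X → X), MeasurableSet A → Measurable h →
    Set.InjOn h A → (∀ x ∈ A, T^[m] (h x) = T^[n] x) →
    μ (h '' A) =
      ∫⁻ x in A, ENNReal.ofReal (Real.exp (birkhoff T φ m (h x) - birkhoff T φ n x)) ∂μ

open scoped ENNReal

/-- The transfer operator on `[0,∞]`-valued functions. -/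
noncomputable def Lop {X : Type*} (T : X → X) (φ : X → ℝ) (f : X → ℝ≥0∞) (x : X) : ℝ≥0∞ :=
  ∑' y : {y // T y = x}, ENNReal.ofReal (Real.exp (φ y)) * f y

lemma Lop_zero {X : Type*} (T : X → X) (φ : X → ℝ) (f : X → ℝ≥0∞) :
    Lop (T^[0]) (birkhoff T φ 0) f = f := by
  funext x
  unfold Lop
  have : ∀ y : {y // T^[0] y = x}, ENNReal.ofReal (Real.exp (birkhoff T φ 0 y)) * f y = f x := by
    rintro ⟨y, hy⟩
    have : y = x := hy
    subst this
    simp [birkhoff]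
  rw [tsum_congr this]
  exact tsum_eq_single (⟨x, rfl⟩ : {y // T^[0] y = x}) (fun y hy => (hy (Subtype.ext y.2)).elim)

lemma Lop_succ {X : Type*} (T : X → X) (φ : X → ℝ) (f : X → ℝ≥0∞) (n : ℕ) :
    Lop (T^[n+1]) (birkhoff T φ (n+1)) f = Lop (T^[n]) (birkhoff T φ n) (Lop T φ f) := by
  funext x
  unfold Lop
  simp_rw [← ENNReal.tsum_mul_left]
  rw [← ENNReal.tsum_sigma' (fun p : (z : {z // T^[n] z = x}) × {y // T y = z} =>
    ENNReal.ofReal (Real.exp (birkhoff T φ n p.1)) *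
      (ENNReal.ofReal (Real.exp (φ p.2)) * f p.2))]
  let e : {y // T^[n+1] y = x} ≃ (z : {z // T^[n] z = x}) × {y // T y = z} :=
    { toFun := fun y => ⟨⟨T y, by simpa using y.2⟩, ⟨y, rfl⟩⟩
      invFun := fun p => ⟨p.2, by
        have h1 := p.1.2
        have h2 := p.2.2
        rw [Function.iterate_succ_apply, h2, h1]⟩
      left_inv := fun y => rfl
      right_inv := by
        rintro ⟨⟨z, hz⟩, ⟨y, hy⟩⟩
        simp only at hy
        subst hy
        rfl }
  rw [← e.tsum_eq]
  refine tsum_congr fun y => ?_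
  simp only [e, Equiv.coe_fn_mk]
  rw [← mul_assoc, ← ENNReal.ofReal_mul (Real.exp_pos _).le, ← Real.exp_add]
  congr 3
  unfold birkhoff
  rw [Finset.sum_range_succ']
  simp

lemma exists_part {X : Type*} [MetricSpace X] [CompactSpace X] [MeasurableSpace X] [BorelSpace X]
    (T : X → X) (hTloc : IsLocalHomeomorph T) :
    ∃ (N : ℕ) (A : Fin N → Set X), (∀ i, MeasurableSet (A i)) ∧ (∀ i, Set.InjOn T (A i)) ∧
      (∀ x, ∃! i, x ∈ A i) := by
  choose U hUo hxU hU using hTloc.isLocallyInjective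
  obtain ⟨t, -, ht⟩ := isCompact_univ.elim_nhds_subcover U (fun x _ => (hUo x).mem_nhds (hxU x))
  let V : Fin t.card → Set X := fun i => U (t.equivFin.symm i)
  refine ⟨t.card, disjointed V, fun i => ?_, fun i => ?_, fun x => ?_⟩
  · exact disjointedRec (p := MeasurableSet) (fun {s j} hs => hs.diff (hUo _).measurableSet)
      (hUo _).measurableSet
  · exact (hU _).mono (disjointed_subset V i)
  · have hx : x ∈ ⋃ i, disjointed V i := by
      rw [iUnion_disjointed]
      have := ht (Set.mem_univ x)
      simp only [Set.mem_iUnion] at this ⊢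
      obtain ⟨y, hy, hxy⟩ := this
      exact ⟨t.equivFin ⟨y, hy⟩, by simpa [V] using hxy⟩
    obtain ⟨i, hi⟩ := Set.mem_iUnion.1 hx
    refine ⟨i, hi, fun j hj => ?_⟩
    by_contra hne
    exact Set.disjoint_left.1 (disjoint_disjointed V hne) hj hi

section
variable {X : Type*} [MetricSpace X] [CompactSpace X] [MeasurableSpace X] [BorelSpace X]

lemma Lop_indicator_apply (T : X → X) (φ : X → ℝ) {A : Set X} (hA : Set.InjOn T A)
    (f : X → ℝ≥0∞) {y : X} (hy : y ∈ A) :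
    Lop T φ (A.indicator f) (T y) = ENNReal.ofReal (Real.exp (φ y)) * f y := by
  unfold Lop
  rw [tsum_eq_single (⟨y, rfl⟩ : {z // T z = T y})]
  · simp [hy]
  · rintro ⟨z, hz⟩ hne
    have : z ∉ A := fun h => hne (Subtype.ext (hA h hy hz))
    simp [this]

lemma Lop_indicator_zero (T : X → X) (φ : X → ℝ) {A : Set X}
    (f : X → ℝ≥0∞) {x : X} (hx : x ∉ T '' A) :
    Lop T φ (A.indicator f) x = 0 := by
  unfold Lop
  rw [ENNReal.tsum_eq_zero]
  rintro ⟨z, hz⟩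
  have : z ∉ A := fun h => hx ⟨z, h, hz⟩
  simp [this]

lemma Lop_indicator_measurable (T : X → X) (hTc : Continuous T) (φ : X → ℝ) (hφ : Continuous φ)
    {A : Set X} (hAm : MeasurableSet A) (hA : Set.InjOn T A)
    (f : X → ℝ≥0∞) (hf : Measurable f) :
    Measurable (Lop T φ (A.indicator f)) := by
  have : StandardBorelSpace A := hAm.standardBorel
  have he : MeasurableEmbedding (A.domRestrict T) :=
    Measurable.measurableEmbedding (hTc.measurable.comp measurable_subtype_coe)
      (Set.injOn_iff_injective.1 hA)
  have : Lop T φ (A.indicator f) = Function.extend (A.domRestrict T)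
      (fun y : A => ENNReal.ofReal (Real.exp (φ y)) * f y) (fun _ => 0) := by
    funext x
    by_cases hx : x ∈ T '' A
    · obtain ⟨y, hy, rfl⟩ := hx
      rw [Lop_indicator_apply T φ hA f hy]
      have := he.injective.extend_apply
        (fun y : A => ENNReal.ofReal (Real.exp (φ y)) * f y) (fun _ => 0) ⟨y, hy⟩
      exact this.symm
    · rw [Lop_indicator_zero T φ f hx, Function.extend_apply']
      rintro ⟨a, ha⟩
      exact hx ⟨a, a.2, ha⟩
  rw [this]
  refine he.measurable_extend ?_ measurable_const
  have := hφ.measurable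
  fun_prop

lemma Lop_sum (T : X → X) (φ : X → ℝ) {N : ℕ} {A : Fin N → Set X} (hA : ∀ x, ∃! i, x ∈ A i)
    (f : X → ℝ≥0∞) (x : X) :
    Lop T φ f x = ∑ i, Lop T φ ((A i).indicator f) x := by
  unfold Lop
  rw [← Summable.tsum_finsetSum (fun _ _ => ENNReal.summable)]
  refine tsum_congr fun y => ?_
  rw [← Finset.mul_sum]
  congr 1
  obtain ⟨i, hi, hu⟩ := hA y
  rw [Finset.sum_eq_single i]
  · simp [hi]
  · intro j _ hj
    have : (y : X) ∉ A j := fun h => hj (hu j h)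
    simp [this]
  · simp

lemma Lop_measurable (T : X → X) (hTloc : IsLocalHomeomorph T) (φ : X → ℝ) (hφ : Continuous φ)
    (f : X → ℝ≥0∞) (hf : Measurable f) : Measurable (Lop T φ f) := by
  obtain ⟨N, A, hm, hi, hu⟩ := exists_part T hTloc
  have : Lop T φ f = fun x => ∑ i, Lop T φ ((A i).indicator f) x := funext (Lop_sum T φ hu f)
  rw [this]
  exact Finset.measurable_sum _ fun i _ =>
    Lop_indicator_measurable T hTloc.continuous φ hφ (hm i) (hi i) f hf

lemma fiber_finite (T : X → X) (hTloc : IsLocalHomeomorph T) (x : X) : {y | T y = x}.Finite := by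
  obtain ⟨N, A, hm, hi, hu⟩ := exists_part T hTloc
  have : {y | T y = x} ⊆ ⋃ i, ({y | T y = x} ∩ A i) := by
    intro y hy
    obtain ⟨i, h, -⟩ := hu y
    exact Set.mem_iUnion.2 ⟨i, hy, h⟩
  refine (Set.finite_iUnion fun i => ?_).subset this
  apply Set.Subsingleton.finite
  rintro a ⟨ha, ha'⟩ b ⟨hb, hb'⟩
  exact hi i ha' hb' (ha.trans hb.symm)

lemma Lop_bound (T : X → X) (hTloc : IsLocalHomeomorph T) (φ : X → ℝ) :
    ∃ N : ℕ, ∀ (f : X → ℝ≥0∞) (C : ℝ≥0∞),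
      (∀ y, ENNReal.ofReal (Real.exp (φ y)) * f y ≤ C) → ∀ x, Lop T φ f x ≤ N * C := by
  obtain ⟨N, A, hm, hi, hu⟩ := exists_part T hTloc
  refine ⟨N, fun f C hC x => ?_⟩
  rw [Lop_sum T φ hu f x]
  refine (Finset.sum_le_card_nsmul _ _ C fun i _ => ?_).trans (by simp)
  by_cases hx : x ∈ T '' A i
  · obtain ⟨y, hy, rfl⟩ := hx
    rw [Lop_indicator_apply T φ (hi i) f hy]
    exact hC y
  · rw [Lop_indicator_zero T φ f hx]
    exact zero_le

lemma ofReal_ruelle (T : X → X) (hTloc : IsLocalHomeomorph T) (φ f : X → ℝ) (hf : ∀ x, 0 ≤ f x)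
    (x : X) : ENNReal.ofReal (ruelle T φ f x) = Lop T φ (fun y => ENNReal.ofReal (f y)) x := by
  unfold ruelle Lop
  have hfin := fiber_finite T hTloc x
  rw [finsum_mem_eq_finite_toFinset_sum _ hfin, ENNReal.ofReal_sum_of_nonneg
    (fun i _ => mul_nonneg (Real.exp_pos _).le (hf i)), ← Finset.tsum_subtype]
  let e : {y // T y = x} ≃ {y // y ∈ hfin.toFinset} :=
    Equiv.subtypeEquivRight (fun y => by simp)
  rw [← e.tsum_eq]
  refine tsum_congr fun y => ?_
  rw [ENNReal.ofReal_mul (Real.exp_pos _).le]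
  rfl

lemma ruelle_nonneg (T : X → X) (φ f : X → ℝ) (hf : ∀ x, 0 ≤ f x) (x : X) :
    0 ≤ ruelle T φ f x := by
  unfold ruelle
  exact finsum_nonneg fun i => finsum_nonneg fun _ => mul_nonneg (Real.exp_pos _).le (hf i)

lemma ruelle_integrable (T : X → X) (hTloc : IsLocalHomeomorph T) (φ : X → ℝ) (hφ : Continuous φ)
    (f : X → ℝ) (hfc : Continuous f) (hf : ∀ x, 0 ≤ f x)
    (μ : Measure X) [IsProbabilityMeasure μ] : Integrable (ruelle T φ f) μ := by
  have h1 : Measurable (ruelle T φ f) := by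
    have : ruelle T φ f = fun x => (Lop T φ (fun y => ENNReal.ofReal (f y)) x).toReal := by
      funext x
      rw [← ofReal_ruelle T hTloc φ f hf x, ENNReal.toReal_ofReal (ruelle_nonneg T φ f hf x)]
    rw [this]
    exact (Lop_measurable T hTloc φ hφ _ hfc.measurable.ennreal_ofReal).ennreal_toReal
  obtain ⟨N, hN⟩ := Lop_bound T hTloc φ
  have hgc : Continuous fun y => Real.exp (φ y) * f y := by fun_prop
  obtain ⟨C, hC⟩ := (isCompact_range hgc).bddAbove
  have hb : ∀ x, ruelle T φ f x ≤ (N * ENNReal.ofReal C).toReal := by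
    intro x
    rw [← ENNReal.toReal_ofReal (ruelle_nonneg T φ f hf x)]
    refine ENNReal.toReal_mono (ENNReal.mul_ne_top (by simp) (by simp)) ?_
    rw [ofReal_ruelle T hTloc φ f hf x]
    apply hN
    intro y
    rw [← ENNReal.ofReal_mul (Real.exp_pos _).le]
    exact ENNReal.ofReal_le_ofReal (hC ⟨y, rfl⟩)
  refine Integrable.of_bound h1.aestronglyMeasurable (N * ENNReal.ofReal C).toReal ?_
  refine Filter.Eventually.of_forall fun x => ?_
  rw [Real.norm_of_nonneg (ruelle_nonneg T φ f hf x)]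
  exact hb x

lemma rn_to_P (T : X → X) (hTloc : IsLocalHomeomorph T) (φ : X → ℝ) (hφ : Continuous φ)
    (μ : Measure X) [IsProbabilityMeasure μ] (h : SatisfiesRN T φ μ)
    (f : X → ℝ≥0∞) (hf : Measurable f) : ∫⁻ x, Lop T φ f x ∂μ = ∫⁻ x, f x ∂μ := by
  obtain ⟨N, A, hm, hi, hu⟩ := exists_part T hTloc
  have hTm := hTloc.continuous.measurable
  have hw : Measurable fun x => ENNReal.ofReal (Real.exp (- φ x)) := by
    have := hφ.measurable
    fun_prop
  have key : ∀ i, ∫⁻ x, Lop T φ ((A i).indicator f) x ∂μ = ∫⁻ x in A i, f x ∂μ := by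
    intro i
    have hLm := Lop_indicator_measurable T hTloc.continuous φ hφ (hm i) (hi i) f hf
    have hTA : MeasurableSet (T '' A i) := (hm i).image_of_measurable_injOn hTm (hi i)
    have hμ : μ.restrict (T '' A i) = Measure.map T
        ((μ.withDensity fun x => ENNReal.ofReal (Real.exp (- φ x))).restrict (A i)) := by
      ext B hB
      rw [Measure.map_apply hTm hB, Measure.restrict_apply (hTm hB), Measure.restrict_apply hB,
        withDensity_apply _ ((hTm hB).inter (hm i))]
      have := h 0 1 (T ⁻¹' B ∩ A i) T ((hTm hB).inter (hm i)) hTm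
        ((hi i).mono Set.inter_subset_right) (fun x _ => rfl)
      have him : T '' (T ⁻¹' B ∩ A i) = B ∩ T '' A i := Set.image_preimage_inter T (A i) B
      rw [him] at this
      rw [this]
      simp [birkhoff]
    have hs : ∫⁻ x, Lop T φ ((A i).indicator f) x ∂μ
        = ∫⁻ x in T '' A i, Lop T φ ((A i).indicator f) x ∂μ := by
      rw [← lintegral_indicator hTA]
      refine lintegral_congr fun x => ?_
      by_cases hx : x ∈ T '' A i
      · rw [Set.indicator_of_mem hx]
      · rw [Set.indicator_of_notMem hx, Lop_indicator_zero T φ f hx]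
    rw [hs, hμ, lintegral_map hLm hTm]
    rw [show (fun a => Lop T φ ((A i).indicator f) (T a)) = Lop T φ ((A i).indicator f) ∘ T from rfl,
      setLIntegral_withDensity_eq_setLIntegral_mul μ hw (hLm.comp hTm) (hm i)]
    refine setLIntegral_congr_fun (hm i) fun y hy => ?_
    simp only [Pi.mul_apply, Function.comp]
    rw [Lop_indicator_apply T φ (hi i) f hy, ← mul_assoc, ← ENNReal.ofReal_mul (Real.exp_pos _).le,
      ← Real.exp_add]
    simp
  have hs : ∀ x, f x = ∑ i, (A i).indicator f x := by
    intro x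
    obtain ⟨i, hi, hu⟩ := hu x
    rw [Finset.sum_eq_single i]
    · simp [hi]
    · intro j _ hj
      have : (x : X) ∉ A j := fun h => hj (hu j h)
      simp [this]
    · simp
  calc ∫⁻ x, Lop T φ f x ∂μ = ∫⁻ x, ∑ i, Lop T φ ((A i).indicator f) x ∂μ :=
        lintegral_congr (Lop_sum T φ hu f)
    _ = ∑ i, ∫⁻ x, Lop T φ ((A i).indicator f) x ∂μ := lintegral_finsetSum _ fun i _ =>
        Lop_indicator_measurable T hTloc.continuous φ hφ (hm i) (hi i) f hf
    _ = ∑ i, ∫⁻ x, (A i).indicator f x ∂μ := by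
        refine Finset.sum_congr rfl fun i _ => ?_
        rw [key, lintegral_indicator (hm i)]
    _ = ∫⁻ x, ∑ i, (A i).indicator f x ∂μ :=
        (lintegral_finsetSum _ fun i _ => hf.indicator (hm i)).symm
    _ = ∫⁻ x, f x ∂μ := (lintegral_congr hs).symm

lemma P_to_rn (T : X → X) (hTloc : IsLocalHomeomorph T) (φ : X → ℝ) (hφ : Continuous φ)
    (μ : Measure X)
    (hP : ∀ f : X → ℝ≥0∞, Measurable f → ∫⁻ x, Lop T φ f x ∂μ = ∫⁻ x, f x ∂μ) :
    SatisfiesRN T φ μ := by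
  have hPn : ∀ (n : ℕ) (f : X → ℝ≥0∞), Measurable f →
      ∫⁻ x, Lop (T^[n]) (birkhoff T φ n) f x ∂μ = ∫⁻ x, f x ∂μ := by
    intro n
    induction n with
    | zero => intro f _; rw [Lop_zero]
    | succ n ih =>
      intro f hf
      rw [Lop_succ, ih _ (Lop_measurable T hTloc φ hφ f hf), hP f hf]
  have hbm : ∀ n, Measurable (birkhoff T φ n) := by
    intro n
    have : Continuous (birkhoff T φ n) := by
      unfold birkhoff
      exact continuous_finsetSum _ fun k _ => hφ.comp (hTloc.continuous.iterate k)
    exact this.measurable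
  intro m n A h hA hh hinj hT
  have hB : MeasurableSet (h '' A) := hA.image_of_measurable_injOn hh hinj
  have hgm : Measurable fun x =>
      ENNReal.ofReal (Real.exp (birkhoff T φ m (h x) - birkhoff T φ n x)) := by
    have h1 := hbm n
    have h2 := (hbm m).comp hh
    exact (Real.measurable_exp.comp (h2.sub h1)).ennreal_ofReal
  rw [← lintegral_indicator_one hB, ← lintegral_indicator hA,
    ← hPn m _ (measurable_one.indicator hB), ← hPn n _ (hgm.indicator hA)]
  refine lintegral_congr fun x => ?_
  unfold Lop
  have h1 : ∀ (S : Set X) (k : ℕ) (F : X → ℝ≥0∞),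
      ∑' y : {y // T^[k] y = x}, ENNReal.ofReal (Real.exp (birkhoff T φ k y)) * S.indicator F y
      = ∑' y : {y // y ∈ S ∧ T^[k] y = x}, ENNReal.ofReal (Real.exp (birkhoff T φ k y)) * F y := by
    intro S k F
    have e1 := tsum_subtype {y | T^[k] y = x}
      (fun y => ENNReal.ofReal (Real.exp (birkhoff T φ k y)) * S.indicator F y)
    have e2 := tsum_subtype {y | y ∈ S ∧ T^[k] y = x}
      (fun y => ENNReal.ofReal (Real.exp (birkhoff T φ k y)) * F y)
    refine e1.trans (Eq.trans ?_ e2.symm)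
    refine tsum_congr fun y => ?_
    by_cases a : y ∈ S <;> by_cases b : T^[k] y = x <;> simp [Set.indicator, a, b]
  rw [h1, h1]
  let e : {y // y ∈ A ∧ T^[n] y = x} ≃ {z // z ∈ h '' A ∧ T^[m] z = x} :=
    Equiv.ofBijective
      (fun y => ⟨h y, ⟨y, y.2.1, rfl⟩, (hT y y.2.1).trans y.2.2⟩) (by
        constructor
        · rintro ⟨a, ha, _⟩ ⟨b, hb, _⟩ hab
          exact Subtype.ext (hinj ha hb (congrArg Subtype.val hab))
        · rintro ⟨_, ⟨a, ha, rfl⟩, hz⟩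
          exact ⟨⟨a, ha, (hT a ha).symm.trans hz⟩, rfl⟩)
  rw [← e.tsum_eq]
  refine tsum_congr fun y => ?_
  rw [← ENNReal.ofReal_mul (Real.exp_pos _).le, ← Real.exp_add]
  simp only [Pi.one_apply, mul_one, add_sub_cancel]
  rfl

lemma P_to_cont (T : X → X) (hTloc : IsLocalHomeomorph T) (φ : X → ℝ) (hφ : Continuous φ)
    (μ : Measure X) [IsProbabilityMeasure μ]
    (hP : ∀ f : X → ℝ≥0∞, Measurable f → ∫⁻ x, Lop T φ f x ∂μ = ∫⁻ x, f x ∂μ)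
    (f : X → ℝ) (hf : Continuous f) : ∫ x, ruelle T φ f x ∂μ = ∫ x, f x ∂μ := by
  have hpos : ∀ f : X → ℝ, Continuous f → (∀ x, 0 ≤ f x) →
      ∫ x, ruelle T φ f x ∂μ = ∫ x, f x ∂μ := by
    intro f hf h0
    rw [integral_eq_lintegral_of_nonneg_ae (.of_forall h0) hf.aestronglyMeasurable,
      integral_eq_lintegral_of_nonneg_ae (.of_forall (ruelle_nonneg T φ f h0))
        (ruelle_integrable T hTloc φ hφ f hf h0 μ).aestronglyMeasurable]
    rw [lintegral_congr (ofReal_ruelle T hTloc φ f h0), hP _ hf.measurable.ennreal_ofReal]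
  have hp : Continuous fun x => max (f x) 0 := by fun_prop
  have hn : Continuous fun x => max (- f x) 0 := by fun_prop
  have hp0 : ∀ x, 0 ≤ max (f x) 0 := fun x => le_max_right _ _
  have hn0 : ∀ x, 0 ≤ max (- f x) 0 := fun x => le_max_right _ _
  have hd : ∀ x, f x = max (f x) 0 - max (- f x) 0 := fun x => by
    rcases le_total (f x) 0 with h | h
    · rw [max_eq_right h, max_eq_left (by linarith)]; ring
    · rw [max_eq_left h, max_eq_right (by linarith)]; ring
  have hr : ∀ x, ruelle T φ f x =
      ruelle T φ (fun x => max (f x) 0) x - ruelle T φ (fun x => max (- f x) 0) x := by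
    intro x
    unfold ruelle
    have hfin := fiber_finite T hTloc x
    rw [finsum_mem_eq_finite_toFinset_sum _ hfin, finsum_mem_eq_finite_toFinset_sum _ hfin,
      finsum_mem_eq_finite_toFinset_sum _ hfin, ← Finset.sum_sub_distrib]
    refine Finset.sum_congr rfl fun y _ => ?_
    rw [← mul_sub, ← hd]
  have hint : ∀ g : X → ℝ, Continuous g → Integrable g μ := fun g hg =>
    hg.integrable_of_hasCompactSupport (HasCompactSupport.of_compactSpace g)
  rw [integral_congr_ae (.of_forall hr), integral_sub (ruelle_integrable T hTloc φ hφ _ hp hp0 μ)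
    (ruelle_integrable T hTloc φ hφ _ hn hn0 μ), hpos _ hp hp0, hpos _ hn hn0,
    ← integral_sub (hint _ hp) (hint _ hn)]
  exact integral_congr_ae (.of_forall fun x => (hd x).symm)

lemma cont_to_P (T : X → X) (hTloc : IsLocalHomeomorph T) (φ : X → ℝ) (hφ : Continuous φ)
    (μ : Measure X) [IsProbabilityMeasure μ]
    (hC : ∀ f : X → ℝ, Continuous f → ∫ x, ruelle T φ f x ∂μ = ∫ x, f x ∂μ)
    (f : X → ℝ≥0∞) (hf : Measurable f) : ∫⁻ x, Lop T φ f x ∂μ = ∫⁻ x, f x ∂μ := by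
  let κ : X → Measure X := fun x => Measure.sum fun y : {y // T y = x} =>
    ENNReal.ofReal (Real.exp (φ y)) • Measure.dirac (y : X)
  have hκ : ∀ (g : X → ℝ≥0∞) x, ∫⁻ y, g y ∂(κ x) = Lop T φ g x := by
    intro g x
    simp only [κ, Lop, lintegral_sum_measure, lintegral_smul_measure, lintegral_dirac, smul_eq_mul]
  have hκm : Measurable κ := by
    refine Measure.measurable_of_measurable_coe _ fun s hs => ?_
    simp_rw [← lintegral_indicator_one hs, hκ]
    exact Lop_measurable T hTloc φ hφ _ (measurable_one.indicator hs)
  have hbind : ∀ g : X → ℝ≥0∞, Measurable g →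
      ∫⁻ x, g x ∂(μ.bind κ) = ∫⁻ x, Lop T φ g x ∂μ := by
    intro g hg
    rw [Measure.lintegral_bind hκm.aemeasurable hg.aemeasurable]
    simp_rw [hκ]
  have hμ : μ = μ.bind κ := by
    refine ext_of_forall_lintegral_eq_of_IsFiniteMeasure fun g => ?_
    have hgc : Continuous fun x => (g x : ℝ) := by fun_prop
    have hg0 : ∀ x, 0 ≤ (g x : ℝ) := fun x => (g x).2
    have hint : Integrable (fun x => (g x : ℝ)) μ :=
      hgc.integrable_of_hasCompactSupport (HasCompactSupport.of_compactSpace _)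
    rw [hbind _ (by fun_prop)]
    have h1 := ofReal_integral_eq_lintegral_ofReal hint (.of_forall hg0)
    have h2 := ofReal_integral_eq_lintegral_ofReal
      (ruelle_integrable T hTloc φ hφ _ hgc hg0 μ) (.of_forall (ruelle_nonneg T φ _ hg0))
    rw [hC _ hgc, h1, lintegral_congr (ofReal_ruelle T hTloc φ _ hg0)] at h2
    simpa using h2
  rw [← hbind f hf, ← hμ]

end

/-- **The Radon–Nikodym equation `D_μ = e^{c_φ}` is equivalent to the eigenvalue
equation `L_φ^t μ = μ`.** Let `T` be a surjective local homeomorphism of a compact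
metric space `X` onto itself and let `φ : X → ℝ` be continuous. A Borel probability
measure `μ` on `X` satisfies `D_μ = e^{c_φ}` if and only if
`∫ L_φ f dμ = ∫ f dμ` for every continuous `f : X → ℝ`. -/
theorem satisfiesRN_iff_ruelle_fixed
    {X : Type*} [MetricSpace X] [CompactSpace X] [MeasurableSpace X] [BorelSpace X]
    (T : X → X) (hT : Function.Surjective T) (hTloc : IsLocalHomeomorph T)
    (φ : X → ℝ) (hφ : Continuous φ)
    (μ : Measure X) (hμ : IsProbabilityMeasure μ) :
    SatisfiesRN T φ μ ↔
      ∀ f : X → ℝ, Continuous f → ∫ x, ruelle T φ f x ∂μ = ∫ x, f x ∂μ := by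
  
  constructor
  · intro h f hf
    exact P_to_cont T hTloc φ hφ μ (rn_to_P T hTloc φ hφ μ h) f hf
  · intro h
    exact P_to_rn T hTloc φ hφ μ (cont_to_P T hTloc φ hφ μ h)
end

section
/- Let T be a surjective local homeomorphism of a compact metric space X onto itself, let φ ∈ C(X,ℝ), and let μ be a Borel probability measure on X with ∫_X L_φ f dμ = ∫_X f dμ for every continuous f : X → ℝ. Then the pushforward measure T_*μ (defined by T_*μ(A) = μ(T^{-1}A)) equals the measure with density L_φ 1 with respect to μ, i.e. T_*μ(A) = ∫_A L_φ 1 dμ for every Borel set A; consequently, for every Borel set A with μ(A) = 0 one has μ(T^{-1}A) = 0 and μ(T(A)) = 0. -/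
open MeasureTheory

lemma aux_partition {X : Type*} [MetricSpace X] [CompactSpace X] [MeasurableSpace X] [BorelSpace X]
    (T : X → X) (hTloc : IsLocalHomeomorph T) :
    ∃ (n : ℕ) (B : Fin n → Set X), (∀ i, MeasurableSet (B i)) ∧ (∀ i, Set.InjOn T (B i)) ∧
      ∀ y, ∃! i, y ∈ B i := by
  classical
  have h1 : ∀ x : X, ∃ U : Set X, IsOpen U ∧ x ∈ U ∧ Set.InjOn T U := by
    intro x
    obtain ⟨e, hx, rfl⟩ := hTloc x
    exact ⟨e.source, e.open_source, hx, e.injOn⟩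
  choose U hUo hxU hUi using h1
  obtain ⟨t, ht⟩ := isCompact_univ.elim_finite_subcover U hUo
    (fun x _ => Set.mem_iUnion.2 ⟨x, hxU x⟩)
  let V : ℕ → Set X := fun k => if h : k < t.card then U (t.equivFin.symm ⟨k, h⟩) else ∅
  have hVm : ∀ k, MeasurableSet (V k) := by
    intro k
    by_cases h : k < t.card
    · simpa [V, h] using (hUo _).measurableSet
    · simp [V, h]
  have hVi : ∀ k, Set.InjOn T (V k) := by
    intro k
    by_cases h : k < t.card
    · simpa [V, h] using (hUi _)
    · simp [V, h]
  refine ⟨t.card, fun i => disjointed V i, fun i => MeasurableSet.disjointed hVm i,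
    fun i => (hVi i).mono (disjointed_subset V i), fun y => ?_⟩
  have hy : y ∈ ⋃ k, disjointed V k := by
    rw [iUnion_disjointed]
    have := ht (Set.mem_univ y)
    simp only [Set.mem_iUnion] at this ⊢
    obtain ⟨x, hx, hxy⟩ := this
    refine ⟨t.equivFin ⟨x, hx⟩, ?_⟩
    simpa [V] using hxy
  obtain ⟨k, hk⟩ := Set.mem_iUnion.1 hy
  have hkn : k < t.card := by
    by_contra h
    have := disjointed_subset V k hk
    simp [V, h] at this
  refine ⟨⟨k, hkn⟩, hk, fun j hj => ?_⟩
  by_contra hne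
  have : (j : ℕ) ≠ k := fun h => hne (Fin.ext h)
  exact Set.disjoint_left.1 (disjoint_disjointed V this) hj hk

/-- counting measure along the fibers, integrated against `μ` -/
lemma aux_measure {X : Type*} [MetricSpace X] [CompactSpace X] [MeasurableSpace X] [BorelSpace X]
    (T : X → X) (hTloc : IsLocalHomeomorph T) (μ : Measure X) [IsProbabilityMeasure μ] :
    ∃ (ν : Measure X), IsFiniteMeasure ν ∧ (∀ x, {y | T y = x}.Finite) ∧
      (∀ g : X → ENNReal, Measurable g →
        Measurable (fun x => ∑ᶠ y ∈ {y | T y = x}, g y) ∧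
        ∫⁻ x, ∑ᶠ y ∈ {y | T y = x}, g y ∂μ = ∫⁻ x, g x ∂ν) ∧
      (∀ A, MeasurableSet A → ν A = 0 → μ (T '' A) = 0) := by
  classical
  obtain ⟨n, B, hBm, hBi, hB⟩ := aux_partition T hTloc
  have hc : Continuous T := hTloc.continuous
  have hfin : ∀ x, {y | T y = x}.Finite := by
    intro x
    choose k hk _ using hB
    refine Set.Finite.of_injOn (f := k) (t := Set.univ) (fun _ _ => Set.mem_univ _) ?_ Set.finite_univ
    intro y hy z hz hyz
    refine hBi (k y) (hk y) (hyz ▸ hk z) ?_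
    rw [Set.mem_ofPred_eq] at hy hz
    rw [hy, hz]
  have hemb : ∀ i, MeasurableEmbedding ((B i).domRestrict T) := fun i =>
    hc.continuousOn.measurableEmbedding (hBm i) (hBi i)
  let m : Fin n → Measure X := fun i =>
    Measure.map (Subtype.val : B i → X) (Measure.comap ((B i).domRestrict T) μ)
  have hm : ∀ i A, MeasurableSet A → m i A = μ (T '' (A ∩ B i)) := by
    intro i A hA
    rw [Measure.map_apply measurable_subtype_coe hA, (hemb i).comap_apply]
    congr 1
    ext x
    simp only [Set.mem_image, Set.mem_preimage, Set.domRestrict_apply, Subtype.exists, Set.mem_inter_iff]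
    constructor
    · rintro ⟨a, h, h1, h2⟩; exact ⟨a, ⟨h1, h⟩, h2⟩
    · rintro ⟨a, ⟨h1, h⟩, h2⟩; exact ⟨a, h, h1, h2⟩
  have hmi : ∀ i (g : X → ENNReal), Measurable g →
      Measurable (Function.extend ((B i).domRestrict T) (fun b => g b) 0) ∧
      ∫⁻ x, Function.extend ((B i).domRestrict T) (fun b => g b) 0 x ∂μ = ∫⁻ x, g x ∂(m i) := by
    intro i g hg
    have hme : Measurable (Function.extend ((B i).domRestrict T) (fun b => g b) 0) :=
      (hemb i).measurable_extend (hg.comp measurable_subtype_coe) measurable_const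
    refine ⟨hme, ?_⟩
    rw [lintegral_map hg measurable_subtype_coe]
    have h1 : ∫⁻ b, g (b : X) ∂(Measure.comap ((B i).domRestrict T) μ) =
        ∫⁻ b, Function.extend ((B i).domRestrict T) (fun b => g b) 0 ((B i).domRestrict T b)
          ∂(Measure.comap ((B i).domRestrict T) μ) := by
      refine lintegral_congr fun b => ?_
      rw [(hemb i).injective.extend_apply]
    rw [h1, ← (hemb i).lintegral_map, (hemb i).map_comap,
      setLIntegral_eq_of_support_subset]
    intro x hx
    by_contra h
    apply hx
    rw [Function.extend_apply' _ _ _ (by simpa using h)]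
    rfl
  have hsum : ∀ (g : X → ENNReal) x, ∑ᶠ y ∈ {y | T y = x}, g y =
      ∑ i, Function.extend ((B i).domRestrict T) (fun b => g b) 0 x := by
    intro g x
    rw [finsum_mem_eq_finite_toFinset_sum _ (hfin x)]
    have h1 : ∀ i, Function.extend ((B i).domRestrict T) (fun b => g b) 0 x =
        ∑ y ∈ (hfin x).toFinset, if y ∈ B i then g y else 0 := by
      intro i
      by_cases h : ∃ b, (B i).domRestrict T b = x
      · obtain ⟨b, rfl⟩ := h
        rw [(hemb i).injective.extend_apply, Finset.sum_eq_single (b : X)]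
        · simp
        · intro y hy hyb
          rw [if_neg]
          intro hyB
          apply hyb
          exact hBi i hyB b.2 (by simpa using hy)
        · intro hb
          simp at hb
      · rw [Function.extend_apply' _ _ _ h]
        symm
        apply Finset.sum_eq_zero
        intro y hy
        rw [if_neg]
        intro hyB
        exact h ⟨⟨y, hyB⟩, by simpa using hy⟩
    simp_rw [h1]
    rw [Finset.sum_comm]
    refine Finset.sum_congr rfl fun y _ => ?_
    obtain ⟨i, hi, hu⟩ := hB y
    rw [Finset.sum_eq_single i]
    · simp [hi]
    · intro j _ hj
      rw [if_neg]
      intro h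
      exact hj (hu j h)
    · simp
  refine ⟨∑ i, m i, ?_, hfin, ?_, ?_⟩
  · constructor
    rw [Measure.finsetSum_apply]
    refine ENNReal.sum_lt_top.2 fun i _ => ?_
    rw [hm i _ MeasurableSet.univ]
    exact measure_lt_top _ _
  · intro g hg
    simp_rw [hsum]
    refine ⟨Finset.measurable_sum _ fun i _ => (hmi i g hg).1, ?_⟩
    rw [lintegral_finsetSum _ fun i _ => (hmi i g hg).1, lintegral_finsetSum_measure]
    exact Finset.sum_congr rfl fun i _ => (hmi i g hg).2
  · intro A hA h0
    rw [Measure.finsetSum_apply, Finset.sum_eq_zero_iff] at h0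
    have : T '' A ⊆ ⋃ i, T '' (A ∩ B i) := by
      rintro _ ⟨y, hy, rfl⟩
      obtain ⟨i, hi, _⟩ := hB y
      exact Set.mem_iUnion.2 ⟨i, y, ⟨hy, hi⟩, rfl⟩
    refine measure_mono_null this (measure_iUnion_null fun i => ?_)
    rw [← hm i A hA]
    exact h0 i (Finset.mem_univ _)

lemma aux_ruelle {X : Type*} (T : X → X) (hfin : ∀ x, {y | T y = x}.Finite)
    (φ f : X → ℝ) (hf : ∀ x, 0 ≤ f x) (x : X) :
    ENNReal.ofReal (ruelle T φ f x) =
      ∑ᶠ y ∈ {y | T y = x}, ENNReal.ofReal (Real.exp (φ y)) * ENNReal.ofReal (f y) := by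
  unfold ruelle
  rw [finsum_mem_eq_finite_toFinset_sum _ (hfin x), finsum_mem_eq_finite_toFinset_sum _ (hfin x),
    ENNReal.ofReal_sum_of_nonneg]
  · exact Finset.sum_congr rfl fun y _ => ENNReal.ofReal_mul (Real.exp_pos _).le
  · intro y _
    exact mul_nonneg (Real.exp_pos _).le (hf y)

/-- **Fixed points of the dual Ruelle operator push forward with density `L_φ 1`.**
Let `T` be a surjective local homeomorphism of a compact metric space `X` onto itself,
let `φ : X → ℝ` be continuous, and let `μ` be a Borel probability measure with
`∫ L_φ f dμ = ∫ f dμ` for every continuous `f`. Then `T_* μ` is the measure with density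
`L_φ 1` with respect to `μ`, i.e. `T_* μ (A) = ∫_A L_φ 1 dμ` for every Borel set `A`;
consequently, `μ(A) = 0` implies `μ(T⁻¹ A) = 0` and `μ(T(A)) = 0`. -/
theorem pushforward_of_ruelle_fixed
    {X : Type*} [MetricSpace X] [CompactSpace X] [MeasurableSpace X] [BorelSpace X]
    (T : X → X) (hT : Function.Surjective T) (hTloc : IsLocalHomeomorph T)
    (φ : X → ℝ) (hφ : Continuous φ)
    (μ : Measure X) (hμ : IsProbabilityMeasure μ)
    (hfix : ∀ f : X → ℝ, Continuous f → ∫ x, ruelle T φ f x ∂μ = ∫ x, f x ∂μ) :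
    (∀ A : Set X, MeasurableSet A →
      Measure.map T μ A = ∫⁻ x in A, ENNReal.ofReal (ruelle T φ (fun _ => 1) x) ∂μ) ∧
    (∀ A : Set X, MeasurableSet A → μ A = 0 → μ (T ⁻¹' A) = 0 ∧ μ (T '' A) = 0) := by
  obtain ⟨ν, hν, hfin, hint, himg⟩ := aux_measure T hTloc μ
  have hc : Continuous T := hTloc.continuous
  let w : X → ENNReal := fun y => ENNReal.ofReal (Real.exp (φ y))
  have hw : Measurable w := (Real.continuous_exp.comp hφ).measurable.ennreal_ofReal
  have hfinl : ∀ f : X → ℝ, Continuous f → ∫⁻ x, ENNReal.ofReal (f x) ∂ν ≠ ⊤ := by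
    intro f hf
    obtain ⟨C, hC⟩ := (isCompact_range hf).bddAbove
    refine ne_top_of_le_ne_top ?_ (lintegral_mono (g := fun _ => ENNReal.ofReal C) fun x =>
      ENNReal.ofReal_le_ofReal (hC ⟨x, rfl⟩))
    rw [lintegral_const]
    exact ENNReal.mul_ne_top ENNReal.ofReal_ne_top (measure_ne_top _ _)
  have hwf : IsFiniteMeasure (ν.withDensity w) :=
    isFiniteMeasure_withDensity (hfinl _ (Real.continuous_exp.comp hφ))
  have key : μ = ν.withDensity w := by
    apply ext_of_forall_lintegral_eq_of_IsFiniteMeasure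
    intro f
    have hfc : Continuous fun x => (f x : ℝ) := NNReal.continuous_coe.comp f.continuous
    have hf0 : ∀ x, 0 ≤ (f x : ℝ) := fun x => NNReal.coe_nonneg _
    have hfm : Measurable fun x => (f x : ENNReal) :=
      (ENNReal.continuous_coe.comp f.continuous).measurable
    have hr := aux_ruelle T hfin φ (fun x => (f x : ℝ)) hf0
    simp only [ENNReal.ofReal_coe_nnreal] at hr
    have hr0 : ∀ x, 0 ≤ ruelle T φ (fun x => (f x : ℝ)) x := fun x =>
      finsum_nonneg fun y => finsum_nonneg fun _ => mul_nonneg (Real.exp_pos _).le (hf0 y)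
    obtain ⟨hm1, hm2⟩ := hint (fun y => w y * f y) (hw.mul hfm)
    have hrm : Measurable (ruelle T φ (fun x => (f x : ℝ))) := by
      have : ruelle T φ (fun x => (f x : ℝ)) =
          fun x => (∑ᶠ y ∈ {y | T y = x}, w y * f y).toReal := by
        funext x
        rw [← hr, ENNReal.toReal_ofReal (hr0 x)]
      rw [this]
      exact hm1.ennreal_toReal
    have h := hfix _ hfc
    rw [integral_eq_lintegral_of_nonneg_ae (Filter.Eventually.of_forall hr0) hrm.aestronglyMeasurable,
      integral_eq_lintegral_of_nonneg_ae (Filter.Eventually.of_forall hf0)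
        hfc.measurable.aestronglyMeasurable] at h
    simp only [ENNReal.ofReal_coe_nnreal] at h
    simp_rw [hr] at h
    rw [lintegral_withDensity_eq_lintegral_mul _ hw hfm]
    simp only [Pi.mul_apply]
    rw [hm2, ENNReal.toReal_eq_toReal_iff' ?_ ?_] at h
    · exact h.symm
    · have := hfinl _ ((Real.continuous_exp.comp hφ).mul hfc)
      simpa [w, ENNReal.ofReal_mul (Real.exp_pos _).le] using this
    · exact (f.lintegral_lt_top_of_nnreal μ).ne
  have main : ∀ A : Set X, MeasurableSet A →
      Measure.map T μ A = ∫⁻ x in A, ENNReal.ofReal (ruelle T φ (fun _ => 1) x) ∂μ := by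
    intro A hA
    have hTA : MeasurableSet (T ⁻¹' A) := hc.measurable hA
    rw [Measure.map_apply hc.measurable hA]
    have h1 : μ (T ⁻¹' A) = ∫⁻ x, (T ⁻¹' A).indicator w x ∂ν := by
      conv_lhs => rw [key]
      rw [withDensity_apply _ hTA, lintegral_indicator hTA]
    rw [h1, ← (hint _ (hw.indicator hTA)).2, ← lintegral_indicator hA]
    refine lintegral_congr fun x => ?_
    by_cases hx : x ∈ A
    · rw [Set.indicator_of_mem hx, aux_ruelle T hfin φ _ (fun _ => zero_le_one)]
      refine finsum_mem_congr rfl fun y hy => ?_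
      have hy' : T y = x := hy
      rw [Set.indicator_of_mem (by simpa [hy'] using hx)]
      simp [w]
    · rw [Set.indicator_of_notMem hx]
      refine finsum_mem_eq_zero_of_forall_eq_zero fun y hy => ?_
      have hy' : T y = x := hy
      rw [Set.indicator_of_notMem (by simpa [hy'] using hx)]
  refine ⟨main, fun A hA h0 => ⟨?_, himg A hA ?_⟩⟩
  · rw [← Measure.map_apply hc.measurable hA, main A hA]
    exact setLIntegral_measure_zero _ _ h0
  · have : ν ≪ ν.withDensity w := withDensity_absolutelyContinuous' hw.aemeasurable
      (Filter.Eventually.of_forall fun x => by simp [w, Real.exp_pos])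
    exact this (key ▸ h0)
end

section
/- Let T be a surjective local homeomorphism of a compact metric space X onto itself and let c : R(X,T) → ℝ be a cocycle (c(x,y) + c(y,z) = c(x,z) on R(X,T)) whose restriction to each R_n = {(x,y) : T^n x = T^n y} is continuous. Then the following are equivalent: (i) there exists φ ∈ C(X,ℝ) such that c(x,y) = Σ_{k<n} (φ(T^k x) − φ(T^k y)) whenever T^n x = T^n y (i.e. c extends to the continuous cocycle c_φ on G(X,T)); (ii) there exists φ ∈ C(X,ℝ) such that c(x,y) − c(Tx,Ty) = φ(x) − φ(y) for all (x,y) ∈ R(X,T). Moreover, the same function φ can be taken in (i) and (ii). -/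
/-- **Characterization of stationary cocycles on `R(X, T)`.** Let `T` be a surjective
local homeomorphism of a compact metric space `X` onto itself and let `c` be a cocycle
on `R(X, T) = {(x, y) : ∃ n, T^n x = T^n y}` with values in `ℝ` whose restriction to each
`R_n = {(x, y) : T^n x = T^n y}` is continuous. Then the following are equivalent:
(i) there is a continuous `φ : X → ℝ` with `c(x, y) = ∑_{k < n} (φ(T^k x) - φ(T^k y))`
whenever `T^n x = T^n y`, i.e. `c` extends to the continuous cocycle `c_φ` on `G(X, T)`;
(ii) there is a continuous `φ : X → ℝ` with `c(x, y) - c(Tx, Ty) = φ(x) - φ(y)` on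
`R(X, T)`. Moreover, the same function `φ` works in (i) and (ii). -/
theorem cocycle_extends_iff
    {X : Type*} [MetricSpace X] [CompactSpace X]
    (T : X → X) (hT : Function.Surjective T) (hTloc : IsLocalHomeomorph T)
    (c : X → X → ℝ)
    (hcoc : ∀ x y z : X, (∃ n : ℕ, T^[n] x = T^[n] y) → (∃ n : ℕ, T^[n] y = T^[n] z) →
      c x y + c y z = c x z)
    (hcont : ∀ n : ℕ, ContinuousOn (fun p : X × X => c p.1 p.2)
      {p : X × X | T^[n] p.1 = T^[n] p.2}) :
    ((∃ φ : X → ℝ, Continuous φ ∧ ∀ (x y : X) (n : ℕ), T^[n] x = T^[n] y →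
        c x y = ∑ k ∈ Finset.range n, (φ (T^[k] x) - φ (T^[k] y))) ↔
      (∃ φ : X → ℝ, Continuous φ ∧ ∀ x y : X, (∃ n : ℕ, T^[n] x = T^[n] y) →
        c x y - c (T x) (T y) = φ x - φ y)) ∧
    (∀ φ : X → ℝ, Continuous φ →
      ((∀ (x y : X) (n : ℕ), T^[n] x = T^[n] y →
          c x y = ∑ k ∈ Finset.range n, (φ (T^[k] x) - φ (T^[k] y))) ↔
        (∀ x y : X, (∃ n : ℕ, T^[n] x = T^[n] y) →
          c x y - c (T x) (T y) = φ x - φ y))) := by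
  have key : ∀ φ : X → ℝ,
      ((∀ (x y : X) (n : ℕ), T^[n] x = T^[n] y →
          c x y = ∑ k ∈ Finset.range n, (φ (T^[k] x) - φ (T^[k] y))) ↔
        (∀ x y : X, (∃ n : ℕ, T^[n] x = T^[n] y) →
          c x y - c (T x) (T y) = φ x - φ y)) := by
    intro φ
    constructor
    · rintro h x y ⟨n, hn⟩
      have hs : T^[n+1] x = T^[n+1] y := by
        rw [Function.iterate_succ_apply', Function.iterate_succ_apply', hn]
      have h1 := h x y (n+1) hs
      rw [Function.iterate_succ_apply, Function.iterate_succ_apply] at hs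
      have h2 := h (T x) (T y) n hs
      rw [Finset.sum_range_succ'] at h1
      simp only [Function.iterate_succ_apply, Function.iterate_zero, id] at h1
      rw [h1, h2]
      ring
    · intro h x y n
      induction n generalizing x y with
      | zero =>
        intro hn
        have hxy : x = y := hn
        subst hxy
        have := hcoc x x x ⟨0, rfl⟩ ⟨0, rfl⟩
        simp only [Finset.range_zero, Finset.sum_empty]
        linarith
      | succ n ih =>
        intro hn
        have h1 := h x y ⟨n+1, hn⟩
        rw [Function.iterate_succ_apply, Function.iterate_succ_apply] at hn
        have h2 := ih (T x) (T y) hn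
        rw [Finset.sum_range_succ']
        simp only [Function.iterate_succ_apply, Function.iterate_zero, id]
        rw [← h2]
        linarith
  exact ⟨exists_congr fun φ => and_congr_right fun _ => key φ, fun φ _ => key φ⟩
end

section
/- Let T be a surjective local homeomorphism of a compact metric space X onto itself and let φ, ψ ∈ C(X,ℝ). Then Σ_{k<n} (φ−ψ)(T^k x) = Σ_{k<n} (φ−ψ)(T^k y) whenever T^n x = T^n y (i.e. the cocycles c_φ and c_ψ agree on R(X,T)) if and only if φ − ψ is constant on each R(X,T)-equivalence class. If moreover some R(X,T)-equivalence class is dense in X, then these conditions hold if and only if φ − ψ is a constant function. -/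
/-- **When do two potentials define the same cocycle on `R(X, T)`?** Let `T` be a
surjective local homeomorphism of a compact metric space `X` onto itself and let
`φ, ψ : X → ℝ` be continuous. The cocycles `c_φ` and `c_ψ` agree on
`R(X, T) = {(x, y) : ∃ n, T^n x = T^n y}`, i.e.
`∑_{k < n} (φ - ψ)(T^k x) = ∑_{k < n} (φ - ψ)(T^k y)` whenever `T^n x = T^n y`, if and
only if `φ - ψ` is constant on each `R(X, T)`-equivalence class. If moreover some
`R(X, T)`-class is dense in `X`, this holds if and only if `φ - ψ` is constant. -/
theorem cocycle_eq_iff_diff_invariant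
    {X : Type*} [MetricSpace X] [CompactSpace X]
    (T : X → X) (hT : Function.Surjective T) (hTloc : IsLocalHomeomorph T)
    (φ ψ : X → ℝ) (hφ : Continuous φ) (hψ : Continuous ψ) :
    ((∀ (x y : X) (n : ℕ), T^[n] x = T^[n] y →
        ∑ k ∈ Finset.range n, (φ (T^[k] x) - ψ (T^[k] x)) =
          ∑ k ∈ Finset.range n, (φ (T^[k] y) - ψ (T^[k] y))) ↔
      (∀ x y : X, (∃ n : ℕ, T^[n] x = T^[n] y) → φ x - ψ x = φ y - ψ y)) ∧
    ((∃ x₀ : X, Dense {y : X | ∃ n : ℕ, T^[n] x₀ = T^[n] y}) →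
      ((∀ (x y : X) (n : ℕ), T^[n] x = T^[n] y →
          ∑ k ∈ Finset.range n, (φ (T^[k] x) - ψ (T^[k] x)) =
            ∑ k ∈ Finset.range n, (φ (T^[k] y) - ψ (T^[k] y))) ↔
        (∃ C : ℝ, ∀ x : X, φ x - ψ x = C))) := by
  have key : (∀ (x y : X) (n : ℕ), T^[n] x = T^[n] y →
        ∑ k ∈ Finset.range n, (φ (T^[k] x) - ψ (T^[k] x)) =
          ∑ k ∈ Finset.range n, (φ (T^[k] y) - ψ (T^[k] y))) ↔
      (∀ x y : X, (∃ n : ℕ, T^[n] x = T^[n] y) → φ x - ψ x = φ y - ψ y) := by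
    constructor
    · rintro h x y ⟨n, hn⟩
      cases n with
      | zero =>
        have hxy : x = y := hn
        rw [hxy]
      | succ m =>
        have h1 := h x y (m + 1) hn
        have h2 := h (T x) (T y) m hn
        rw [Finset.sum_range_succ', Finset.sum_range_succ'] at h1
        simp only [Function.iterate_succ_apply, Function.iterate_zero, id] at h1
        linarith
    · intro h x y n hn
      refine Finset.sum_congr rfl fun k _ => h _ _ ⟨n, ?_⟩
      rw [← Function.iterate_add_apply, ← Function.iterate_add_apply, Nat.add_comm,
        Function.iterate_add_apply, Function.iterate_add_apply, hn]
  refine ⟨key, ?_⟩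
  rintro ⟨x₀, hd⟩
  rw [key]
  constructor
  · intro h
    refine ⟨φ x₀ - ψ x₀, fun x => ?_⟩
    have hext : (fun x => φ x - ψ x) = fun _ => φ x₀ - ψ x₀ :=
      Continuous.ext_on hd (hφ.sub hψ) continuous_const fun y hy => (h x₀ y hy).symm
    exact congrFun hext x
  · rintro ⟨C, hC⟩ x y _
    rw [hC, hC]
end

section
/- Let (X_1, μ_1, R_1) and (X_2, μ_2, R_2) be hyperfinite ergodic equivalence relations of type II_1, i.e.: for i = 1, 2, (X_i, B_i) is a standard Borel space with a non-atomic probability measure μ_i, R_i is a hyperfinite Borel equivalence relation with countable classes, μ_i is R_i-invariant, and R_i is ergodic. Then (X_1, μ_1, R_1) and (X_2, μ_2, R_2) are isomorphic: there exist conull Borel sets X_i' ⊆ X_i and a Borel isomorphism θ : X_1' → X_2' such that θ_*μ_1 is equivalent to μ_2 and, for x, y ∈ X_1', x R_1 y if and only if θ(x) R_2 θ(y). -/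
open MeasureTheory

/-- `μ` is quasi-invariant under the countable Borel equivalence relation `R`: every
partial Borel automorphism of `R` maps null sets to null sets. -/
def QuasiInvariantRel {X : Type*} [MeasurableSpace X] (μ : Measure X)
    (R : X → X → Prop) : Prop :=
  ∀ (g : X → X) (A : Set X), Measurable g → MeasurableSet A → Set.InjOn g A →
    (∀ x ∈ A, R x (g x)) →
    ∀ N : Set X, MeasurableSet N → μ N = 0 → μ (g '' (N ∩ A)) = 0

/-- `R` is hyperfinite: on a conull Borel set, `R` is the union of an increasing
sequence of Borel equivalence relations with finite classes. -/
def HyperfiniteRel {X : Type*} [MeasurableSpace X] (μ : Measure X)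
    (R : X → X → Prop) : Prop :=
  ∃ (X₀ : Set X) (S : ℕ → X → X → Prop),
    MeasurableSet X₀ ∧ μ X₀ᶜ = 0 ∧
    (∀ n, MeasurableSet {p : X × X | S n p.1 p.2}) ∧
    (∀ n, ∀ x ∈ X₀, S n x x) ∧
    (∀ n x y, S n x y → S n y x) ∧
    (∀ n x y z, S n x y → S n y z → S n x z) ∧
    (∀ n x y, S n x y → x ∈ X₀ ∧ y ∈ X₀) ∧
    (∀ n x, {y | S n x y}.Finite) ∧
    (∀ n x y, S n x y → S (n + 1) x y) ∧
    (∀ x ∈ X₀, ∀ y ∈ X₀, (R x y ↔ ∃ n, S n x y))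

/-- `μ` is invariant under the countable Borel equivalence relation `R`: every partial
Borel automorphism of `R` preserves the measure. -/
def InvariantRel {X : Type*} [MeasurableSpace X] (μ : Measure X)
    (R : X → X → Prop) : Prop :=
  ∀ (g : X → X) (A : Set X), Measurable g → MeasurableSet A → Set.InjOn g A →
    (∀ x ∈ A, R x (g x)) → μ (g '' A) = μ A

/-- `R` is ergodic: every Borel `R`-invariant set is null or conull. -/
def ErgodicRel {X : Type*} [MeasurableSpace X] (μ : Measure X)
    (R : X → X → Prop) : Prop :=
  ∀ E : Set X, MeasurableSet E → (∀ x ∈ E, ∀ y, R x y → y ∈ E) → μ E = 0 ∨ μ Eᶜ = 0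



namespace Dye
open Set Filter Topology

theorem analytic_approx_step {X : Type*} [MeasurableSpace X] (μ : Measure X) [IsFiniteMeasure μ]
    (f : (ℕ → ℕ) → X) (W : Set (ℕ → ℕ)) (n : ℕ) (δ : ENNReal) (hδ : 0 < δ) :
    ∃ m : ℕ, μ (f '' W) ≤ μ (f '' (W ∩ {x | x n ≤ m})) + δ := by
  have hU : f '' W = ⋃ m : ℕ, f '' (W ∩ {x | x n ≤ m}) := by
    rw [← image_iUnion, ← inter_iUnion]
    congr 1
    ext x
    simp only [mem_inter_iff, mem_iUnion, mem_ofPred_eq]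
    exact ⟨fun h => ⟨h, x n, le_rfl⟩, fun h => h.1⟩
  have hmono : Monotone (fun m : ℕ => f '' (W ∩ {x | x n ≤ m})) := by
    intro a b hab
    apply image_mono
    intro x hx
    exact ⟨hx.1, le_trans hx.2 hab⟩
  have ht := tendsto_measure_iUnion_atTop (μ := μ) hmono
  rw [← hU] at ht
  by_cases h0 : μ (f '' W) = 0
  · exact ⟨0, by rw [h0]; exact zero_le⟩
  have hlt : μ (f '' W) - δ < μ (f '' W) :=
    ENNReal.sub_lt_self (measure_ne_top _ _) h0 hδ.ne'
  obtain ⟨m, hm⟩ := ((tendsto_order.1 ht).1 _ hlt).exists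
  exact ⟨m, tsub_le_iff_right.1 hm.le⟩

theorem analytic_inner {X : Type*} [TopologicalSpace X] [PolishSpace X] [MeasurableSpace X]
    [BorelSpace X] (μ : Measure X) [IsFiniteMeasure μ]
    (f : (ℕ → ℕ) → X) (hf : Continuous f) (ε : ENNReal) (hε : ε ≠ 0) :
    ∃ K, MeasurableSet K ∧ K ⊆ range f ∧ μ (range f) ≤ μ K + ε := by
  classical
  let := TopologicalSpace.upgradeIsCompletelyMetrizable X
  obtain ⟨δ, hδ, hsum⟩ := ENNReal.exists_pos_sum_of_countable' hε ℕ
  choose m hm using fun (W : Set (ℕ → ℕ)) (n : ℕ) => analytic_approx_step μ f W n (δ n) (hδ n)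
  let W : ℕ → Set (ℕ → ℕ) := fun n => Nat.rec univ (fun n W => W ∩ {x | x n ≤ m W n}) n
  have hW : ∀ n, W (n+1) = W n ∩ {x | x n ≤ m (W n) n} := fun n => rfl
  have hanti : Antitone W := antitone_nat_of_succ_le (fun n => by rw [hW]; exact inter_subset_left)
  have hb : ∀ n, μ (range f) ≤ μ (f '' W n) + ∑ i ∈ Finset.range n, δ i := by
    intro n
    induction n with
    | zero => simp [W]
    | succ n ih =>
      refine ih.trans ?_
      rw [Finset.sum_range_succ, add_comm (∑ i ∈ Finset.range n, δ i), ← add_assoc]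
      gcongr
      exact hm (W n) n
  have hb2 : ∀ n, μ (range f) ≤ μ (closure (f '' W n)) + ε := by
    intro n
    refine (hb n).trans ?_
    gcongr
    · exact subset_closure
    · exact (ENNReal.sum_le_tsum _).trans hsum.le
  refine ⟨⋂ n, closure (f '' W n), MeasurableSet.iInter fun n => isClosed_closure.measurableSet,
    ?_, ?_⟩
  · intro y hy
    rw [mem_iInter] at hy
    have : ∀ n : ℕ, ∃ x ∈ W n, dist (f x) y < 1 / ((n:ℝ) + 1) := by
      intro n
      obtain ⟨z, hz, hd⟩ := Metric.mem_closure_iff.1 (hy n) (1 / ((n:ℝ) + 1)) (by positivity)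
      obtain ⟨x, hx, rfl⟩ := hz
      exact ⟨x, hx, by rwa [dist_comm]⟩
    choose x hx hd using this
    let M : ℕ → ℕ := fun i => max (m (W i) i) ((Finset.range (i+1)).sup (fun n => x n i))
    have hcomp : IsCompact (pi univ (fun i => Iic (M i))) :=
      isCompact_univ_pi (fun i => (Set.finite_Iic (M i)).isCompact)
    have hmem : ∀ n, x n ∈ pi univ (fun i => Iic (M i)) := by
      intro n i _
      simp only [mem_Iic, M]
      by_cases h : n ≤ i
      · exact le_max_of_le_right (Finset.le_sup (f := fun n => x n i) (by simp; omega))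
      · apply le_max_of_le_left
        have : x n ∈ W (i+1) := hanti (show i + 1 ≤ n by omega) (hx n)
        exact this.2
    obtain ⟨a, _, φ, hφ, ha⟩ := hcomp.tendsto_subseq hmem
    have h1 : Tendsto (fun k => f (x (φ k))) atTop (𝓝 (f a)) := (hf.tendsto a).comp ha
    have h2 : Tendsto (fun k => f (x k)) atTop (𝓝 y) := by
      rw [tendsto_iff_dist_tendsto_zero]
      exact squeeze_zero (fun _ => dist_nonneg) (fun n => (hd n).le)
        tendsto_one_div_add_atTop_nhds_zero_nat
    exact ⟨a, tendsto_nhds_unique h1 (h2.comp hφ.tendsto_atTop)⟩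
  · have ht := tendsto_measure_iInter_atTop (μ := μ) (s := fun n => closure (f '' W n))
      (fun n => isClosed_closure.measurableSet.nullMeasurableSet)
      (fun a b hab => closure_mono (image_mono (hanti hab))) ⟨0, measure_ne_top _ _⟩
    exact ge_of_tendsto' (ht.add_const ε) hb2

theorem analytic_nullMeas {X : Type*} [TopologicalSpace X] [PolishSpace X] [MeasurableSpace X]
    [BorelSpace X] (μ : Measure X) [IsFiniteMeasure μ] {s : Set X} (hs : AnalyticSet s) :
    NullMeasurableSet s μ := by
  rw [AnalyticSet] at hs
  rcases hs with rfl | ⟨f, hf, rfl⟩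
  · exact nullMeasurableSet_empty
  choose K hKm hKs hK using fun n : ℕ =>
    analytic_inner μ f hf (((n:ENNReal) + 1)⁻¹) (by simp)
  have h1 : μ (range f) ≤ μ (⋃ n, K n) := by
    refine ge_of_tendsto' (x := atTop) (f := fun n : ℕ => μ (⋃ n, K n) + ((n:ENNReal) + 1)⁻¹) ?_ ?_
    · have : Tendsto (fun n : ℕ => ((n:ENNReal) + 1)⁻¹) atTop (𝓝 0) := by
        have := (tendsto_add_atTop_iff_nat 1).2 ENNReal.tendsto_inv_nat_nhds_zero
        simpa using this
      simpa using this.const_add (μ (⋃ n, K n))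
    · intro n
      exact (hK n).trans (by gcongr; exact subset_iUnion K n)
  have h2 : (⋃ n, K n) ⊆ range f := iUnion_subset hKs
  have hm : MeasurableSet (⋃ n, K n) := MeasurableSet.iUnion hKm
  have h3 : (⋃ n, K n) =ᵐ[μ] range f :=
    ae_eq_of_subset_of_measure_ge h2 h1 hm.nullMeasurableSet (measure_ne_top _ _)
  exact hm.nullMeasurableSet.congr h3

theorem proj_nullMeas {X Y : Type*} [MeasurableSpace X] [StandardBorelSpace X]
    [MeasurableSpace Y] [StandardBorelSpace Y] (μ : Measure X) [IsFiniteMeasure μ]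
    {P : Set (X × Y)} (hP : MeasurableSet P) :
    NullMeasurableSet {x | ∃ y, (x, y) ∈ P} μ := by
  let := upgradeStandardBorel X
  have h : AnalyticSet (Prod.fst '' P) := hP.analyticSet_image measurable_fst
  have e : {x | ∃ y, (x, y) ∈ P} = Prod.fst '' P := by ext x; simp
  rw [e]
  exact analytic_nullMeas μ h

/-- Invariant separation. -/
theorem inv_separation {X : Type*} [MeasurableSpace X] [StandardBorelSpace X]
    (R : X → X → Prop) (hR : Equivalence R)
    (hg : MeasurableSet {p : X × X | R p.1 p.2}) (A B : Set X) (hA : MeasurableSet A)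
    (hB : MeasurableSet B) (hAB : ∀ x ∈ A, ∀ y ∈ B, ¬ R x y) :
    ∃ C, MeasurableSet C ∧ A ⊆ C ∧ Disjoint C B ∧ ∀ x ∈ C, ∀ y, R x y → y ∈ C := by
  let := upgradeStandardBorel X
  let sat : Set X → Set X := fun C => Prod.snd '' ({p : X × X | R p.1 p.2} ∩ Prod.fst ⁻¹' C)
  have sat_an : ∀ C, MeasurableSet C → AnalyticSet (sat C) := fun C hC =>
    (hg.inter (measurable_fst hC)).analyticSet_image measurable_snd
  have mem_sat : ∀ C y, y ∈ sat C ↔ ∃ x ∈ C, R x y := by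
    intro C y
    simp only [sat, mem_image, mem_inter_iff, mem_ofPred_eq, mem_preimage, Prod.exists]
    constructor
    · rintro ⟨a, b, ⟨h1, h2⟩, rfl⟩; exact ⟨a, h2, h1⟩
    · rintro ⟨x, h1, h2⟩; exact ⟨x, y, ⟨h2, h1⟩, rfl⟩
  have step : ∀ C : {C : Set X // MeasurableSet C ∧ Disjoint C (sat B)},
      ∃ C' : {C : Set X // MeasurableSet C ∧ Disjoint C (sat B)}, sat C.1 ⊆ C'.1 := by
    rintro ⟨C, hC, hd⟩
    have hd2 : Disjoint (sat C) (sat B) := by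
      rw [Set.disjoint_left]
      intro y hy hy2
      rw [mem_sat] at hy hy2
      obtain ⟨x, hx, hxy⟩ := hy
      obtain ⟨z, hz, hzy⟩ := hy2
      exact Set.disjoint_left.1 hd hx ((mem_sat _ _).2 ⟨z, hz, hR.trans hzy (hR.symm hxy)⟩)
    obtain ⟨u, h1, h2, h3⟩ := (sat_an C hC).measurablySeparable (sat_an B hB) hd2
    exact ⟨⟨u, h3, h2.symm⟩, h1⟩
  have hd0 : Disjoint (sat A) (sat B) := by
    rw [Set.disjoint_left]
    intro y hy hy2
    rw [mem_sat] at hy hy2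
    obtain ⟨x, hx, hxy⟩ := hy
    obtain ⟨z, hz, hzy⟩ := hy2
    exact hAB x hx z hz (hR.trans hxy (hR.symm hzy))
  have sub_sat : ∀ C, C ⊆ sat C := fun C x hx => (mem_sat _ _).2 ⟨x, hx, hR.refl x⟩
  choose nxt hnxt using step
  obtain ⟨u, h1, h2, h3⟩ := (sat_an A hA).measurablySeparable (sat_an B hB) hd0
  let C : ℕ → {C : Set X // MeasurableSet C ∧ Disjoint C (sat B)} :=
    fun n => Nat.rec ⟨u, h3, h2.symm⟩ (fun _ c => nxt c) n
  have hC : ∀ n, sat (C n).1 ⊆ (C (n+1)).1 := fun n => hnxt (C n)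
  refine ⟨⋃ n, (C n).1, MeasurableSet.iUnion fun n => (C n).2.1, ?_, ?_, ?_⟩
  · exact (sub_sat A).trans (h1.trans (subset_iUnion (fun n => (C n).1) 0))
  · rw [disjoint_iUnion_left]
    intro n
    exact (C n).2.2.mono_right (sub_sat B)
  · intro x hx y hxy
    rw [mem_iUnion] at hx ⊢
    obtain ⟨n, hn⟩ := hx
    exact ⟨n+1, hC n ((mem_sat _ _).2 ⟨x, hn, hxy⟩)⟩

end Dye

namespace Dye
open Set Filter Topology

theorem partial_inj {X : Type*} [MeasurableSpace X] [StandardBorelSpace X]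
    (μ : Measure X) [IsFiniteMeasure μ] (S : X → X → Prop)
    (hS : MeasurableSet {p : X × X | S p.1 p.2}) (hsymm : ∀ x y, S x y → S y x)
    (htrans : ∀ x y z, S x y → S y z → S x z) (U V : Set X) (hU : MeasurableSet U)
    (hV : MeasurableSet V) :
    ∃ (γ : X → X) (D N : Set X), Measurable γ ∧ MeasurableSet D ∧ MeasurableSet N ∧ μ N = 0 ∧
      (∀ x ∈ D, S x (γ x)) ∧ InjOn γ D ∧
      (∀ x y, x ∉ N → S x y → x ∈ U → y ∈ V → (∀ z ∈ U, S x z → z = x) →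
        (∀ z ∈ V, S x z → z = y) → x ∈ D ∧ γ x = y) := by
  classical
  let dom : Set X := {x | ∃ y, (x, y) ∈ {p : X × X | S p.1 p.2 ∧ p.1 ∈ U ∧ p.2 ∈ V}}
  let bad1 : Set X := {x | ∃ q : X × X, (x, q) ∈
    {p : X × (X × X) | S p.1 p.2.1 ∧ S p.1 p.2.2 ∧ p.2.1 ∈ V ∧ p.2.2 ∈ V ∧ p.2.1 ≠ p.2.2}}
  let bad2 : Set X := {x | ∃ y, (x, y) ∈ {p : X × X | S p.1 p.2 ∧ p.2 ∈ U ∧ p.1 ≠ p.2}}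
  have m0 : MeasurableSet {p : X × X | S p.1 p.2 ∧ p.1 ∈ U ∧ p.2 ∈ V} :=
    hS.inter ((measurable_fst hU).inter (measurable_snd hV))
  have hdom : NullMeasurableSet dom μ := proj_nullMeas μ m0
  have hbad1 : NullMeasurableSet bad1 μ := by
    apply proj_nullMeas μ
    have a1 : MeasurableSet {p : X × (X × X) | S p.1 p.2.1} :=
      hS.preimage (measurable_fst.prodMk (measurable_fst.comp measurable_snd))
    have a2 : MeasurableSet {p : X × (X × X) | S p.1 p.2.2} :=
      hS.preimage (measurable_fst.prodMk (measurable_snd.comp measurable_snd))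
    have a3 : MeasurableSet {p : X × (X × X) | p.2.1 ∈ V} :=
      hV.preimage (measurable_fst.comp measurable_snd)
    have a4 : MeasurableSet {p : X × (X × X) | p.2.2 ∈ V} :=
      hV.preimage (measurable_snd.comp measurable_snd)
    have a5 : MeasurableSet {p : X × (X × X) | p.2.1 ≠ p.2.2} :=
      (measurableSet_eq_fun (measurable_fst.comp measurable_snd)
        (measurable_snd.comp measurable_snd)).compl
    exact a1.inter (a2.inter (a3.inter (a4.inter a5)))
  have hbad2 : NullMeasurableSet bad2 μ := by
    apply proj_nullMeas μ
    exact hS.inter ((measurable_snd hU).inter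
      (measurableSet_eq_fun measurable_fst measurable_snd).compl)
  have hE : NullMeasurableSet ((dom \ bad1) \ bad2) μ := (hdom.diff hbad1).diff hbad2
  obtain ⟨D, hDs, hDm, hDae⟩ := hE.exists_measurable_subset_ae_eq
  have hnull : μ (((dom \ bad1) \ bad2) \ D) = 0 := ae_le_set.1 hDae.symm.le
  have hex : ∀ x, ∃ y, x ∈ D → S x y ∧ x ∈ U ∧ y ∈ V := by
    intro x
    by_cases hx : x ∈ D
    · obtain ⟨y, hy⟩ := (hDs hx).1.1
      exact ⟨y, fun _ => hy⟩
    · exact ⟨x, fun h => absurd h hx⟩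
  choose f hf using hex
  have huniq : ∀ x ∈ D, ∀ y y', S x y → S x y' → y ∈ V → y' ∈ V → y = y' := by
    intro x hx y y' h1 h2 h3 h4
    by_contra hne
    exact (hDs hx).1.2 ⟨(y, y'), h1, h2, h3, h4, hne⟩
  have hfm : ∀ B, MeasurableSet B → MeasurableSet (D ∩ f ⁻¹' B) := by
    intro B hB
    have e : D ∩ f ⁻¹' B = Prod.fst '' ({p : X × X | S p.1 p.2 ∧ p.1 ∈ U ∧ p.2 ∈ V} ∩
        (D ×ˢ B)) := by
      ext x
      constructor
      · rintro ⟨h1, h2⟩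
        exact ⟨(x, f x), ⟨hf x h1, h1, h2⟩, rfl⟩
      · rintro ⟨⟨a, b⟩, ⟨⟨h1, h2, h3⟩, h4, h5⟩, rfl⟩
        refine ⟨h4, ?_⟩
        have h4' : a ∈ D := h4
        have := huniq a h4' (f a) b (hf a h4').1 h1 (hf a h4').2.2 h3
        show f a ∈ B
        rw [this]; exact h5
    rw [e]
    apply (m0.inter (hDm.prod hB)).image_of_measurable_injOn measurable_fst
    rintro ⟨a, b⟩ ⟨⟨h1, h2, h3⟩, h4, h5⟩ ⟨a', b'⟩ ⟨⟨h1', h2', h3'⟩, h4', h5'⟩ (rfl : a = a')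
    rw [huniq a h4 b b' h1 h1' h3 h3']
  refine ⟨fun x => if x ∈ D then f x else x, D, toMeasurable μ (((dom \ bad1) \ bad2) \ D), ?_,
    hDm, measurableSet_toMeasurable _ _, by rw [measure_toMeasurable]; exact hnull, ?_, ?_, ?_⟩
  · intro B hB
    have : (fun x => if x ∈ D then f x else x) ⁻¹' B = (D ∩ f ⁻¹' B) ∪ (Dᶜ ∩ B) := by
      ext x
      by_cases hx : x ∈ D <;> simp [hx]
    rw [this]
    exact (hfm B hB).union (hDm.compl.inter hB)
  · intro x hx
    simp only [hx, if_true]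
    exact (hf x hx).1
  · intro x hx y hy hxy
    simp only [hx, hy, if_true] at hxy
    by_contra hne
    apply (hDs hx).2
    refine ⟨y, ?_, (hf y hy).2.1, hne⟩
    refine htrans _ _ _ (hf x hx).1 ?_
    rw [hxy]
    exact hsymm _ _ (hf y hy).1
  · intro x y hxN hxy hxU hyV h1 h2
    have hxE : x ∈ ((dom \ bad1) \ bad2) := by
      refine ⟨⟨⟨y, hxy, hxU, hyV⟩, ?_⟩, ?_⟩
      · rintro ⟨⟨a, b⟩, h3, h4, h5, h6, h7⟩
        exact h7 ((h2 a h5 h3).trans (h2 b h6 h4).symm)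
      · rintro ⟨z, h3, h4, h5⟩
        exact h5 (h1 z h4 h3).symm
    have hxD : x ∈ D := by
      by_contra h
      exact hxN (subset_toMeasurable _ _ ⟨hxE, h⟩)
    refine ⟨hxD, ?_⟩
    simp only [hxD, if_true]
    exact h2 _ (hf x hxD).2.2 (hf x hxD).1

/-- Exact hyperfinite data. -/
structure HF {X : Type*} [MeasurableSpace X] (μ : Measure X) (R : X → X → Prop)
    (S : ℕ → X → X → Prop) (γ : ℕ → X → X) (D : ℕ → Set X) : Prop where
  eqv : Equivalence R
  inv : InvariantRel μ R
  erg : ErgodicRel μ R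
  γm : ∀ l, Measurable (γ l)
  Dm : ∀ l, MeasurableSet (D l)
  γinj : ∀ l, InjOn (γ l) (D l)
  γR : ∀ l, ∀ x ∈ D l, R x (γ l x)
  γex : ∀ x y, R x y → ∃ l, x ∈ D l ∧ γ l x = y
  Sm : ∀ n, MeasurableSet {p : X × X | S n p.1 p.2}
  Seqv : ∀ n, Equivalence (S n)
  Sfin : ∀ n x, {y | S n x y}.Finite
  Smono : ∀ n x y, S n x y → S (n + 1) x y
  SR : ∀ x y, R x y ↔ ∃ n, S n x y

theorem exists_isolating (F : Set ℝ) (hF : F.Finite) (y : ℝ) :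
    ∃ a b : ℚ, y ∈ Ioo (a:ℝ) b ∧ ∀ z ∈ F, z ∈ Ioo (a:ℝ) b → z = y := by
  have hopen : IsOpen ((F \ {y})ᶜ) := (hF.subset sdiff_subset).isClosed.isOpen_compl
  have hy : y ∈ (F \ {y})ᶜ := fun h => h.2 rfl
  obtain ⟨ε, hε, hb⟩ := Metric.isOpen_iff.1 hopen y hy
  obtain ⟨a, ha1, ha2⟩ := exists_rat_btwn (show y - ε < y by linarith)
  obtain ⟨b, hb1, hb2⟩ := exists_rat_btwn (show y < y + ε by linarith)
  refine ⟨a, b, ⟨ha2, hb1⟩, ?_⟩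
  intro z hz hzI
  by_contra hne
  have : z ∈ Metric.ball y ε := by
    rw [Metric.mem_ball, Real.dist_eq, abs_lt]
    constructor <;> linarith [hzI.1, hzI.2]
  exact hb this ⟨hz, hne⟩

theorem exists_HF {X : Type*} [MeasurableSpace X] [StandardBorelSpace X]
    (μ : Measure X) [IsProbabilityMeasure μ] (R : X → X → Prop) (hR : Equivalence R)
    (hg : MeasurableSet {p : X × X | R p.1 p.2})
    (hinv : InvariantRel μ R) (herg : ErgodicRel μ R) (hhyp : HyperfiniteRel μ R) :
    ∃ (X₁ : Set X) (R' : X → X → Prop) (S : ℕ → X → X → Prop) (γ : ℕ → X → X) (D : ℕ → Set X),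
      MeasurableSet X₁ ∧ μ X₁ᶜ = 0 ∧ (∀ x ∈ X₁, ∀ y ∈ X₁, (R x y ↔ R' x y)) ∧
      HF μ R' S γ D := by
  classical
  obtain ⟨X₀, S, hX₀, hμ₀, hSm, hSr, hSs, hSt, hSX, hSf, hSmono, hSR⟩ := hhyp
  obtain ⟨e, he⟩ := exists_measurableEmbedding_real X
  let I := ℕ × (ℚ × ℚ) × (ℚ × ℚ)
  choose γ D N hγm hDm hNm hN hγS hγinj hγex using fun i : I =>
    partial_inj μ (S i.1) (hSm i.1) (hSs i.1) (hSt i.1) (e ⁻¹' Ioo (i.2.1.1:ℝ) i.2.1.2)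
      (e ⁻¹' Ioo (i.2.2.1:ℝ) i.2.2.2) (he.measurable measurableSet_Ioo)
      (he.measurable measurableSet_Ioo)
  let X₁ := X₀ \ ⋃ i, N i
  have hX₁ : MeasurableSet X₁ := hX₀.diff (MeasurableSet.iUnion hNm)
  have hμ₁ : μ X₁ᶜ = 0 := by
    have : X₁ᶜ ⊆ X₀ᶜ ∪ ⋃ i, N i := by
      intro x hx
      by_cases h : x ∈ X₀
      · right; by_contra h2; exact hx ⟨h, h2⟩
      · left; exact h
    exact measure_mono_null this (measure_union_null hμ₀ (measure_iUnion_null hN))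
  let R' : X → X → Prop := fun x y => x = y ∨ (x ∈ X₁ ∧ y ∈ X₁ ∧ R x y)
  let S' : ℕ → X → X → Prop := fun n x y => x = y ∨ (x ∈ X₁ ∧ y ∈ X₁ ∧ S n x y)
  have hR'R : ∀ x y, R' x y → R x y := by
    rintro x y (rfl | h)
    · exact hR.refl x
    · exact h.2.2
  obtain ⟨enum, henum⟩ := exists_surjective_nat (Option I)
  let γ' : Option I → X → X := fun o => o.elim id γ
  let D' : Option I → Set X := fun o => o.elim univ (fun i => (D i ∩ X₁) ∩ (γ i) ⁻¹' X₁)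
  have hγ'm : ∀ o, Measurable (γ' o) := by
    rintro (_ | i)
    · exact measurable_id
    · exact hγm i
  have hD'm : ∀ o, MeasurableSet (D' o) := by
    rintro (_ | i)
    · exact MeasurableSet.univ
    · exact ((hDm i).inter hX₁).inter (hγm i hX₁)
  refine ⟨X₁, R', S', fun l => γ' (enum l), fun l => D' (enum l), hX₁, hμ₁, ?_, ?_⟩
  · intro x hx y hy
    exact ⟨fun h => Or.inr ⟨hx, hy, h⟩, hR'R x y⟩
  constructor
  · refine ⟨fun x => Or.inl rfl, ?_, ?_⟩
    · rintro x y (rfl | ⟨h1, h2, h3⟩)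
      · exact Or.inl rfl
      · exact Or.inr ⟨h2, h1, hR.symm h3⟩
    · rintro x y z (rfl | ⟨h1, h2, h3⟩) (rfl | ⟨h4, h5, h6⟩)
      · exact Or.inl rfl
      · exact Or.inr ⟨h4, h5, h6⟩
      · exact Or.inr ⟨h1, h2, h3⟩
      · exact Or.inr ⟨h1, h5, hR.trans h3 h6⟩
  · intro g A hgm hA hi hr
    exact hinv g A hgm hA hi (fun x hx => hR'R _ _ (hr x hx))
  · intro E hE hEinv
    obtain ⟨C, hC, hAC, hCB, hCinv⟩ := inv_separation R hR hg (E ∩ X₁) (X₁ \ E)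
      (hE.inter hX₁) (hX₁.diff hE) (fun x hx y hy hxy =>
        hy.2 (hEinv x hx.1 y (Or.inr ⟨hx.2, hy.1, hxy⟩)))
    rcases herg C hC hCinv with h | h
    · left
      refine measure_mono_null (t := C ∪ X₁ᶜ) ?_ (measure_union_null h hμ₁)
      intro x hx
      by_cases h2 : x ∈ X₁
      · left; exact hAC ⟨hx, h2⟩
      · right; exact h2
    · right
      refine measure_mono_null (t := Cᶜ ∪ X₁ᶜ) ?_ (measure_union_null h hμ₁)
      intro x hx
      by_cases h2 : x ∈ X₁
      · left; exact fun h3 => Set.disjoint_left.1 hCB h3 ⟨h2, hx⟩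
      · right; exact h2
  · exact fun l => hγ'm _
  · exact fun l => hD'm _
  · intro l
    show InjOn (γ' (enum l)) (D' (enum l))
    generalize enum l = o
    rcases o with _ | i
    · exact Function.injective_id.injOn
    · exact (hγinj i).mono (fun x hx => hx.1.1)
  · intro l
    show ∀ x ∈ D' (enum l), R' x (γ' (enum l) x)
    generalize enum l = o
    rcases o with _ | i
    · intro x _; exact Or.inl rfl
    · intro x hx
      refine Or.inr ⟨hx.1.2, hx.2, ?_⟩
      exact (hSR x hx.1.2.1 _ hx.2.1).2 ⟨i.1, hγS i x hx.1.1⟩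
  · intro x y hxy
    suffices h : ∃ o, x ∈ D' o ∧ γ' o x = y by
      obtain ⟨o, ho⟩ := h
      obtain ⟨l, rfl⟩ := henum o
      exact ⟨l, ho⟩
    rcases hxy with rfl | ⟨hx, hy, hxy⟩
    · exact ⟨none, mem_univ _, rfl⟩
    · obtain ⟨n, hn⟩ := (hSR x hx.1 y hy.1).1 hxy
      have hfin : (e '' {z | S n x z}).Finite := (hSf n x).image e
      obtain ⟨a, b, hab, hab2⟩ := exists_isolating _ hfin (e x)
      obtain ⟨c, d, hcd, hcd2⟩ := exists_isolating _ hfin (e y)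
      have := hγex (n, (a, b), (c, d)) x y (fun h => hx.2 (mem_iUnion.2 ⟨_, h⟩)) hn hab hcd
        (fun z hz hxz => he.injective (hab2 _ ⟨z, hxz, rfl⟩ hz))
        (fun z hz hxz => he.injective (hcd2 _ ⟨z, hxz, rfl⟩ hz))
      refine ⟨some (n, (a, b), (c, d)), ⟨⟨this.1, hx⟩, ?_⟩, this.2⟩
      show γ _ x ∈ X₁
      rw [this.2]; exact hy
  · intro n
    have h1 : MeasurableSet {p : X × X | p.1 = p.2} :=
      measurableSet_eq_fun measurable_fst measurable_snd
    exact h1.union ((measurable_fst hX₁).inter ((measurable_snd hX₁).inter (hSm n)))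
  · intro n
    refine ⟨fun x => Or.inl rfl, ?_, ?_⟩
    · rintro x y (rfl | ⟨h1, h2, h3⟩)
      · exact Or.inl rfl
      · exact Or.inr ⟨h2, h1, hSs _ _ _ h3⟩
    · rintro x y z (rfl | ⟨h1, h2, h3⟩) (rfl | ⟨h4, h5, h6⟩)
      · exact Or.inl rfl
      · exact Or.inr ⟨h4, h5, h6⟩
      · exact Or.inr ⟨h1, h2, h3⟩
      · exact Or.inr ⟨h1, h5, hSt _ _ _ _ h3 h6⟩
  · intro n x
    refine ((hSf n x).insert x).subset ?_
    rintro y (rfl | h)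
    · exact mem_insert _ _
    · exact mem_insert_of_mem _ h.2.2
  · rintro n x y (rfl | ⟨h1, h2, h3⟩)
    · exact Or.inl rfl
    · exact Or.inr ⟨h1, h2, hSmono _ _ _ h3⟩
  · intro x y
    constructor
    · rintro (rfl | ⟨h1, h2, h3⟩)
      · exact ⟨0, Or.inl rfl⟩
      · obtain ⟨n, hn⟩ := (hSR x h1.1 y h2.1).1 h3
        exact ⟨n, Or.inr ⟨h1, h2, hn⟩⟩
    · rintro ⟨n, rfl | ⟨h1, h2, h3⟩⟩
      · exact Or.inl rfl
      · exact Or.inr ⟨h1, h2, (hSR x h1.1 y h2.1).2 ⟨n, h3⟩⟩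

end Dye

namespace Dye
open Set Filter Topology

theorem comparison {X : Type*} [MeasurableSpace X] [StandardBorelSpace X]
    {μ : Measure X} [IsProbabilityMeasure μ] {R : X → X → Prop}
    {S : ℕ → X → X → Prop} {γ : ℕ → X → X} {D : ℕ → Set X} (h : HF μ R S γ D)
    (A B : Set X) (hA : MeasurableSet A) (hB : MeasurableSet B) (hAB : μ A = μ B) :
    ∃ (g : X → X) (A' : Set X), Measurable g ∧ MeasurableSet A' ∧ A' ⊆ A ∧ μ (A \ A') = 0 ∧
      InjOn g A' ∧ MapsTo g A' B ∧ ∀ x ∈ A', R x (g x) := by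
  classical
  let pc : ℕ → Set X × Set X → Set X := fun k PQ =>
    ((A \ PQ.1) ∩ D k) ∩ (γ k) ⁻¹' (B \ PQ.2)
  let PQ : ℕ → Set X × Set X := fun n => Nat.rec (∅, ∅)
    (fun k PQ => (PQ.1 ∪ pc k PQ, PQ.2 ∪ γ k '' pc k PQ)) n
  let p : ℕ → Set X := fun k => pc k (PQ k)
  have hP : ∀ k, (PQ (k+1)).1 = (PQ k).1 ∪ p k := fun k => rfl
  have hQ : ∀ k, (PQ (k+1)).2 = (PQ k).2 ∪ γ k '' p k := fun k => rfl
  have hpinj : ∀ k, InjOn (γ k) (p k) := fun k => (h.γinj k).mono (fun x hx => hx.1.2)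
  have hpm' : ∀ k, MeasurableSet (PQ k).1 → MeasurableSet (PQ k).2 → MeasurableSet (p k) :=
    fun k h1 h2 => ((hA.diff h1).inter (h.Dm k)).inter (h.γm k (hB.diff h2))
  have hm : ∀ k, MeasurableSet (PQ k).1 ∧ MeasurableSet (PQ k).2 := by
    intro k
    induction k with
    | zero => exact ⟨MeasurableSet.empty, MeasurableSet.empty⟩
    | succ k ih =>
      rw [hP, hQ]
      have := hpm' k ih.1 ih.2
      exact ⟨ih.1.union this, ih.2.union (this.image_of_measurable_injOn (h.γm k) (hpinj k))⟩
  have hpm : ∀ k, MeasurableSet (p k) := fun k => hpm' k (hm k).1 (hm k).2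
  have hPmono : Monotone (fun k => (PQ k).1) :=
    monotone_nat_of_le_succ (fun k => by rw [hP]; exact subset_union_left)
  have hQmono : Monotone (fun k => (PQ k).2) :=
    monotone_nat_of_le_succ (fun k => by rw [hQ]; exact subset_union_left)
  have hpP : ∀ j k, j < k → p j ⊆ (PQ k).1 := fun j k hjk =>
    (subset_union_right.trans (hP j).symm.subset).trans (hPmono (Nat.succ_le_of_lt hjk))
  have hpQ : ∀ j k, j < k → γ j '' p j ⊆ (PQ k).2 := fun j k hjk =>
    (subset_union_right.trans (hQ j).symm.subset).trans (hQmono (Nat.succ_le_of_lt hjk))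
  have hdis : ∀ j k x, x ∈ p j → x ∈ p k → j = k := by
    intro j k x hj hk
    rcases lt_trichotomy j k with hl | rfl | hl
    · exact absurd (hpP j k hl hj) hk.1.1.2
    · rfl
    · exact absurd (hpP k j hl hk) hj.1.1.2
  obtain ⟨g, hgm, hg⟩ := exists_measurable_piecewise p hpm γ h.γm (by
    intro i j hij x hx
    exact absurd (hdis i j x hx.1 hx.2) hij)
  have hPsub : ∀ k, (PQ k).1 ⊆ ⋃ k, p k := by
    intro k
    induction k with
    | zero => exact empty_subset _
    | succ k ih => rw [hP]; exact union_subset ih (subset_iUnion p k)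
  have hQsub : ∀ k, (PQ k).2 ⊆ g '' ⋃ k, p k := by
    intro k
    induction k with
    | zero => exact empty_subset _
    | succ k ih =>
      rw [hQ]
      apply union_subset ih
      rintro _ ⟨x, hx, rfl⟩
      exact ⟨x, mem_iUnion.2 ⟨k, hx⟩, hg k hx⟩
  have hA'm : MeasurableSet (⋃ k, p k) := MeasurableSet.iUnion hpm
  have hA'A : (⋃ k, p k) ⊆ A := iUnion_subset (fun k x hx => hx.1.1.1)
  have hinj : InjOn g (⋃ k, p k) := by
    intro x hx y hy hxy
    obtain ⟨j, hj⟩ := mem_iUnion.1 hx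
    obtain ⟨k, hk⟩ := mem_iUnion.1 hy
    rw [hg j hj, hg k hk] at hxy
    rcases lt_trichotomy j k with hl | rfl | hl
    · exact absurd (hpQ j k hl ⟨x, hj, hxy⟩) hk.2.2
    · exact hpinj j hj hk hxy
    · exact absurd (hpQ k j hl ⟨y, hk, hxy.symm⟩) hj.2.2
  have hmaps : MapsTo g (⋃ k, p k) B := by
    intro x hx
    obtain ⟨j, hj⟩ := mem_iUnion.1 hx
    rw [hg j hj]; exact hj.2.1
  have hRg : ∀ x ∈ ⋃ k, p k, R x (g x) := by
    intro x hx
    obtain ⟨j, hj⟩ := mem_iUnion.1 hx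
    rw [hg j hj]; exact h.γR j x hj.1.2
  refine ⟨g, ⋃ k, p k, hgm, hA'm, hA'A, ?_, hinj, hmaps, hRg⟩
  set A' := ⋃ k, p k with hA'
  have hBeq : μ (A \ A') = μ (B \ g '' A') := by
    have him : MeasurableSet (g '' A') := hA'm.image_of_measurable_injOn hgm hinj
    rw [measure_sdiff hA'A hA'm.nullMeasurableSet (measure_ne_top _ _),
      measure_sdiff hmaps.image_subset him.nullMeasurableSet (measure_ne_top _ _), hAB,
      h.inv g A' hgm hA'm hinj hRg]
  have hno : ∀ x ∈ A \ A', ∀ y ∈ B \ g '' A', ¬ R x y := by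
    intro x hx y hy hxy
    obtain ⟨l, hl, rfl⟩ := h.γex x y hxy
    exact hx.2 (mem_iUnion.2 ⟨l, ⟨⟨hx.1, fun h2 => hx.2 (hPsub l h2)⟩, hl⟩,
      hy.1, fun h2 => hy.2 (hQsub l h2)⟩)
  have hE : MeasurableSet (⋃ l, γ l '' ((A \ A') ∩ D l)) :=
    MeasurableSet.iUnion fun l => ((hA.diff hA'm).inter (h.Dm l)).image_of_measurable_injOn
      (h.γm l) ((h.γinj l).mono inter_subset_right)
  have hEmem : ∀ y, y ∈ (⋃ l, γ l '' ((A \ A') ∩ D l)) ↔ ∃ x ∈ A \ A', R x y := by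
    intro y
    rw [mem_iUnion]
    constructor
    · rintro ⟨l, x, hx, rfl⟩
      exact ⟨x, hx.1, h.γR l x hx.2⟩
    · rintro ⟨x, hx, hxy⟩
      obtain ⟨l, hl, rfl⟩ := h.γex x y hxy
      exact ⟨l, x, ⟨hx, hl⟩, rfl⟩
  rcases h.erg _ hE (by
    intro x hx y hxy
    rw [hEmem] at hx ⊢
    obtain ⟨z, hz, hzx⟩ := hx
    exact ⟨z, hz, h.eqv.trans hzx hxy⟩) with h0 | h0
  · exact measure_mono_null (fun x hx => (hEmem x).2 ⟨x, hx, h.eqv.refl x⟩) h0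
  · rw [hBeq]
    refine measure_mono_null ?_ h0
    intro y hy hy2
    obtain ⟨x, hx, hxy⟩ := (hEmem y).1 hy2
    exact hno x hx y hy hxy

theorem cut_real (ν : Measure ℝ) [IsFiniteMeasure ν] [NullSingletonClass ν] (t : ENNReal)
    (ht : t ≤ ν univ) : ∃ B, MeasurableSet B ∧ ν B = t := by
  rcases eq_or_lt_of_le ht with rfl | ht
  · exact ⟨univ, MeasurableSet.univ, rfl⟩
  rcases eq_or_lt_of_le (zero_le (a := t)) with rfl | ht0
  · exact ⟨∅, MeasurableSet.empty, measure_empty⟩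
  let s : Set ℝ := {r | ν (Iic r) ≤ t}
  have hne : s.Nonempty := by
    have h1 := tendsto_measure_iInter_atTop (μ := ν) (s := fun n : ℕ => Iic (-(n:ℝ)))
      (fun n => measurableSet_Iic.nullMeasurableSet)
      (fun a b hab => Iic_subset_Iic.2 (by simpa using hab)) ⟨0, measure_ne_top _ _⟩
    have h2 : (⋂ n : ℕ, Iic (-(n:ℝ))) = ∅ := by
      rw [Set.eq_empty_iff_forall_notMem]
      intro x hx
      obtain ⟨n, hn⟩ := exists_nat_gt (-x)
      have : x ≤ -(n:ℝ) := mem_iInter.1 hx n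
      linarith
    rw [h2, measure_empty] at h1
    obtain ⟨r, hr⟩ := ((tendsto_order.1 h1).2 t ht0).exists
    exact ⟨-(r:ℝ), hr.le⟩
  have hbd : BddAbove s := by
    have h1 : Tendsto (fun r => ν (Iic r)) atTop (𝓝 (ν univ)) := tendsto_measure_Iic_atTop ν
    obtain ⟨r, hr⟩ := ((tendsto_order.1 h1).1 t ht).exists
    refine ⟨r, fun q hq => ?_⟩
    by_contra hlt
    exact absurd (hr.trans_le (measure_mono (Iic_subset_Iic.2 (not_le.1 hlt).le))) (not_lt.2 hq)
  set r := sSup s with hr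
  refine ⟨Iic r, measurableSet_Iic, le_antisymm ?_ ?_⟩
  · rw [← measure_congr (Iio_ae_eq_Iic (μ := ν) (a := r))]
    obtain ⟨u, hu1, hu2, hu3⟩ := exists_seq_strictMono_tendsto r
    have : Iio r = ⋃ n, Iic (u n) := by
      ext x
      simp only [mem_Iio, mem_iUnion, mem_Iic]
      constructor
      · intro hx
        obtain ⟨n, hn⟩ := ((tendsto_order.1 hu3).1 x hx).exists
        exact ⟨n, hn.le⟩
      · rintro ⟨n, hn⟩
        exact hn.trans_lt (hu2 n)
    rw [this]
    have hlim := tendsto_measure_iUnion_atTop (μ := ν) (s := fun n => Iic (u n))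
      (fun a b hab => Iic_subset_Iic.2 (hu1.monotone hab))
    refine le_of_tendsto' hlim (fun n => ?_)
    obtain ⟨q, hq, hq2⟩ := exists_lt_of_lt_csSup hne (hu2 n)
    exact (measure_mono (Iic_subset_Iic.2 hq2.le)).trans hq
  · obtain ⟨u, hu1, hu2, hu3⟩ := exists_seq_strictAnti_tendsto r
    have : Iic r = ⋂ n, Iic (u n) := by
      ext x
      simp only [mem_iInter, mem_Iic]
      constructor
      · intro hx n
        exact hx.trans (hu2 n).le
      · intro hx
        exact ge_of_tendsto' hu3 hx
    rw [this]
    have hlim := tendsto_measure_iInter_atTop (μ := ν) (s := fun n => Iic (u n))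
      (fun n => measurableSet_Iic.nullMeasurableSet)
      (fun a b hab => Iic_subset_Iic.2 (hu1.antitone hab)) ⟨0, measure_ne_top _ _⟩
    refine ge_of_tendsto' hlim (fun n => ?_)
    by_contra hlt
    exact absurd (le_csSup hbd (show u n ∈ s from (not_le.1 hlt).le)) (not_le.2 (hu2 n))

theorem cut {X : Type*} [MeasurableSpace X] [StandardBorelSpace X]
    (μ : Measure X) [IsFiniteMeasure μ] [NullSingletonClass μ] (A : Set X) (hA : MeasurableSet A)
    (t : ℝ) (ht0 : 0 ≤ t) (ht : t ≤ μ.real A) : ∃ B ⊆ A, MeasurableSet B ∧ μ.real B = t := by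
  obtain ⟨e, he⟩ := exists_measurableEmbedding_real X
  let ν := (μ.restrict A).map e
  have : NullSingletonClass ν := by
    constructor
    intro x
    rw [Measure.map_apply he.measurable (measurableSet_singleton x)]
    exact (Set.subsingleton_singleton.preimage he.injective).measure_zero _
  obtain ⟨B, hB, hBt⟩ := cut_real ν (ENNReal.ofReal t) (by
    rw [Measure.map_apply he.measurable MeasurableSet.univ, preimage_univ,
      Measure.restrict_apply_univ]
    exact ENNReal.ofReal_le_of_le_toReal ht)
  rw [Measure.map_apply he.measurable hB, Measure.restrict_apply (he.measurable hB)] at hBt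
  refine ⟨e ⁻¹' B ∩ A, inter_subset_right, (he.measurable hB).inter hA, ?_⟩
  rw [Measure.real, hBt, ENNReal.toReal_ofReal ht0]

theorem cut_pieces {X : Type*} [MeasurableSpace X] [StandardBorelSpace X]
    (μ : Measure X) [IsFiniteMeasure μ] [NullSingletonClass μ] (δ : ℝ) (hδ : 0 < δ) (N : ℕ) :
    ∀ (A : Set X), MeasurableSet A → N * δ ≤ μ.real A →
    ∃ B : ℕ → Set X, (∀ q, MeasurableSet (B q)) ∧ (∀ q, B q ⊆ A) ∧
      (∀ p < N, ∀ q < N, ∀ x ∈ B p, x ∈ B q → p = q) ∧ (∀ q < N, μ.real (B q) = δ) := by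
  induction N with
  | zero =>
    intro A hA _
    exact ⟨fun _ => ∅, fun _ => MeasurableSet.empty, fun _ => empty_subset _, by simp, by simp⟩
  | succ N ih =>
    intro A hA hN
    push_cast at hN
    have hN0 : (0:ℝ) ≤ N * δ := by positivity
    obtain ⟨C, hCA, hC, hCδ⟩ := cut μ A hA δ hδ.le (by linarith)
    obtain ⟨B, hB1, hB2, hB3, hB4⟩ := ih (A \ C) (hA.diff hC) (by
      rw [measureReal_sdiff hCA hC]; linarith)
    refine ⟨fun q => if q < N then B q else C, ?_, ?_, ?_, ?_⟩
    · intro q; dsimp only; split_ifs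
      · exact hB1 q
      · exact hC
    · intro q; dsimp only; split_ifs
      · exact (hB2 q).trans sdiff_subset
      · exact hCA
    · intro p hp q hq x
      dsimp only
      split_ifs with h1 h2 h2
      · exact hB3 p h1 q h2 x
      · intro h3 h4; exact absurd h4 (hB2 p h3).2
      · intro h3 h4; exact absurd h3 (hB2 q h4).2
      · intros; omega
    · intro q hq
      dsimp only
      split_ifs with h1
      · exact hB4 q h1
      · exact hCδ

/-- cutting with small remainder -/
theorem cut_rem {X : Type*} [MeasurableSpace X] [StandardBorelSpace X]
    (μ : Measure X) [IsFiniteMeasure μ] [NullSingletonClass μ] (δ : ℝ) (hδ : 0 < δ)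
    (A : Set X) (hA : MeasurableSet A) :
    ∃ (N : ℕ) (B : Fin N → Set X), (∀ q, MeasurableSet (B q)) ∧ (∀ q, B q ⊆ A) ∧
      (∀ p q x, x ∈ B p → x ∈ B q → p = q) ∧ (∀ q, μ.real (B q) = δ) ∧
      μ.real A < (N + 1) * δ := by
  obtain ⟨B, h1, h2, h3, h4⟩ := cut_pieces μ δ hδ ⌊μ.real A / δ⌋₊ A hA (by
    rw [← le_div_iff₀ hδ]; exact Nat.floor_le (by positivity))
  refine ⟨_, fun q => B q, fun q => h1 q, fun q => h2 q, fun p q x hp hq =>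
    Fin.ext (h3 p p.2 q q.2 x hp hq), fun q => h4 q q.2, ?_⟩
  rw [← div_lt_iff₀ hδ]
  exact Nat.lt_floor_add_one _

end Dye

namespace Dye
open Set Filter Topology

theorem columns {X : Type*} [MeasurableSpace X] [StandardBorelSpace X]
    {μ : Measure X} {R : X → X → Prop}
    {S : ℕ → X → X → Prop} {γ : ℕ → X → X} {D : ℕ → Set X} (h : HF μ R S γ D)
    (A : Set X) (hA : MeasurableSet A) {Λ : Type*} [Countable Λ] (P : X → Λ)
    (hP : ∀ v, MeasurableSet {x | P x = v}) (k : ℕ) :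
    ∃ T : Finset (ℕ × Λ) → Set X, (∀ t, MeasurableSet (T t)) ∧
      (∀ t, ∀ ξ ∈ t, ∀ x ∈ T t, γ ξ.1 x ∈ A ∧ R x (γ ξ.1 x) ∧ P (γ ξ.1 x) = ξ.2) ∧
      (∀ t, ∀ ξ ∈ t, ∀ x ∈ T t, ∀ t', ∀ ξ' ∈ t', ∀ x' ∈ T t', γ ξ.1 x = γ ξ'.1 x' →
        t = t' ∧ ξ = ξ' ∧ x = x') ∧
      (∀ y ∈ A, ∃ t, ∃ ξ ∈ t, ∃ x ∈ T t, γ ξ.1 x = y) ∧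
      (∀ t, ∀ ξ ∈ t, ∀ x ∈ T t, ∀ y ∈ A, S k (γ ξ.1 x) y → ∃ ξ' ∈ t, γ ξ'.1 x = y) := by
  classical
  obtain ⟨e, he⟩ := exists_measurableEmbedding_real X
  let T0 : Set X := {x | x ∈ A ∧ ∀ l, x ∈ D l → γ l x ∈ A → S k x (γ l x) → e x ≤ e (γ l x)}
  let L : ℕ → Set X := fun l => {x | (x ∈ D l ∧ γ l x ∈ A ∧ S k x (γ l x)) ∧
    ∀ l' < l, x ∈ D l' → γ l' x ≠ γ l x}
  let T : Finset (ℕ × Λ) → Set X := fun t =>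
    {x | x ∈ T0 ∧ ∀ ξ : ℕ × Λ, ξ ∈ t ↔ (x ∈ L ξ.1 ∧ P (γ ξ.1 x) = ξ.2)}
  have hSl : ∀ l, MeasurableSet {x | S k x (γ l x)} := fun l =>
    (h.Sm k).preimage (measurable_id.prodMk (h.γm l))
  have hT0m : MeasurableSet T0 := by
    have e1 : T0 = A ∩ ⋂ l, ((D l ∩ (γ l ⁻¹' A) ∩ {x | S k x (γ l x)})ᶜ ∪
        {x | e x ≤ e (γ l x)}) := by
      ext x
      simp only [T0, mem_ofPred_eq, mem_inter_iff, mem_iInter, mem_union, mem_compl_iff,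
        mem_preimage]
      refine and_congr_right fun _ => forall_congr' fun l => ?_
      tauto
    rw [e1]
    refine hA.inter (MeasurableSet.iInter fun l => MeasurableSet.union ?_ ?_)
    · exact (((h.Dm l).inter (h.γm l hA)).inter (hSl l)).compl
    · exact measurableSet_le he.measurable (he.measurable.comp (h.γm l))
  have hLm : ∀ l, MeasurableSet (L l) := by
    intro l
    have e1 : L l = (D l ∩ ((γ l ⁻¹' A) ∩ {x | S k x (γ l x)})) ∩ ⋂ l', ⋂ (_ : l' < l),
        (D l' ∩ {x | γ l' x = γ l x})ᶜ := by
      ext x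
      simp only [L, mem_ofPred_eq, mem_inter_iff, mem_iInter, mem_compl_iff, mem_preimage, not_and,
        ne_eq]
    rw [e1]
    refine ((h.Dm l).inter ((h.γm l hA).inter (hSl l))).inter
      (MeasurableSet.iInter fun l' => MeasurableSet.iInter fun _ => ?_)
    exact ((h.Dm l').inter (measurableSet_eq_fun (h.γm l') (h.γm l))).compl
  have hTm : ∀ t, MeasurableSet (T t) := by
    intro t
    have e1 : T t = T0 ∩ ⋂ ξ : ℕ × Λ, {x | ξ ∈ t ↔ x ∈ (L ξ.1 ∩ γ ξ.1 ⁻¹' {y | P y = ξ.2})} := by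
      ext x
      simp only [T, mem_ofPred_eq, mem_inter_iff, mem_iInter, mem_preimage]
    rw [e1]
    refine hT0m.inter (MeasurableSet.iInter fun ξ => ?_)
    have hm : MeasurableSet (L ξ.1 ∩ γ ξ.1 ⁻¹' {y | P y = ξ.2}) :=
      (hLm _).inter (h.γm _ (hP _))
    by_cases hξ : ξ ∈ t
    · simp only [hξ, true_iff]; exact hm
    · simp only [hξ, false_iff]; exact hm.compl
  have hT0u : ∀ x ∈ T0, ∀ y ∈ T0, S k x y → x = y := by
    intro x hx y hy hxy
    have aux : ∀ x ∈ T0, ∀ y ∈ T0, S k x y → e x ≤ e y := by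
      intro x hx y hy hxy
      obtain ⟨l, hl, rfl⟩ := h.γex x y ((h.SR x y).2 ⟨k, hxy⟩)
      exact hx.2 l hl hy.1 hxy
    exact he.injective (le_antisymm (aux x hx y hy hxy) (aux y hy x hx ((h.Seqv k).symm hxy)))
  have hT0e : ∀ y ∈ A, ∃ x ∈ T0, S k x y := by
    intro y hy
    obtain ⟨x, ⟨hxA, hyx⟩, hmin⟩ := Set.exists_min_image (A ∩ {z | S k y z}) e
      ((h.Sfin k y).subset inter_subset_right) ⟨y, hy, (h.Seqv k).refl y⟩
    refine ⟨x, ⟨hxA, ?_⟩, (h.Seqv k).symm hyx⟩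
    intro l _ h2 h3
    exact hmin _ ⟨h2, (h.Seqv k).trans hyx h3⟩
  have hTe : ∀ x ∈ T0, ∃ t, x ∈ T t := by
    intro x hx
    have hfin : {ξ : ℕ × Λ | x ∈ L ξ.1 ∧ P (γ ξ.1 x) = ξ.2}.Finite := by
      apply Set.Finite.of_finite_image (f := fun ξ => γ ξ.1 x)
      · refine (h.Sfin k x).subset ?_
        rintro _ ⟨ξ, hξ, rfl⟩
        exact hξ.1.1.2.2
      · rintro ⟨l, v⟩ ⟨h1, h2⟩ ⟨l', v'⟩ ⟨h1', h2'⟩ heq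
        dsimp only at *
        have hl : l = l' := by
          rcases lt_trichotomy l l' with hl | hl | hl
          · exact absurd heq (h1'.2 l hl h1.1.1)
          · exact hl
          · exact absurd heq.symm (h1.2 l' hl h1'.1.1)
        subst hl
        rw [← h2, ← h2']
    exact ⟨hfin.toFinset, hx, fun ξ => by simp⟩
  have hcover : ∀ x ∈ T0, ∀ y ∈ A, S k x y → ∃ l, x ∈ L l ∧ γ l x = y := by
    intro x hx y hy hxy
    have hex := h.γex x y ((h.SR x y).2 ⟨k, hxy⟩)
    obtain ⟨h1, h2⟩ := Nat.find_spec hex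
    refine ⟨Nat.find hex, ⟨⟨h1, by rw [h2]; exact hy, by rw [h2]; exact hxy⟩, ?_⟩, h2⟩
    intro l' hl' h3 h4
    exact Nat.find_min hex hl' ⟨h3, h4.trans h2⟩
  have hTu : ∀ t t' x, x ∈ T t → x ∈ T t' → t = t' := by
    intro t t' x hx hx'
    ext ξ
    rw [hx.2 ξ, hx'.2 ξ]
  refine ⟨T, hTm, ?_, ?_, ?_, ?_⟩
  · intro t ξ hξ x hx
    have := (hx.2 ξ).1 hξ
    exact ⟨this.1.1.2.1, h.γR _ _ this.1.1.1, this.2⟩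
  · intro t ξ hξ x hx t' ξ' hξ' x' hx' heq
    have h1 := (hx.2 ξ).1 hξ
    have h2 := (hx'.2 ξ').1 hξ'
    have hxx : x = x' := by
      apply hT0u x hx.1 x' hx'.1
      refine (h.Seqv k).trans h1.1.1.2.2 ?_
      rw [heq]
      exact (h.Seqv k).symm h2.1.1.2.2
    subst hxx
    refine ⟨hTu _ _ _ hx hx', ?_, rfl⟩
    have hl : ξ.1 = ξ'.1 := by
      rcases lt_trichotomy ξ.1 ξ'.1 with hl | hl | hl
      · exact absurd heq (h2.1.2 _ hl h1.1.1.1)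
      · exact hl
      · exact absurd heq.symm (h1.1.2 _ hl h2.1.1.1)
    exact Prod.ext hl (by rw [← h1.2, ← h2.2, heq])
  · intro y hy
    obtain ⟨x, hx, hxy⟩ := hT0e y hy
    obtain ⟨t, ht⟩ := hTe x hx
    obtain ⟨l, hl, rfl⟩ := hcover x hx y hy hxy
    exact ⟨t, (l, P (γ l x)), (ht.2 _).2 ⟨hl, rfl⟩, x, ht, rfl⟩
  · intro t ξ hξ x hx y hy hxy
    have h1 := (hx.2 ξ).1 hξ
    obtain ⟨l, hl, rfl⟩ := hcover x hx.1 y hy ((h.Seqv k).trans h1.1.1.2.2 hxy)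
    exact ⟨(l, P (γ l x)), (hx.2 _).2 ⟨hl, rfl⟩, rfl⟩

theorem assembly {X : Type*} [MeasurableSpace X] [StandardBorelSpace X]
    {μ : Measure X} [IsProbabilityMeasure μ] {R : X → X → Prop}
    {S : ℕ → X → X → Prop} {γ : ℕ → X → X} {D : ℕ → Set X} (h : HF μ R S γ D)
    {Q Ξ : Type*} [Fintype Q] (t : Q → Finset Ξ) (f : Q → Ξ → X → X) (C : Q → Set X)
    (A : Set X) (δ : ℝ) (hC : ∀ q, MeasurableSet (C q)) (hf : ∀ q ξ, Measurable (f q ξ))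
    (hfA : ∀ q, ∀ ξ ∈ t q, ∀ x ∈ C q, f q ξ x ∈ A ∧ R x (f q ξ x))
    (hinj : ∀ q, ∀ ξ ∈ t q, ∀ x ∈ C q, ∀ q', ∀ ξ' ∈ t q', ∀ x' ∈ C q',
      f q ξ x = f q' ξ' x' → q = q' ∧ ξ = ξ' ∧ x = x')
    (hδ : ∀ q, μ.real (C q) = δ) (M : ℕ) (hM : 0 < M) (hcard : ∑ q, (t q).card = M) :
    ∃ (A' : Set X) (g : Q → X → X) (ψ : ℕ → X → X), MeasurableSet A' ∧ μ.real A' = δ ∧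
      (∀ q, Measurable (g q)) ∧ (∀ q, InjOn (g q) A') ∧ (∀ q, MapsTo (g q) A' (C q)) ∧
      (∀ q, ∀ a ∈ A', R a (g q a)) ∧ (∀ j, Measurable (ψ j)) ∧
      (∀ j < M, ∃ q, ∃ ξ ∈ t q, ∀ x, ψ j x = f q ξ (g q x)) ∧
      (∀ q, ∀ ξ ∈ t q, ∃ j < M, ∀ x, ψ j x = f q ξ (g q x)) ∧
      (∀ j < M, ∀ a ∈ A', ψ j a ∈ A ∧ R a (ψ j a)) ∧
      (∀ i < M, ∀ j < M, ∀ a ∈ A', ∀ b ∈ A', ψ i a = ψ j b → i = j ∧ a = b) := by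
  classical
  have hQ : Nonempty Q := by
    by_contra hne
    rw [not_nonempty_iff] at hne
    simp at hcard
    omega
  obtain ⟨q0⟩ := hQ
  have hμ : ∀ q, μ (C q0) = μ (C q) := by
    intro q
    have := (hδ q0).trans (hδ q).symm
    exact (ENNReal.toReal_eq_toReal_iff' (measure_ne_top _ _) (measure_ne_top _ _)).1 this
  choose g A₁ hg hA₁ hA₁s hA₁μ hgi hgm hgR using fun q =>
    comparison h (C q0) (C q) (hC q0) (hC q) (hμ q)
  have hcard2 : Fintype.card (Σ q, {ξ // ξ ∈ t q}) = M := by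
    rw [Fintype.card_sigma]; simpa using hcard
  let E : Fin M ≃ (Σ q, {ξ // ξ ∈ t q}) := (Fintype.equivFinOfCardEq hcard2).symm
  let ψ : ℕ → X → X := fun j => if hj : j < M then
    fun x => f (E ⟨j, hj⟩).1 (E ⟨j, hj⟩).2 (g (E ⟨j, hj⟩).1 x) else id
  have hψ : ∀ (j : ℕ) (hj : j < M) x, ψ j x = f (E ⟨j, hj⟩).1 (E ⟨j, hj⟩).2 (g (E ⟨j, hj⟩).1 x) := by
    intro j hj x
    simp only [ψ, hj, dif_pos]
  have hA'sub : ∀ q, (⋂ q, A₁ q) ⊆ A₁ q := fun q => iInter_subset _ q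
  have hA'm : MeasurableSet (⋂ q, A₁ q) := MeasurableSet.iInter hA₁
  refine ⟨⋂ q, A₁ q, g, ψ, hA'm, ?_, hg, fun q => (hgi q).mono (hA'sub q),
    fun q a ha => hgm q (hA'sub q ha), fun q a ha => hgR q a (hA'sub q ha), ?_, ?_, ?_, ?_, ?_⟩
  · rw [← hδ q0, Measure.real, Measure.real]
    congr 1
    apply le_antisymm (measure_mono ((hA'sub q0).trans (hA₁s q0)))
    have h1 : C q0 ⊆ (⋂ q, A₁ q) ∪ ⋃ q, (C q0 \ A₁ q) := by
      intro x hx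
      by_cases h2 : x ∈ ⋂ q, A₁ q
      · exact Or.inl h2
      · right
        rw [mem_iInter, not_forall] at h2
        obtain ⟨q, hq⟩ := h2
        exact mem_iUnion.2 ⟨q, hx, hq⟩
    refine (measure_mono h1).trans ((measure_union_le _ _).trans ?_)
    rw [measure_iUnion_null hA₁μ, add_zero]
  · intro j
    by_cases hj : j < M
    · have : ψ j = fun x => f (E ⟨j, hj⟩).1 (E ⟨j, hj⟩).2 (g (E ⟨j, hj⟩).1 x) := funext (hψ j hj)
      rw [this]
      exact (hf _ _).comp (hg _)
    · simp only [ψ, hj, dif_neg, not_false_eq_true]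
      exact measurable_id
  · intro j hj
    exact ⟨(E ⟨j, hj⟩).1, (E ⟨j, hj⟩).2, (E ⟨j, hj⟩).2.2, hψ j hj⟩
  · intro q ξ hξ
    refine ⟨E.symm ⟨q, ξ, hξ⟩, (E.symm ⟨q, ξ, hξ⟩).2, fun x => ?_⟩
    have hE2 : E ⟨(E.symm ⟨q, ξ, hξ⟩ : Fin M), (E.symm ⟨q, ξ, hξ⟩).2⟩ = ⟨q, ξ, hξ⟩ :=
      E.apply_symm_apply _
    rw [hψ _ (E.symm ⟨q, ξ, hξ⟩).2, hE2]
  · intro j hj a ha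
    rw [hψ j hj]
    have hx := hgm (E ⟨j, hj⟩).1 (hA'sub _ ha)
    obtain ⟨h1, h2⟩ := hfA _ _ (E ⟨j, hj⟩).2.2 _ hx
    exact ⟨h1, h.eqv.trans (hgR _ a (hA'sub _ ha)) h2⟩
  · intro i hi j hj a ha b hb hab
    rw [hψ i hi, hψ j hj] at hab
    have hxa := hgm (E ⟨i, hi⟩).1 (hA'sub _ ha)
    have hxb := hgm (E ⟨j, hj⟩).1 (hA'sub _ hb)
    obtain ⟨h1, h2, h3⟩ := hinj _ _ (E ⟨i, hi⟩).2.2 _ hxa _ _ (E ⟨j, hj⟩).2.2 _ hxb hab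
    have hE : E ⟨i, hi⟩ = E ⟨j, hj⟩ := by
      generalize E ⟨i, hi⟩ = u at *
      generalize E ⟨j, hj⟩ = v at *
      obtain ⟨u1, u2, u3⟩ := u
      obtain ⟨v1, v2, v3⟩ := v
      dsimp only at h1 h2
      subst h1; subst h2
      rfl
    have hij : i = j := by simpa using E.injective hE
    subst hij
    exact ⟨rfl, hgi _ (hA'sub _ ha) (hA'sub _ hb) h3⟩

end Dye

namespace Dye
open Set Filter Topology

theorem real_image {X : Type*} [MeasurableSpace X] {μ : Measure X} {R : X → X → Prop}
    (hinv : InvariantRel μ R) (g : X → X) (A : Set X)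
    (hg : Measurable g) (hA : MeasurableSet A) (hi : InjOn g A) (hR : ∀ x ∈ A, R x (g x)) :
    μ.real (g '' A) = μ.real A := by
  rw [Measure.real, Measure.real, hinv g A hg hA hi hR]

theorem real_sigma {X : Type*} [MeasurableSpace X] [StandardBorelSpace X]
    {μ : Measure X} [IsProbabilityMeasure μ] {R : X → X → Prop} (hinv : InvariantRel μ R)
    {Q : Type*} [Fintype Q] {Ξ : Type*} (t : Q → Finset Ξ) (f : Q → Ξ → X → X) (C : Q → Set X)
    (hC : ∀ q, MeasurableSet (C q)) (hf : ∀ q ξ, Measurable (f q ξ))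
    (hfR : ∀ q, ∀ ξ ∈ t q, ∀ x ∈ C q, R x (f q ξ x))
    (hinj : ∀ q, ∀ ξ ∈ t q, ∀ x ∈ C q, ∀ q', ∀ ξ' ∈ t q', ∀ x' ∈ C q',
      f q ξ x = f q' ξ' x' → q = q' ∧ ξ = ξ' ∧ x = x') :
    MeasurableSet (⋃ q, ⋃ ξ ∈ t q, f q ξ '' C q) ∧
    μ.real (⋃ q, ⋃ ξ ∈ t q, f q ξ '' C q) = ∑ q, (t q).card * μ.real (C q) := by
  have hfi : ∀ q, ∀ ξ ∈ t q, InjOn (f q ξ) (C q) := fun q ξ hξ x hx x' hx' he =>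
    (hinj q ξ hξ x hx q ξ hξ x' hx' he).2.2
  have hm : ∀ q, ∀ ξ ∈ t q, MeasurableSet (f q ξ '' C q) := fun q ξ hξ =>
    (hC q).image_of_measurable_injOn (hf q ξ) (hfi q ξ hξ)
  have hm2 : ∀ q, MeasurableSet (⋃ ξ ∈ t q, f q ξ '' C q) := fun q =>
    Finset.measurableSet_biUnion _ (hm q)
  refine ⟨MeasurableSet.iUnion hm2, ?_⟩
  rw [measureReal_iUnion_fintype (h' := fun _ => measure_ne_top _ _)]
  · refine Finset.sum_congr rfl fun q _ => ?_
    rw [measureReal_biUnion_finset (h := fun _ _ => measure_ne_top _ _)]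
    · rw [Finset.sum_congr rfl (fun ξ hξ =>
        real_image hinv (f q ξ) (C q) (hf q ξ) (hC q) (hfi q ξ hξ) (hfR q ξ hξ))]
      simp
    · intro ξ hξ ξ' hξ' hne
      rw [Function.onFun, Set.disjoint_left]
      rintro _ ⟨x, hx, rfl⟩ ⟨x', hx', he⟩
      exact hne (hinj q ξ' hξ' x' hx' q ξ hξ x hx he).2.1.symm
    · exact hm q
  · intro q q' hne
    rw [Function.onFun, Set.disjoint_left]
    intro y hy hy'
    simp only [mem_iUnion] at hy hy'
    obtain ⟨ξ, hξ, x, hx, rfl⟩ := hy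
    obtain ⟨ξ', hξ', x', hx', he⟩ := hy'
    exact hne (hinj q' ξ' hξ' x' hx' q ξ hξ x hx he).1.symm
  · exact hm2

set_option maxHeartbeats 1000000 in
theorem refine_step {X : Type*} [MeasurableSpace X] [StandardBorelSpace X]
    {μ : Measure X} [IsProbabilityMeasure μ] [NullSingletonClass μ] {R : X → X → Prop}
    {S : ℕ → X → X → Prop} {γ : ℕ → X → X} {D : ℕ → Set X} (h : HF μ R S γ D)
    (A : Set X) (hA : MeasurableSet A) (hApos : 0 < μ.real A)
    {Λ : Type*} [Countable Λ] (P : X → Λ)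
    (hP : ∀ v, MeasurableSet {x | P x = v}) (k : ℕ) (ε : ℝ) (hε : 0 < ε) :
    ∃ (m : ℕ) (A' : Set X) (ψ : ℕ → X → X) (G : Set X), 1 ≤ m ∧ MeasurableSet A' ∧
      μ.real A' * 2 ^ m = μ.real A ∧ (∀ j, Measurable (ψ j)) ∧
      (∀ j < 2 ^ m, ∀ a ∈ A', ψ j a ∈ A ∧ R a (ψ j a)) ∧
      (∀ i < 2 ^ m, ∀ j < 2 ^ m, ∀ a ∈ A', ∀ b ∈ A', ψ i a = ψ j b → i = j ∧ a = b) ∧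
      MeasurableSet G ∧ G ⊆ A ∧ μ.real A - ε ≤ μ.real G ∧
      (∀ x ∈ G, ∀ y ∈ G, S k x y → ∃ a ∈ A', ∃ i < 2 ^ m, ∃ j < 2 ^ m, ψ i a = x ∧ ψ j a = y) ∧
      (∀ a ∈ A', ∀ b ∈ A', ∀ j < 2 ^ m, ψ j a ∈ G → ψ j b ∈ G → P (ψ j a) = P (ψ j b)) := by
  classical
  obtain ⟨T, hTm, hTA, hTinj, hTcov, hTcls⟩ := columns h A hA P hP k
  -- measure of A as a sum
  have hsig : ∀ t, MeasurableSet (⋃ ξ ∈ t, γ ξ.1 '' T t) ∧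
      μ.real (⋃ ξ ∈ t, γ ξ.1 '' T t) = t.card * μ.real (T t) := by
    intro t
    have := real_sigma h.inv (Q := Unit) (fun _ => t) (fun _ ξ => γ ξ.1) (fun _ => T t)
      (fun _ => hTm t) (fun _ ξ => h.γm ξ.1) (fun _ ξ hξ x hx => (hTA t ξ hξ x hx).2.1)
      (fun q ξ hξ x hx q' ξ' hξ' x' hx' he =>
        ⟨rfl, (hTinj t ξ hξ x hx t ξ' hξ' x' hx' he).2⟩)
    simp only [iUnion_const, Finset.univ_unique, Finset.sum_singleton] at this
    exact this
  have hAU : A = ⋃ t, ⋃ ξ ∈ t, γ ξ.1 '' T t := by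
    ext y
    simp only [mem_iUnion]
    constructor
    · intro hy
      obtain ⟨t, ξ, hξ, x, hx, rfl⟩ := hTcov y hy
      exact ⟨t, ξ, hξ, x, hx, rfl⟩
    · rintro ⟨t, ξ, hξ, x, hx, rfl⟩
      exact (hTA t ξ hξ x hx).1
  have hsum : HasSum (fun t : Finset (ℕ × Λ) => (t.card : ℝ) * μ.real (T t)) (μ.real A) := by
    have h1 : μ A = ∑' t, μ (⋃ ξ ∈ t, γ ξ.1 '' T t) := by
      conv_lhs => rw [hAU]
      apply measure_iUnion
      · intro t t' hne
        rw [Function.onFun, Set.disjoint_left]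
        intro y hy hy'
        simp only [mem_iUnion] at hy hy'
        obtain ⟨ξ, hξ, x, hx, rfl⟩ := hy
        obtain ⟨ξ', hξ', x', hx', he⟩ := hy'
        exact hne (hTinj t' ξ' hξ' x' hx' t ξ hξ x hx he).1.symm
      · exact fun t => (hsig t).1
    have h2 := ENNReal.hasSum_toReal (f := fun t => μ (⋃ ξ ∈ t, γ ξ.1 '' T t))
      (by rw [← h1]; exact measure_ne_top _ _)
    have h3 : (∑' t, (μ (⋃ ξ ∈ t, γ ξ.1 '' T t)).toReal) = μ.real A := by
      rw [Measure.real, h1, ENNReal.tsum_toReal_eq (fun _ => measure_ne_top _ _)]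
    rw [h3] at h2
    have h4 : (fun t : Finset (ℕ × Λ) => (t.card : ℝ) * μ.real (T t)) =
        fun t => (μ (⋃ ξ ∈ t, γ ξ.1 '' T t)).toReal := funext fun t => (hsig t).2.symm
    rw [h4]
    exact h2
  obtain ⟨𝒯, h𝒯⟩ := ((tendsto_order.1 hsum).1 (μ.real A - ε / 2) (by linarith)).exists
  obtain ⟨K, hK⟩ : ∃ K : ℕ, K = ∑ t ∈ 𝒯, t.card := ⟨_, rfl⟩
  have hK1 : (0:ℝ) < μ.real A * (K + 1) := mul_pos hApos (by positivity)
  obtain ⟨m0, hm0⟩ := exists_pow_lt_of_lt_one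
    (show 0 < ε / 2 / (μ.real A * (K + 1)) from div_pos (by linarith) hK1) (show (1/2 : ℝ) < 1 by norm_num)
  obtain ⟨m, hm⟩ : ∃ m, m = m0 + 1 := ⟨_, rfl⟩
  obtain ⟨δ, hδ⟩ : ∃ δ : ℝ, δ = μ.real A / 2 ^ m := ⟨_, rfl⟩
  have hδpos : 0 < δ := by rw [hδ]; exact div_pos hApos (by positivity)
  have hδA : δ * 2 ^ m = μ.real A := by rw [hδ]; field_simp
  have hKδ : K * δ ≤ ε / 2 := by
    rw [lt_div_iff₀ hK1] at hm0
    have h1 : δ ≤ (1/2)^m0 * μ.real A := by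
      rw [hδ, hm, pow_succ, one_div_pow, div_le_iff₀ (by positivity)]
      have : (0:ℝ) < 2 ^ m0 := by positivity
      field_simp
      linarith
    have h2 : (K:ℝ) * δ ≤ K * ((1/2)^m0 * μ.real A) := by gcongr
    have h3 : 0 ≤ (1/2:ℝ)^m0 * μ.real A := by positivity
    nlinarith
  choose N B hBm hBT hBd hBδ hBr using fun t => cut_rem μ δ hδpos (T t) (hTm t)
  -- left columns
  let QL := Σ t : 𝒯, Fin (N t.1)
  let CL : QL → Set X := fun q => B q.1.1 q.2
  let tL : QL → Finset (ℕ × Λ) := fun q => q.1.1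
  have hCLT : ∀ q : QL, ∀ x ∈ CL q, x ∈ T (tL q) := fun q x hx => hBT q.1.1 q.2 hx
  have hLinj : ∀ q : QL, ∀ ξ ∈ tL q, ∀ x ∈ CL q, ∀ q' : QL, ∀ ξ' ∈ tL q', ∀ x' ∈ CL q',
      γ ξ.1 x = γ ξ'.1 x' → q = q' ∧ ξ = ξ' ∧ x = x' := by
    intro q ξ hξ x hx q' ξ' hξ' x' hx' he
    obtain ⟨h1, h2, h3⟩ := hTinj _ ξ hξ x (hCLT q x hx) _ ξ' hξ' x' (hCLT q' x' hx') he
    refine ⟨?_, h2, h3⟩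
    subst h3
    obtain ⟨⟨t1, ht1⟩, q1⟩ := q
    obtain ⟨⟨t2, ht2⟩, q2⟩ := q'
    dsimp only [tL] at h1
    subst h1
    have := hBd t1 q1 q2 x hx hx'
    subst this
    rfl
  have hLsig := real_sigma h.inv tL (fun _ ξ => γ ξ.1) CL (fun q => hBm _ _)
    (fun _ ξ => h.γm ξ.1) (fun q ξ hξ x hx => (hTA _ ξ hξ x (hCLT q x hx)).2.1) hLinj
  obtain ⟨I, hI⟩ : ∃ I : ℕ, I = ∑ q : QL, (tL q).card := ⟨_, rfl⟩
  have hIsum : I = ∑ t ∈ 𝒯, N t * t.card := by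
    rw [hI, Fintype.sum_sigma, ← Finset.sum_coe_sort 𝒯 (fun t => N t * t.card)]
    refine Finset.sum_congr rfl fun t _ => ?_
    simp [tL]
  have hIlow : μ.real A - ε ≤ I * δ := by
    have h1 : ∑ t ∈ 𝒯, (t.card:ℝ) * μ.real (T t) ≤ ∑ t ∈ 𝒯, (t.card:ℝ) * ((N t + 1) * δ) :=
      Finset.sum_le_sum fun t _ => mul_le_mul_of_nonneg_left (hBr t).le (by positivity)
    have h2 : ∑ t ∈ 𝒯, (t.card:ℝ) * ((N t + 1) * δ) = I * δ + K * δ := by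
      rw [hIsum, hK]
      push_cast
      rw [Finset.sum_mul, Finset.sum_mul, ← Finset.sum_add_distrib]
      exact Finset.sum_congr rfl fun t _ => by ring
    linarith
  have hLsum : μ.real (⋃ q, ⋃ ξ ∈ tL q, γ ξ.1 '' CL q) = I * δ := by
    rw [hLsig.2, hI]
    push_cast
    rw [Finset.sum_mul]
    exact Finset.sum_congr rfl fun q _ => by rw [hBδ]
  obtain ⟨U, hU⟩ : ∃ U, U = ⋃ q, ⋃ ξ ∈ tL q, γ ξ.1 '' CL q := ⟨_, rfl⟩
  rw [← hU] at hLsum hLsig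
  have hUA : U ⊆ A := by
    intro y hy
    simp only [hU, mem_iUnion] at hy
    obtain ⟨q, ξ, hξ, x, hx, rfl⟩ := hy
    exact (hTA _ ξ hξ x (hCLT q x hx)).1
  have hLm : MeasurableSet (A \ U) := hA.diff hLsig.1
  have hLμ : μ.real (A \ U) = (2 ^ m - I) * δ := by
    rw [measureReal_sdiff hUA hLsig.1, hLsum, ← hδA]; ring
  obtain ⟨NL, BL, hBLm, hBLs, hBLd, hBLδ, hBLr⟩ := cut_rem μ δ hδpos (A \ U) hLm
  have hNL : I + NL = 2 ^ m := by
    have h1 : (NL:ℝ) * δ ≤ μ.real (A \ U) := by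
      have h2 : μ.real (⋃ q, BL q) = NL * δ := by
        rw [measureReal_iUnion_fintype (fun p q hpq => by
          rw [Function.onFun, Set.disjoint_left]
          exact fun x hx hx' => hpq (hBLd p q x hx hx')) hBLm (fun _ => measure_ne_top _ _)]
        simp [hBLδ]
      rw [← h2]
      exact measureReal_mono (iUnion_subset hBLs)
    rw [hLμ] at h1 hBLr
    have h3 := le_of_mul_le_mul_right h1 hδpos
    have h4 := lt_of_mul_lt_mul_right hBLr hδpos.le
    have h5 : I + NL ≤ 2 ^ m := by
      have : ((I + NL : ℕ):ℝ) ≤ ((2 ^ m : ℕ):ℝ) := by push_cast; linarith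
      exact_mod_cast this
    have h6 : 2 ^ m < I + NL + 1 := by
      have : ((2 ^ m : ℕ):ℝ) < ((I + NL + 1 : ℕ):ℝ) := by push_cast; linarith
      exact_mod_cast this
    omega
  obtain ⟨x0⟩ : Nonempty X := by
    by_contra hne
    rw [not_nonempty_iff] at hne
    have : A = ∅ := Set.eq_empty_of_isEmpty A
    rw [this] at hApos
    simp at hApos
  let ξ0 : ℕ × Λ := (0, P x0)
  obtain ⟨A', g, ψ, hA'm, hA'δ, hgm, hgi, hgC, hgR, hψm, hψ1, hψ2, hψA, hψinj⟩ :=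
    assembly h (Q := QL ⊕ Fin NL) (Sum.elim tL (fun _ => {ξ0}))
      (Sum.elim (fun _ ξ => γ ξ.1) (fun _ _ => id)) (Sum.elim CL BL) A δ
      (by rintro (q | q); exacts [hBm _ _, hBLm q])
      (by rintro (q | q) ξ; exacts [h.γm ξ.1, measurable_id])
      (by
        rintro (q | q) ξ hξ x hx
        · exact ⟨(hTA _ ξ hξ x (hCLT q x hx)).1, (hTA _ ξ hξ x (hCLT q x hx)).2.1⟩
        · exact ⟨(hBLs q hx).1, h.eqv.refl x⟩)
      (by
        have hcross : ∀ (q : QL), ∀ ξ ∈ tL q, ∀ x ∈ CL q, ∀ (p : Fin NL), γ ξ.1 x ∉ BL p := by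
          intro q ξ hξ x hx p hp
          refine (hBLs p hp).2 ?_
          simp only [hU, mem_iUnion]
          exact ⟨q, ξ, hξ, x, hx, rfl⟩
        rintro (q | q) ξ hξ x hx (q' | q') ξ' hξ' x' hx' he
        · obtain ⟨h1, h2⟩ := hLinj q ξ hξ x hx q' ξ' hξ' x' hx' he
          exact ⟨by rw [h1], h2⟩
        · exact absurd (show γ ξ.1 x ∈ BL q' by
            have : γ ξ.1 x = x' := he
            rw [this]; exact hx') (hcross q ξ hξ x hx q')
        · exact absurd (show γ ξ'.1 x' ∈ BL q by
            have : x = γ ξ'.1 x' := he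
            rw [← this]; exact hx) (hcross q' ξ' hξ' x' hx' q)
        · have h1 : x = x' := he
          subst h1
          have h2 := hBLd q q' x hx hx'
          subst h2
          have h3 : ξ = ξ0 := by simpa using hξ
          have h4 : ξ' = ξ0 := by simpa using hξ'
          exact ⟨rfl, h3.trans h4.symm, rfl⟩)
      (by rintro (q | q); exacts [hBδ _ _, hBLδ q])
      (2 ^ m) (by positivity)
      (by rw [Fintype.sum_sum_type]; simpa [hI] using hNL)
  let gL : QL → X → X := fun q => g (Sum.inl q)
  have hgLC : ∀ q, ∀ a ∈ A', gL q a ∈ CL q := fun q a ha => hgC (Sum.inl q) ha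
  have hgLm : ∀ q, MeasurableSet (gL q '' A') := fun q =>
    hA'm.image_of_measurable_injOn (hgm _) (hgi _)
  have hGsig := real_sigma h.inv tL (fun _ ξ => γ ξ.1) (fun q => gL q '' A') hgLm
    (fun _ ξ => h.γm ξ.1)
    (by
      rintro q ξ hξ _ ⟨a, ha, rfl⟩
      exact (hTA _ ξ hξ _ (hCLT q _ (hgLC q a ha))).2.1)
    (by
      rintro q ξ hξ _ ⟨a, ha, rfl⟩ q' ξ' hξ' _ ⟨a', ha', rfl⟩ he
      exact hLinj q ξ hξ _ (hgLC q a ha) q' ξ' hξ' _ (hgLC q' a' ha') he)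
  have hGmem : ∀ x, x ∈ (⋃ q, ⋃ ξ ∈ tL q, γ ξ.1 '' (gL q '' A')) ↔
      ∃ q, ∃ ξ ∈ tL q, ∃ a ∈ A', γ ξ.1 (gL q a) = x := by
    intro x
    simp only [mem_iUnion]
    constructor
    · rintro ⟨q, ξ, hξ, _, ⟨a, ha, rfl⟩, rfl⟩
      exact ⟨q, ξ, hξ, a, ha, rfl⟩
    · rintro ⟨q, ξ, hξ, a, ha, rfl⟩
      exact ⟨q, ξ, hξ, _, ⟨a, ha, rfl⟩, rfl⟩
  refine ⟨m, A', ψ, ⋃ q, ⋃ ξ ∈ tL q, γ ξ.1 '' (gL q '' A'), by omega, hA'm, by rw [hA'δ, hδA],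
    hψm, hψA, hψinj, hGsig.1, ?_, ?_, ?_, ?_⟩
  · intro x hx
    obtain ⟨q, ξ, hξ, a, ha, rfl⟩ := (hGmem x).1 hx
    exact (hTA _ ξ hξ _ (hCLT q _ (hgLC q a ha))).1
  · rw [hGsig.2]
    refine hIlow.trans (le_of_eq ?_)
    rw [hI]
    push_cast
    rw [Finset.sum_mul]
    refine Finset.sum_congr rfl fun q _ => ?_
    rw [real_image h.inv (gL q) A' (hgm _) hA'm (hgi _) (hgR _), hA'δ]
  · intro x hx y hy hxy
    obtain ⟨q, ξ, hξ, a, ha, rfl⟩ := (hGmem x).1 hx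
    obtain ⟨q', ξ', hξ', a', ha', rfl⟩ := (hGmem y).1 hy
    obtain ⟨ξ'', hξ'', he⟩ := hTcls _ ξ hξ _ (hCLT q _ (hgLC q a ha)) _
      (hTA _ ξ' hξ' _ (hCLT q' _ (hgLC q' a' ha'))).1 hxy
    obtain ⟨i, hi, hi2⟩ := hψ2 (Sum.inl q) ξ hξ
    obtain ⟨j, hj, hj2⟩ := hψ2 (Sum.inl q) ξ'' hξ''
    exact ⟨a, ha, i, hi, j, hj, hi2 a, (hj2 a).trans he⟩
  · have key : ∀ j < 2 ^ m, ∀ a ∈ A', ψ j a ∈ (⋃ q, ⋃ ξ ∈ tL q, γ ξ.1 '' (gL q '' A')) →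
        ∃ q, ∃ ξ ∈ tL q, ∀ b ∈ A', P (ψ j b) = ξ.2 := by
      intro j hj a ha hja
      obtain ⟨q, ξ, hξ, c, hc, he⟩ := (hGmem _).1 hja
      obtain ⟨i, hi, hi2⟩ := hψ2 (Sum.inl q) ξ hξ
      have h1 : ψ i c = ψ j a := (hi2 c).trans he
      obtain ⟨h2, h3⟩ := hψinj i hi j hj c hc a ha h1
      subst h2
      refine ⟨q, ξ, hξ, fun b hb => ?_⟩
      rw [hi2 b]
      exact (hTA _ ξ hξ _ (hCLT q _ (hgLC q b hb))).2.2
    intro a ha b hb j hj h1 h2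
    obtain ⟨q, ξ, hξ, h3⟩ := key j hj a ha h1
    rw [h3 a ha, h3 b hb]

end Dye

namespace Dye
open Set Filter Topology

structure IsStage {X : Type*} [MeasurableSpace X] (μ : Measure X) (R : X → X → Prop)
    (n : ℕ) (A : Set X) (φ : ℕ → X → X) : Prop where
  Am : MeasurableSet A
  φm : ∀ i, Measurable (φ i)
  φR : ∀ i < 2 ^ n, ∀ a ∈ A, R a (φ i a)
  φinj : ∀ i < 2 ^ n, ∀ j < 2 ^ n, ∀ a ∈ A, ∀ b ∈ A, φ i a = φ j b → i = j ∧ a = b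
  vol : μ.real A * 2 ^ n = 1

theorem IsStage.image {X : Type*} [MeasurableSpace X] [StandardBorelSpace X]
    {μ : Measure X} [IsProbabilityMeasure μ] {R : X → X → Prop} (hinv : InvariantRel μ R)
    {n : ℕ} {A : Set X} {φ : ℕ → X → X} (hs : IsStage μ R n A φ) (s : Finset ℕ)
    (hsn : ∀ i ∈ s, i < 2 ^ n) (C : Set X) (hC : MeasurableSet C) (hCA : C ⊆ A) :
    MeasurableSet (⋃ i ∈ s, φ i '' C) ∧ μ.real (⋃ i ∈ s, φ i '' C) = s.card * μ.real C := by
  have := real_sigma (μ := μ) hinv (Q := Unit) (fun _ => s) (fun _ i => φ i) (fun _ => C)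
      (fun _ => hC) (fun _ i => hs.φm i) (fun _ i hi x hx => hs.φR i (hsn i hi) x (hCA hx))
      (fun q i hi x hx q' j hj y hy he =>
        ⟨rfl, hs.φinj i (hsn i hi) j (hsn j hj) x (hCA hx) y (hCA hy) he⟩)
  simp only [iUnion_const, Finset.univ_unique, Finset.sum_singleton] at this
  exact this

theorem exists_close {X : Type*} [MeasurableSpace X] [StandardBorelSpace X]
    {μ : Measure X} [IsProbabilityMeasure μ] {R : X → X → Prop}
    {S : ℕ → X → X → Prop} {γ : ℕ → X → X} {D : ℕ → Set X} (h : HF μ R S γ D)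
    {n : ℕ} {A : Set X} {φ : ℕ → X → X} (hs : IsStage μ R n A φ) (N : ℕ) (ε : ℝ) (hε : 0 < ε) :
    ∃ (k : ℕ) (E : Set X), MeasurableSet E ∧ μ.real E ≤ ε ∧
      ∀ a ∈ A, a ∉ E → ∀ b ∈ A, ∀ i < 2 ^ n, ∀ j < 2 ^ n, S N (φ i a) (φ j b) → S k a b := by
  let E : ℕ → Set X := fun k => {a | a ∈ A ∧ ∃ i, ∃ j, ∃ l, i < 2 ^ n ∧ j < 2 ^ n ∧
    a ∈ D l ∧ γ l a ∈ A ∧ S N (φ i a) (φ j (γ l a)) ∧ ¬ S k a (γ l a)}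
  have hRN : ∀ a ∈ A, ∀ b ∈ A, ∀ i < 2 ^ n, ∀ j < 2 ^ n, S N (φ i a) (φ j b) → R a b := by
    intro a ha b hb i hi j hj hS
    exact h.eqv.trans (hs.φR i hi a ha) (h.eqv.trans ((h.SR _ _).2 ⟨N, hS⟩)
      (h.eqv.symm (hs.φR j hj b hb)))
  have hEm : ∀ k, MeasurableSet (E k) := by
    intro k
    have : E k = A ∩ ⋃ i, ⋃ j, ⋃ l, {a | (i < 2 ^ n ∧ j < 2 ^ n) ∧
        (a ∈ D l ∧ γ l a ∈ A ∧ S N (φ i a) (φ j (γ l a)) ∧ ¬ S k a (γ l a))} := by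
      ext a
      simp only [E, mem_inter_iff, mem_iUnion, mem_ofPred_eq, and_assoc]
    rw [this]
    refine hs.Am.inter (MeasurableSet.iUnion fun i => MeasurableSet.iUnion fun j =>
      MeasurableSet.iUnion fun l => ?_)
    refine (MeasurableSet.const _).inter ((h.Dm l).inter ((h.γm l hs.Am).inter
      (MeasurableSet.inter ?_ (MeasurableSet.compl ?_))))
    · exact ((hs.φm i).prodMk ((hs.φm j).comp (h.γm l))) (h.Sm N)
    · exact (measurable_id.prodMk (h.γm l)) (h.Sm k)
  have hEanti : Antitone E := by
    refine antitone_nat_of_succ_le fun k a ha => ?_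
    obtain ⟨haA, i, j, l, hi, hj, hl, hlA, hS, hnS⟩ := ha
    exact ⟨haA, i, j, l, hi, hj, hl, hlA, hS, fun h' => hnS (h.Smono _ _ _ h')⟩
  have hSmono : ∀ a b k k', k ≤ k' → S k a b → S k' a b := by
    intro a b k k' hk h0
    induction hk with
    | refl => exact h0
    | step _ ih => exact h.Smono _ _ _ ih
  have hEempty : ⋂ k, E k = ∅ := by
    rw [Set.eq_empty_iff_forall_notMem]
    intro a ha
    rw [mem_iInter] at ha
    have haA := (ha 0).1
    let F : Set X := ⋃ i ∈ Finset.range (2 ^ n), ⋃ j ∈ Finset.range (2 ^ n),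
      (A ∩ φ j ⁻¹' {y | S N (φ i a) y})
    have hF : F.Finite := by
      refine Set.Finite.biUnion (Finset.finite_toSet _) fun i hi =>
        Set.Finite.biUnion (Finset.finite_toSet _) fun j hj => ?_
      have hj' : j < 2 ^ n := by simpa using hj
      refine Set.Finite.of_finite_image ((h.Sfin N (φ i a)).subset ?_) (f := φ j) ?_
      · rintro _ ⟨b, hb, rfl⟩
        exact hb.2
      · intro b hb b' hb' he
        exact (hs.φinj j hj' j hj' b hb.1 b' hb'.1 he).2
    have hev : ∀ b ∈ F, ∀ᶠ k in atTop, S k a b := by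
      intro b hb
      simp only [F, mem_iUnion, Finset.mem_range] at hb
      obtain ⟨i, hi, j, hj, hbA, hS⟩ := hb
      obtain ⟨k, hk⟩ := (h.SR _ _).1 (hRN a haA b hbA i hi j hj hS)
      exact eventually_atTop.2 ⟨k, fun k' hk' => hSmono _ _ _ _ hk' hk⟩
    obtain ⟨k, hk⟩ := ((Filter.eventually_all_finite hF).2 hev).exists
    obtain ⟨_, i, j, l, hi, hj, hl, hlA, hS, hnS⟩ := ha k
    refine hnS (hk _ ?_)
    simp only [F, mem_iUnion, Finset.mem_range]
    exact ⟨i, hi, j, hj, hlA, hS⟩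
  have hlim := tendsto_measure_iInter_atTop (μ := μ) (fun k => (hEm k).nullMeasurableSet)
    hEanti ⟨0, measure_ne_top _ _⟩
  rw [hEempty, measure_empty] at hlim
  obtain ⟨k, hk⟩ := ((tendsto_order.1 hlim).2 (ENNReal.ofReal ε)
    (ENNReal.ofReal_pos.2 hε)).exists
  refine ⟨k, E k, hEm k, ?_, ?_⟩
  · exact ENNReal.toReal_le_of_le_ofReal hε.le hk.le
  · intro a ha hE b hb i hi j hj hS
    by_contra hnS
    obtain ⟨l, hl, rfl⟩ := h.γex a b (hRN a ha b hb i hi j hj hS)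
    exact hE ⟨ha, i, j, l, hi, hj, hl, hb, hS, hnS⟩

theorem extend {X : Type*} [MeasurableSpace X] [StandardBorelSpace X]
    {μ : Measure X} [IsProbabilityMeasure μ] [NullSingletonClass μ] {R : X → X → Prop}
    {S : ℕ → X → X → Prop} {γ : ℕ → X → X} {D : ℕ → Set X} (h : HF μ R S γ D)
    {n : ℕ} {A : Set X} {φ : ℕ → X → X} (hs : IsStage μ R n A φ) (N : ℕ)
    (B : Set X) (hB : MeasurableSet B) (ε : ℝ) (hε : 0 < ε) :
    ∃ (n' : ℕ) (A' : Set X) (φ' : ℕ → X → X) (𝒢 : Set X), n < n' ∧ IsStage μ R n' A' φ' ∧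
      (∀ p < 2 ^ n', ∀ a ∈ A', ∃ b ∈ A, φ' p a = φ (p % 2 ^ n) b) ∧
      (∀ p < 2 ^ n', ∀ q < 2 ^ n', ∀ a ∈ A', ∀ a' ∈ A', ∀ b ∈ A, ∀ k < 2 ^ n, ∀ k' < 2 ^ n,
        φ' p a = φ k b → φ' q a' = φ k' b → a = a' ∧ p / 2 ^ n = q / 2 ^ n) ∧
      MeasurableSet 𝒢 ∧ μ.real 𝒢ᶜ ≤ ε ∧
      (∀ x ∈ 𝒢, ∀ y ∈ 𝒢, S N x y → ∃ a ∈ A', ∃ p < 2 ^ n', ∃ q < 2 ^ n', φ' p a = x ∧ φ' q a = y) ∧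
      (∀ a ∈ A', ∀ b ∈ A', ∀ p < 2 ^ n', φ' p a ∈ 𝒢 → φ' p b ∈ 𝒢 → (φ' p a ∈ B ↔ φ' p b ∈ B)) := by
  classical
  have h2n : (0:ℝ) < 2 ^ n := by positivity
  have hε' : 0 < ε / 2 / 2 ^ n := by positivity
  obtain ⟨k, E, hEm, hEε, hEk⟩ := exists_close h hs N (ε / 2 / 2 ^ n) hε'
  have hApos : 0 < μ.real A := by
    by_contra hc
    have : μ.real A = 0 := le_antisymm (not_lt.1 hc) measureReal_nonneg
    have hv := hs.vol
    rw [this] at hv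
    simp at hv
  let P : X → Finset ℕ := fun a => (Finset.range (2 ^ n)).filter (fun i => φ i a ∈ B)
  have hP : ∀ v, MeasurableSet {x | P x = v} := by
    intro v
    have : {x | P x = v} = ⋂ i, {x | (i < 2 ^ n ∧ φ i x ∈ B) ↔ i ∈ v} := by
      ext x
      simp only [P, mem_ofPred_eq, mem_iInter, Finset.ext_iff, Finset.mem_filter, Finset.mem_range]
    rw [this]
    refine MeasurableSet.iInter fun i => ?_
    have hm : MeasurableSet {x | i < 2 ^ n ∧ φ i x ∈ B} :=
      (MeasurableSet.const _).inter (hs.φm i hB)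
    by_cases hi : i ∈ v
    · simpa only [hi, iff_true] using hm
    · simp only [hi, iff_false]
      exact hm.compl
  obtain ⟨m, A', ψ, G, hm, hA'm, hA'v, hψm, hψA, hψinj, hGm, hGA, hGμ, hG1, hG2⟩ :=
    refine_step h A hs.Am hApos P hP k (ε / 2 / 2 ^ n) hε'
  have hdiv : ∀ p < 2 ^ (n + m), p / 2 ^ n < 2 ^ m := by
    intro p hp
    rw [Nat.div_lt_iff_lt_mul (by positivity), ← pow_add, add_comm m n]
    exact hp
  have hmod : ∀ p, p % 2 ^ n < 2 ^ n := fun p => Nat.mod_lt _ (by positivity)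
  have hcomb : ∀ i < 2 ^ n, ∀ j < 2 ^ m, i + 2 ^ n * j < 2 ^ (n + m) ∧
      (i + 2 ^ n * j) % 2 ^ n = i ∧ (i + 2 ^ n * j) / 2 ^ n = j := by
    intro i hi j hj
    refine ⟨?_, ?_, ?_⟩
    · rw [pow_add]
      calc i + 2 ^ n * j < 2 ^ n * (j + 1) := by rw [mul_add]; omega
        _ ≤ _ := Nat.mul_le_mul_left _ hj
    · rw [Nat.add_mul_mod_self_left, Nat.mod_eq_of_lt hi]
    · rw [Nat.add_mul_div_left _ _ (by positivity), Nat.div_eq_of_lt hi, zero_add]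
  have hGE : G \ E ⊆ A := sdiff_subset.trans hGA
  have hImg := hs.image h.inv (Finset.range (2 ^ n)) (fun i hi => by simpa using hi) (G \ E)
    (hGm.diff hEm) hGE
  have hmem : ∀ x, x ∈ (⋃ i ∈ Finset.range (2 ^ n), φ i '' (G \ E)) ↔
      ∃ i < 2 ^ n, ∃ a ∈ G \ E, φ i a = x := by
    intro x
    simp only [mem_iUnion, Finset.mem_range, exists_prop]
    rfl
  refine ⟨n + m, A', fun p => φ (p % 2 ^ n) ∘ ψ (p / 2 ^ n),
    ⋃ i ∈ Finset.range (2 ^ n), φ i '' (G \ E), by omega, ⟨hA'm, ?_, ?_, ?_, ?_⟩, ?_, ?_, hImg.1,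
    ?_, ?_, ?_⟩
  · exact fun p => (hs.φm _).comp (hψm _)
  · intro p hp a ha
    have h1 := hψA _ (hdiv p hp) a ha
    exact h.eqv.trans h1.2 (hs.φR _ (hmod p) _ h1.1)
  · intro p hp q hq a ha b hb he
    obtain ⟨h1, h2⟩ := hs.φinj _ (hmod p) _ (hmod q) _ (hψA _ (hdiv p hp) a ha).1 _
      (hψA _ (hdiv q hq) b hb).1 he
    obtain ⟨h3, h4⟩ := hψinj _ (hdiv p hp) _ (hdiv q hq) a ha b hb h2
    refine ⟨?_, h4⟩
    rw [← Nat.mod_add_div p (2 ^ n), ← Nat.mod_add_div q (2 ^ n), h1, h3]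
  · rw [pow_add, mul_comm ((2:ℝ) ^ n), ← mul_assoc, hA'v, hs.vol]
  · intro p hp a ha
    exact ⟨_, (hψA _ (hdiv p hp) a ha).1, rfl⟩
  · intro p hp q hq a ha a' ha' b hb k hk k' hk' h1 h2
    have h3 := (hs.φinj _ (hmod p) _ hk _ (hψA _ (hdiv p hp) a ha).1 _ hb h1).2
    have h4 := (hs.φinj _ (hmod q) _ hk' _ (hψA _ (hdiv q hq) a' ha').1 _ hb h2).2
    exact (hψinj _ (hdiv p hp) _ (hdiv q hq) a ha a' ha' (h3.trans h4.symm)).symm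
  · rw [probReal_compl_eq_one_sub hImg.1, hImg.2]
    have h1 : μ.real G - μ.real E ≤ μ.real (G \ E) := by
      have := measureReal_mono (μ := μ) (show G ⊆ (G \ E) ∪ E by intro x hx; by_cases x ∈ E <;> simp_all)
      have h3 := measureReal_union_le (μ := μ) (G \ E) E
      linarith
    have h2 : μ.real A - ε / 2 / 2 ^ n - ε / 2 / 2 ^ n ≤ μ.real (G \ E) := by linarith
    have h3 := mul_le_mul_of_nonneg_right h2 h2n.le
    have h4 : ε / 2 / 2 ^ n * 2 ^ n = ε / 2 := by field_simp
    have h5 := hs.vol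
    simp only [Finset.card_range]
    push_cast
    nlinarith
  · intro x hx y hy hxy
    obtain ⟨i, hi, a, ha, rfl⟩ := (hmem x).1 hx
    obtain ⟨j, hj, b, hb, rfl⟩ := (hmem y).1 hy
    have hk := hEk a (hGE ha) ha.2 b (hGE hb) i hi j hj hxy
    obtain ⟨c, hc, i', hi', j', hj', h1, h2⟩ := hG1 a ha.1 b hb.1 hk
    obtain ⟨p1, p2, p3⟩ := hcomb i hi i' hi'
    obtain ⟨q1, q2, q3⟩ := hcomb j hj j' hj'
    refine ⟨c, hc, _, p1, _, q1, ?_, ?_⟩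
    · simp only [Function.comp_apply, p2, p3, h1]
    · simp only [Function.comp_apply, q2, q3, h2]
  · intro a ha b hb p hp hpa hpb
    have key : ∀ a ∈ A', φ (p % 2 ^ n) (ψ (p / 2 ^ n) a) ∈
        (⋃ i ∈ Finset.range (2 ^ n), φ i '' (G \ E)) → ψ (p / 2 ^ n) a ∈ G := by
      intro a ha hpa
      obtain ⟨i, hi, c, hc, he⟩ := (hmem _).1 hpa
      obtain ⟨-, h2⟩ := hs.φinj _ hi _ (hmod p) _ (hGE hc) _ (hψA _ (hdiv p hp) a ha).1 he
      rw [← h2]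
      exact hc.1
    have hPe := hG2 a ha b hb _ (hdiv p hp) (key a ha hpa) (key b hb hpb)
    have := Finset.ext_iff.1 hPe (p % 2 ^ n)
    simpa [P, hmod p] using this

end Dye

namespace Dye
open Set Filter Topology

structure Tower {X : Type*} [MeasurableSpace X] (μ : Measure X) (R : X → X → Prop)
    (S : ℕ → X → X → Prop) (B : ℕ → Set X) (n : ℕ → ℕ) (A : ℕ → Set X) (φ : ℕ → ℕ → X → X)
    (𝒢 : ℕ → Set X) : Prop where
  st : ∀ N, IsStage μ R (n N) (A N) (φ N)
  lt : ∀ N, n N < n (N + 1)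
  ext1 : ∀ N, ∀ p < 2 ^ n (N + 1), ∀ a ∈ A (N + 1), ∃ b ∈ A N,
    φ (N + 1) p a = φ N (p % 2 ^ n N) b
  ext2 : ∀ N, ∀ p < 2 ^ n (N + 1), ∀ q < 2 ^ n (N + 1), ∀ a ∈ A (N + 1), ∀ a' ∈ A (N + 1),
    ∀ b ∈ A N, ∀ k < 2 ^ n N, ∀ k' < 2 ^ n N,
    φ (N + 1) p a = φ N k b → φ (N + 1) q a' = φ N k' b → a = a' ∧ p / 2 ^ n N = q / 2 ^ n N
  Gm : ∀ N, MeasurableSet (𝒢 N)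
  Gμ : ∀ N, μ.real (𝒢 N)ᶜ ≤ (1 / 2) ^ N
  g1 : ∀ N, ∀ x ∈ 𝒢 N, ∀ y ∈ 𝒢 N, S N x y → ∃ a ∈ A (N + 1), ∃ p < 2 ^ n (N + 1),
    ∃ q < 2 ^ n (N + 1), φ (N + 1) p a = x ∧ φ (N + 1) q a = y
  g2 : ∀ N, ∀ a ∈ A (N + 1), ∀ b ∈ A (N + 1), ∀ p < 2 ^ n (N + 1),
    φ (N + 1) p a ∈ 𝒢 N → φ (N + 1) p b ∈ 𝒢 N →
    (φ (N + 1) p a ∈ B N ↔ φ (N + 1) p b ∈ B N)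

theorem exists_tower {X : Type*} [MeasurableSpace X] [StandardBorelSpace X]
    {μ : Measure X} [IsProbabilityMeasure μ] [NullSingletonClass μ] {R : X → X → Prop}
    {S : ℕ → X → X → Prop} {γ : ℕ → X → X} {D : ℕ → Set X} (h : HF μ R S γ D)
    (B : ℕ → Set X) (hB : ∀ N, MeasurableSet (B N)) :
    ∃ n A φ 𝒢, Tower μ R S B n A φ 𝒢 := by
  let St := {s : ℕ × Set X × (ℕ → X → X) // IsStage μ R s.1 s.2.1 s.2.2}
  have hstep : ∀ (N : ℕ) (s : St), ∃ (s' : St) (𝒢 : Set X), s.1.1 < s'.1.1 ∧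
      (∀ p < 2 ^ s'.1.1, ∀ a ∈ s'.1.2.1, ∃ b ∈ s.1.2.1,
        s'.1.2.2 p a = s.1.2.2 (p % 2 ^ s.1.1) b) ∧
      (∀ p < 2 ^ s'.1.1, ∀ q < 2 ^ s'.1.1, ∀ a ∈ s'.1.2.1, ∀ a' ∈ s'.1.2.1, ∀ b ∈ s.1.2.1,
        ∀ k < 2 ^ s.1.1, ∀ k' < 2 ^ s.1.1,
        s'.1.2.2 p a = s.1.2.2 k b → s'.1.2.2 q a' = s.1.2.2 k' b →
        a = a' ∧ p / 2 ^ s.1.1 = q / 2 ^ s.1.1) ∧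
      MeasurableSet 𝒢 ∧ μ.real 𝒢ᶜ ≤ (1 / 2) ^ N ∧
      (∀ x ∈ 𝒢, ∀ y ∈ 𝒢, S N x y → ∃ a ∈ s'.1.2.1, ∃ p < 2 ^ s'.1.1, ∃ q < 2 ^ s'.1.1,
        s'.1.2.2 p a = x ∧ s'.1.2.2 q a = y) ∧
      (∀ a ∈ s'.1.2.1, ∀ b ∈ s'.1.2.1, ∀ p < 2 ^ s'.1.1, s'.1.2.2 p a ∈ 𝒢 → s'.1.2.2 p b ∈ 𝒢 →
        (s'.1.2.2 p a ∈ B N ↔ s'.1.2.2 p b ∈ B N)) := by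
    rintro N ⟨⟨n, A, φ⟩, hs⟩
    obtain ⟨n', A', φ', 𝒢, h1, h2, h3⟩ := extend h hs N (B N) (hB N) ((1 / 2) ^ N) (by positivity)
    exact ⟨⟨⟨n', A', φ'⟩, h2⟩, 𝒢, h1, h3⟩
  choose step G hs using hstep
  let s0 : St := ⟨⟨0, univ, fun _ => id⟩, ⟨MeasurableSet.univ, fun _ => measurable_id,
    fun i _ a _ => h.eqv.refl a, fun i hi j hj a _ b _ he => ⟨by simp at hi hj; omega, he⟩,
    by simp⟩⟩
  let seq : ℕ → St := fun N => Nat.rec s0 (fun N s => step N s) N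
  exact ⟨fun N => (seq N).1.1, fun N => (seq N).1.2.1, fun N => (seq N).1.2.2,
    fun N => G N (seq N), ⟨fun N => (seq N).2, fun N => (hs N (seq N)).1,
    fun N => (hs N (seq N)).2.1, fun N => (hs N (seq N)).2.2.1, fun N => (hs N (seq N)).2.2.2.1,
    fun N => (hs N (seq N)).2.2.2.2.1, fun N => (hs N (seq N)).2.2.2.2.2.1,
    fun N => (hs N (seq N)).2.2.2.2.2.2⟩⟩

section
variable {X : Type*} [MeasurableSpace X] {μ : Measure X} {R : X → X → Prop}
    {S : ℕ → X → X → Prop} {B : ℕ → Set X} {n : ℕ → ℕ} {A : ℕ → Set X} {φ : ℕ → ℕ → X → X}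
    {𝒢 : ℕ → Set X}

theorem Tower.nmono (T : Tower μ R S B n A φ 𝒢) : StrictMono n := strictMono_nat_of_lt_succ T.lt

theorem Tower.down (T : Tower μ R S B n A φ 𝒢) (N : ℕ) : ∀ L, N ≤ L → ∀ p < 2 ^ n L, ∀ a ∈ A L,
    ∃ b ∈ A N, φ L p a = φ N (p % 2 ^ n N) b := by
  intro L hL
  induction L, hL using Nat.le_induction with
  | base => intro p hp a ha; exact ⟨a, ha, by rw [Nat.mod_eq_of_lt hp]⟩
  | succ L hL ih =>
    intro p hp a ha
    obtain ⟨b, hb, he⟩ := T.ext1 L p hp a ha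
    obtain ⟨d, hd, he'⟩ := ih (p % 2 ^ n L) (Nat.mod_lt _ (by positivity)) b hb
    refine ⟨d, hd, ?_⟩
    rw [he, he', Nat.mod_mod_of_dvd _ (pow_dvd_pow 2 (T.nmono.monotone hL))]

theorem Tower.agree_low (T : Tower μ R S B n A φ 𝒢) {N L : ℕ} (hNL : N ≤ L) {p k : ℕ}
    (hp : p < 2 ^ n L) (hk : k < 2 ^ n N) {a b : X} (ha : a ∈ A L) (hb : b ∈ A N)
    (he : φ L p a = φ N k b) : p % 2 ^ n N = k := by
  obtain ⟨d, hd, he'⟩ := T.down N L hNL p hp a ha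
  exact ((T.st N).φinj _ (Nat.mod_lt _ (by positivity)) _ hk _ hd _ hb (he'.symm.trans he)).1

theorem Tower.agree_high (T : Tower μ R S B n A φ 𝒢) (N : ℕ) {b : X} (hb : b ∈ A N) {k k' : ℕ}
    (hk : k < 2 ^ n N) (hk' : k' < 2 ^ n N) : ∀ L, N ≤ L → ∀ p < 2 ^ n L, ∀ q < 2 ^ n L,
    ∀ a ∈ A L, ∀ a' ∈ A L, φ L p a = φ N k b → φ L q a' = φ N k' b →
    a = a' ∧ ∀ i, n N ≤ i → p.testBit i = q.testBit i := by
  intro L hL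
  induction L, hL using Nat.le_induction with
  | base =>
    intro p hp q hq a ha a' ha' h1 h2
    have h3 := ((T.st N).φinj _ hp _ hk _ ha _ hb h1).2
    have h4 := ((T.st N).φinj _ hq _ hk' _ ha' _ hb h2).2
    refine ⟨h3.trans h4.symm, fun i hi => ?_⟩
    have hpow : 2 ^ n N ≤ 2 ^ i := Nat.pow_le_pow_right (by norm_num) hi
    rw [Nat.testBit_lt_two_pow (hp.trans_le hpow), Nat.testBit_lt_two_pow (hq.trans_le hpow)]
  | succ L hL ih =>
    intro p hp q hq a ha a' ha' h1 h2
    obtain ⟨d, hd, he⟩ := T.ext1 L p hp a ha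
    obtain ⟨d', hd', he'⟩ := T.ext1 L q hq a' ha'
    have hp' : p % 2 ^ n L < 2 ^ n L := Nat.mod_lt _ (by positivity)
    have hq' : q % 2 ^ n L < 2 ^ n L := Nat.mod_lt _ (by positivity)
    obtain ⟨h3, h4⟩ := ih _ hp' _ hq' d hd d' hd' (he.symm.trans h1) (he'.symm.trans h2)
    subst h3
    obtain ⟨h5, h6⟩ := T.ext2 L p hp q hq a ha a' ha' d hd _ hp' _ hq' he he'
    refine ⟨h5, fun i hi => ?_⟩
    by_cases hiL : i < n L
    · have := h4 i hi
      simpa [Nat.testBit_mod_two_pow, hiL] using this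
    · have h7 : (p / 2 ^ n L).testBit (i - n L) = (q / 2 ^ n L).testBit (i - n L) := by rw [h6]
      rw [Nat.testBit_div_two_pow, Nat.testBit_div_two_pow] at h7
      have h8 : i - n L + n L = i := by omega
      rwa [h8] at h7

open Classical in
noncomputable def code (n : ℕ → ℕ) (A : ℕ → Set X) (φ : ℕ → ℕ → X → X) (x : X) (i : ℕ) : Bool :=
  decide (∃ N k, (k < 2 ^ n N ∧ i < n N ∧ k.testBit i = true) ∧ x ∈ φ N k '' A N)

theorem code_iff (x : X) (i : ℕ) : code n A φ x i = true ↔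
    ∃ N k, (k < 2 ^ n N ∧ i < n N ∧ k.testBit i = true) ∧ x ∈ φ N k '' A N := by
  unfold code
  exact @decide_eq_true_iff _ (Classical.propDecidable _)

theorem Tower.code_eq (T : Tower μ R S B n A φ 𝒢) {N k : ℕ} (hk : k < 2 ^ n N) {a : X}
    (ha : a ∈ A N) {i : ℕ} (hi : i < n N) : code n A φ (φ N k a) i = k.testBit i := by
  by_cases hb : k.testBit i = true
  · rw [hb, code_iff]
    exact ⟨N, k, ⟨hk, hi, hb⟩, a, ha, rfl⟩
  · rw [Bool.not_eq_true] at hb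
    rw [hb, ← Bool.not_eq_true, code_iff]
    rintro ⟨M, k', ⟨hk', hi', hb'⟩, a', ha', he⟩
    rcases le_total N M with hNM | hNM
    · have := T.agree_low hNM hk' hk ha' ha he
      rw [← this, Nat.testBit_mod_two_pow, hb'] at hb
      simp [hi] at hb
    · have := T.agree_low hNM hk hk' ha ha' he.symm
      rw [← this, Nat.testBit_mod_two_pow, hb] at hb'
      simp at hb'

end

theorem Tower.code_meas {X : Type*} [MeasurableSpace X] [StandardBorelSpace X]
    {μ : Measure X} {R : X → X → Prop}
    {S : ℕ → X → X → Prop} {B : ℕ → Set X} {n : ℕ → ℕ} {A : ℕ → Set X} {φ : ℕ → ℕ → X → X}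
    {𝒢 : ℕ → Set X} (T : Tower μ R S B n A φ 𝒢) : Measurable (code n A φ) := by
  refine measurable_pi_lambda _ fun i => ?_
  refine measurable_to_bool ?_
  have : (fun x => code n A φ x i) ⁻¹' {true} = ⋃ N, ⋃ k, ⋃ (_ : k < 2 ^ n N ∧ i < n N ∧
      k.testBit i = true), φ N k '' A N := by
    ext x
    simp only [mem_preimage, mem_singleton_iff, code_iff, mem_iUnion, exists_prop]
  rw [this]
  refine MeasurableSet.iUnion fun N => MeasurableSet.iUnion fun k => MeasurableSet.iUnion fun hk =>
    (T.st N).Am.image_of_measurable_injOn ((T.st N).φm k) fun a ha b hb he =>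
    ((T.st N).φinj k hk.1 k hk.1 a ha b hb he).2

theorem Tower.dom {X : Type*} [MeasurableSpace X] [StandardBorelSpace X]
    {μ : Measure X} [IsProbabilityMeasure μ] {R : X → X → Prop} (hinv : InvariantRel μ R)
    {S : ℕ → X → X → Prop} {B : ℕ → Set X} {n : ℕ → ℕ} {A : ℕ → Set X} {φ : ℕ → ℕ → X → X}
    {𝒢 : ℕ → Set X} (T : Tower μ R S B n A φ 𝒢) (N : ℕ) :
    MeasurableSet (⋃ i ∈ Finset.range (2 ^ n N), φ N i '' A N) ∧
      μ (⋃ i ∈ Finset.range (2 ^ n N), φ N i '' A N)ᶜ = 0 := by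
  obtain ⟨h1, h2⟩ := (T.st N).image hinv (Finset.range (2 ^ n N)) (fun i hi => by simpa using hi)
    (A N) (T.st N).Am subset_rfl
  refine ⟨h1, ?_⟩
  rw [prob_compl_eq_zero_iff h1]
  have h3 := (T.st N).vol
  simp only [Finset.card_range] at h2
  push_cast at h2
  rw [mul_comm, h3] at h2
  rw [Measure.real, ENNReal.toReal_eq_one_iff] at h2
  exact h2

theorem Tower.cyl {X : Type*} [MeasurableSpace X] [StandardBorelSpace X]
    {μ : Measure X} [IsProbabilityMeasure μ] {R : X → X → Prop} (hinv : InvariantRel μ R)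
    {S : ℕ → X → X → Prop} {B : ℕ → Set X} {n : ℕ → ℕ} {A : ℕ → Set X} {φ : ℕ → ℕ → X → X}
    {𝒢 : ℕ → Set X} (T : Tower μ R S B n A φ 𝒢) (b k : ℕ) :
    μ.real {x | ∀ i < b, code n A φ x i = k.testBit i} = (1 / 2) ^ b := by
  have hbn : b ≤ n b := T.nmono.id_le b
  obtain ⟨s, hs⟩ : ∃ s, s = (Finset.range (2 ^ (n b - b))).image (fun j => k % 2 ^ b + 2 ^ b * j) :=
    ⟨_, rfl⟩
  have hcard : s.card = 2 ^ (n b - b) := by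
    rw [hs, Finset.card_image_of_injective, Finset.card_range]
    intro i j hij
    have : 0 < 2 ^ b := by positivity
    have h2 : 2 ^ b * i = 2 ^ b * j := by simpa using hij
    exact Nat.eq_of_mul_eq_mul_left this h2
  have hmod : k % 2 ^ b < 2 ^ b := Nat.mod_lt _ (by positivity)
  have hpow : 2 ^ b * 2 ^ (n b - b) = 2 ^ n b := by rw [← pow_add]; congr 1; omega
  have hsn : ∀ p, p ∈ s ↔ p < 2 ^ n b ∧ p % 2 ^ b = k % 2 ^ b := by
    intro p
    rw [hs]
    simp only [Finset.mem_image, Finset.mem_range]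
    constructor
    · rintro ⟨j, hj, rfl⟩
      constructor
      · calc k % 2 ^ b + 2 ^ b * j < 2 ^ b * (j + 1) := by rw [mul_add]; omega
          _ ≤ 2 ^ b * 2 ^ (n b - b) := Nat.mul_le_mul_left _ hj
          _ = _ := hpow
      · rw [Nat.add_mul_mod_self_left, Nat.mod_mod]
    · rintro ⟨h1, h2⟩
      refine ⟨p / 2 ^ b, ?_, ?_⟩
      · rw [Nat.div_lt_iff_lt_mul (by positivity), mul_comm, hpow]
        exact h1
      · rw [← h2, Nat.mod_add_div]
  obtain ⟨h1, h2⟩ := (T.st b).image hinv s (fun i hi => ((hsn i).1 hi).1) (A b) (T.st b).Am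
    subset_rfl
  have hae : ({x | ∀ i < b, code n A φ x i = k.testBit i} : Set X) =ᵐ[μ]
      (⋃ i ∈ s, φ b i '' A b : Set X) := by
    have hd := (T.dom hinv b).2
    have hd' : ∀ᵐ x ∂μ, x ∈ ⋃ i ∈ Finset.range (2 ^ n b), φ b i '' A b := hd
    filter_upwards [hd'] with x hx
    simp only [mem_iUnion, Finset.mem_range] at hx
    obtain ⟨p, hp, a, ha, rfl⟩ := hx
    apply propext
    have hR : (φ b p a ∈ (⋃ i ∈ s, φ b i '' A b : Set X)) ↔ p ∈ s := by
      simp only [mem_iUnion]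
      constructor
      · rintro ⟨q, hq, a', ha', he⟩
        rw [← ((T.st b).φinj _ ((hsn q).1 hq).1 _ hp _ ha' _ ha he).1]
        exact hq
      · intro hps
        exact ⟨p, hps, a, ha, rfl⟩
    refine Iff.trans ?_ hR.symm
    rw [hsn]
    change (∀ i < b, code n A φ (φ b p a) i = k.testBit i) ↔ _
    constructor
    · intro hc
      refine ⟨hp, Nat.eq_of_testBit_eq fun i => ?_⟩
      rw [Nat.testBit_mod_two_pow, Nat.testBit_mod_two_pow]
      by_cases hi : i < b
      · rw [← hc i hi, T.code_eq hp ha (hi.trans_le hbn)]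
      · simp [hi]
    · rintro ⟨-, h3⟩ i hi
      rw [T.code_eq hp ha (hi.trans_le hbn)]
      have h4 : (p % 2 ^ b).testBit i = (k % 2 ^ b).testBit i := by rw [h3]
      simpa [Nat.testBit_mod_two_pow, hi] using h4
  rw [measureReal_congr hae, h2, hcard]
  have h3 := (T.st b).vol
  have h4 : (2:ℝ) ^ b * 2 ^ (n b - b) = 2 ^ n b := by exact_mod_cast hpow
  push_cast
  rw [← h4] at h3
  have h5 : (2:ℝ) ^ b ≠ 0 := by positivity
  rw [one_div_pow, eq_div_iff h5]
  linarith

end Dye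

namespace Dye
open Set Filter Topology

theorem coding {X : Type*} [MeasurableSpace X] [StandardBorelSpace X]
    {μ : Measure X} [IsProbabilityMeasure μ] [NullSingletonClass μ] {R : X → X → Prop}
    {S : ℕ → X → X → Prop} {γ : ℕ → X → X} {D : ℕ → Set X} (h : HF μ R S γ D) :
    ∃ (c : X → ℕ → Bool) (Y : Set X), Measurable c ∧ MeasurableSet Y ∧ μ Yᶜ = 0 ∧ InjOn c Y ∧
      (∀ x ∈ Y, ∀ y ∈ Y, R x y ↔ ∃ n, ∀ i, n ≤ i → c x i = c y i) ∧
      ∀ b k : ℕ, μ.real {x | ∀ i < b, c x i = k.testBit i} = (1 / 2) ^ b := by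
  obtain ⟨e, he⟩ := exists_measurableEmbedding_real X
  obtain ⟨f, hf⟩ := exists_surjective_nat ℚ
  let B : ℕ → Set X := fun N => e ⁻¹' Iio ((f N.unpair.1 : ℚ) : ℝ)
  obtain ⟨n, A, φ, 𝒢, T⟩ := exists_tower h B (fun N => he.measurable measurableSet_Iio)
  let Dm : ℕ → Set X := fun N => ⋃ i ∈ Finset.range (2 ^ n N), φ N i '' A N
  have hDm : ∀ N, MeasurableSet (Dm N) := fun N => (T.dom h.inv N).1
  have hDμ : ∀ N, μ (Dm N)ᶜ = 0 := fun N => (T.dom h.inv N).2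
  have hDmem : ∀ N x, x ∈ Dm N → ∃ k < 2 ^ n N, ∃ a ∈ A N, φ N k a = x := by
    intro N x hx
    simp only [Dm, mem_iUnion, Finset.mem_range] at hx
    obtain ⟨i, hi, a, ha, hx⟩ := hx
    exact ⟨i, hi, a, ha, hx⟩
  let X' : Set X := (⋂ N, Dm N) ∩ (⋃ M, ⋂ N, ⋂ (_ : M ≤ N), 𝒢 N)
  have hX'm : MeasurableSet X' := (MeasurableSet.iInter hDm).inter
    (MeasurableSet.iUnion fun M => MeasurableSet.iInter fun N => MeasurableSet.iInter fun _ => T.Gm N)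
  have hX'D : ∀ x ∈ X', ∀ N, ∃ k < 2 ^ n N, ∃ a ∈ A N, φ N k a = x := fun x hx N =>
    hDmem N x (mem_iInter.1 hx.1 N)
  have hX'G : ∀ x ∈ X', ∀ᶠ N in atTop, x ∈ 𝒢 N := by
    intro x hx
    have := hx.2
    simp only [mem_iUnion, mem_iInter] at this
    obtain ⟨M, hM⟩ := this
    exact eventually_atTop.2 ⟨M, hM⟩
  have hX'μ : μ X'ᶜ = 0 := by
    have h1 : ∑' N, μ (𝒢 N)ᶜ ≠ ⊤ := by
      have h2 : ∀ N, μ (𝒢 N)ᶜ ≤ ENNReal.ofReal ((1 / 2) ^ N) := by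
        intro N
        rw [← ofReal_measureReal]
        exact ENNReal.ofReal_le_ofReal (T.Gμ N)
      refine ne_top_of_le_ne_top ?_ (ENNReal.tsum_le_tsum h2)
      rw [← ENNReal.ofReal_tsum_of_nonneg (fun N => by positivity) summable_geometric_two]
      exact ENNReal.ofReal_ne_top
    have h3 := ae_eventually_notMem h1
    have h4 : ∀ᵐ x ∂μ, ∀ N, x ∈ Dm N := ae_all_iff.2 fun N => hDμ N
    have h5 : ∀ᵐ x ∂μ, x ∈ X' := by
      filter_upwards [h3, h4] with x hx1 hx2
      refine ⟨mem_iInter.2 hx2, ?_⟩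
      obtain ⟨M, hM⟩ := eventually_atTop.1 hx1
      simp only [mem_iUnion, mem_iInter]
      exact ⟨M, fun N hN => by simpa using hM N hN⟩
    exact h5
  let Y : Set X := {x | ∀ l, x ∈ D l → γ l x ∈ X'}
  have hYX : ∀ x ∈ Y, ∀ y, R x y → y ∈ X' := by
    intro x hx y hxy
    obtain ⟨l, hl, rfl⟩ := h.γex x y hxy
    exact hx l hl
  have hYX' : ∀ x ∈ Y, x ∈ X' := fun x hx => hYX x hx x (h.eqv.refl x)
  have hYinv : ∀ x ∈ Y, ∀ y, R x y → y ∈ Y := by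
    intro x hx y hxy l hl
    exact hYX x hx _ (h.eqv.trans hxy (h.γR l y hl))
  have hYc : Yᶜ = ⋃ l, (D l ∩ γ l ⁻¹' X'ᶜ) := by
    ext x
    simp [Y]
  have hYm : MeasurableSet Y := by
    rw [← MeasurableSet.compl_iff, hYc]
    exact MeasurableSet.iUnion fun l => (h.Dm l).inter (h.γm l hX'm.compl)
  have hYμ : μ Yᶜ = 0 := by
    rw [hYc, measure_iUnion_null_iff]
    intro l
    rw [← h.inv (γ l) (D l ∩ γ l ⁻¹' X'ᶜ) (h.γm l) ((h.Dm l).inter (h.γm l hX'm.compl))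
      ((h.γinj l).mono inter_subset_left) (fun x hx => h.γR l x hx.1)]
    refine measure_mono_null ?_ hX'μ
    rintro _ ⟨x, hx, rfl⟩
    exact hx.2
  have hinj : ∀ x ∈ X', ∀ y ∈ X', code n A φ x = code n A φ y → x = y := by
    intro x hx y hy hc
    have key : ∀ q : ℚ, e x < q ↔ e y < q := by
      intro q
      obtain ⟨j, rfl⟩ := hf q
      obtain ⟨M, hM⟩ := eventually_atTop.1 ((hX'G x hx).and (hX'G y hy))
      obtain ⟨hxG, hyG⟩ := hM (Nat.pair j M) (Nat.right_le_pair j M)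
      obtain ⟨p, hp, a, ha, rfl⟩ := hX'D x hx (Nat.pair j M + 1)
      obtain ⟨q, hq, b, hb, rfl⟩ := hX'D y hy (Nat.pair j M + 1)
      have hpq : p = q := by
        refine Nat.eq_of_testBit_eq fun i => ?_
        by_cases hi : i < n (Nat.pair j M + 1)
        · rw [← T.code_eq hp ha hi, ← T.code_eq hq hb hi, hc]
        · have hpow : 2 ^ n (Nat.pair j M + 1) ≤ 2 ^ i :=
            Nat.pow_le_pow_right (by norm_num) (not_lt.1 hi)
          rw [Nat.testBit_lt_two_pow (hp.trans_le hpow), Nat.testBit_lt_two_pow (hq.trans_le hpow)]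
      subst hpq
      have := T.g2 _ a ha b hb p hp hxG hyG
      simpa [B] using this
    apply he.injective
    by_contra hne
    rcases lt_or_gt_of_ne hne with hlt | hlt
    · obtain ⟨q, h1, h2⟩ := exists_rat_btwn hlt
      exact absurd ((key q).1 h1) (not_lt.2 h2.le)
    · obtain ⟨q, h1, h2⟩ := exists_rat_btwn hlt
      exact absurd ((key q).2 h1) (not_lt.2 h2.le)
  have hhigh : ∀ N, ∀ a ∈ A N, ∀ k < 2 ^ n N, ∀ k' < 2 ^ n N, φ N k a ∈ X' → φ N k' a ∈ X' →
      ∀ i, n N ≤ i → code n A φ (φ N k a) i = code n A φ (φ N k' a) i := by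
    intro N a ha k hk k' hk' hx hz i hi
    have hiL : i < n (i + 1 + N) :=
      lt_of_lt_of_le (show i < i + 1 + N by omega) (T.nmono.id_le (i + 1 + N))
    obtain ⟨p, hp, a1, ha1, h1⟩ := hX'D _ hx (i + 1 + N)
    obtain ⟨q, hq, a2, ha2, h2⟩ := hX'D _ hz (i + 1 + N)
    have h3 := (T.agree_high N ha hk hk' (i + 1 + N) (by omega) p hp q hq a1 ha1 a2 ha2 h1 h2).2 i hi
    rw [← h1, ← h2, T.code_eq hp ha1 hiL, T.code_eq hq ha2 hiL, h3]
  have hSmono : ∀ a b k k', k ≤ k' → S k a b → S k' a b := by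
    intro a b k k' hk h0
    induction hk with
    | refl => exact h0
    | step _ ih => exact h.Smono _ _ _ ih
  refine ⟨code n A φ, Y, T.code_meas, hYm, hYμ,
    fun x hx y hy hc => hinj x (hYX' x hx) y (hYX' y hy) hc, ?_, T.cyl h.inv⟩
  intro x hx y hy
  have hx' := hYX' x hx
  have hy' := hYX' y hy
  constructor
  · intro hR
    obtain ⟨M, hM⟩ := (h.SR x y).1 hR
    obtain ⟨N, ⟨hN1, hN2⟩, hN3⟩ := (((hX'G x hx').and (hX'G y hy')).and
      (eventually_ge_atTop M)).exists
    obtain ⟨a, ha, p, hp, q, hq, rfl, rfl⟩ := T.g1 N x hN1 y hN2 (hSmono _ _ _ _ hN3 hM)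
    exact ⟨n (N + 1), hhigh (N + 1) a ha p hp q hq hx' hy'⟩
  · rintro ⟨N, hN⟩
    have hNn : N ≤ n N := T.nmono.id_le N
    obtain ⟨k, hk, a, ha, rfl⟩ := hX'D x hx' N
    obtain ⟨k', hk', b, hb, rfl⟩ := hX'D y hy' N
    have hRz : R (φ N k a) (φ N k' a) :=
      h.eqv.trans (h.eqv.symm ((T.st N).φR k hk a ha)) ((T.st N).φR k' hk' a ha)
    have hz := hYX' _ (hYinv _ hx _ hRz)
    have : φ N k' a = φ N k' b := by
      refine hinj _ hz _ hy' (funext fun i => ?_)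
      by_cases hi : i < n N
      · rw [T.code_eq hk' ha hi, T.code_eq hk' hb hi]
      · rw [← hhigh N a ha k hk k' hk' hx' hz i (not_lt.1 hi)]
        exact hN i (hNn.trans (not_lt.1 hi))
    rw [← this]
    exact hRz

theorem cantor_ext (ν₁ ν₂ : Measure (ℕ → Bool)) [IsProbabilityMeasure ν₁] [IsProbabilityMeasure ν₂]
    (hν : ∀ b k : ℕ, ν₁ {z | ∀ i < b, z i = k.testBit i} = ν₂ {z | ∀ i < b, z i = k.testBit i}) :
    ν₁ = ν₂ := by
  have hcode : ∀ (z : ℕ → Bool) (b : ℕ), ∃ k : ℕ, ∀ i < b, k.testBit i = z i := by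
    intro z b
    exact ⟨Nat.ofBits (fun i : Fin b => z i), fun i hi => by rw [Nat.testBit_ofBits_lt _ _ hi]⟩
  have hcm : ∀ b k : ℕ, MeasurableSet {z : ℕ → Bool | ∀ i < b, z i = k.testBit i} := by
    intro b k
    have : {z : ℕ → Bool | ∀ i < b, z i = k.testBit i} =
        ⋂ i, ⋂ (_ : i < b), (fun z : ℕ → Bool => z i) ⁻¹' {k.testBit i} := by
      ext z
      simp
    rw [this]
    exact MeasurableSet.iInter fun i => MeasurableSet.iInter fun _ =>
      measurable_pi_apply i (measurableSet_singleton _)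
  let C : Set (Set (ℕ → Bool)) := {s | ∃ b k : ℕ, s = {z | ∀ i < b, z i = k.testBit i}}
  refine ext_of_generate_finite C ?_ ?_ ?_ (by simp)
  · apply le_antisymm
    · refine iSup_le fun i => ?_
      rw [← measurable_iff_comap_le]
      refine @measurable_to_bool _ (MeasurableSpace.generateFrom C) _ ?_
      have : (fun z : ℕ → Bool => z i) ⁻¹' {true} = ⋃ k : ℕ, ⋃ (_ : k.testBit i = true),
          {z | ∀ j < i + 1, z j = k.testBit j} := by
        ext z
        simp only [mem_preimage, mem_singleton_iff, mem_iUnion, exists_prop]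
        constructor
        · intro hz
          obtain ⟨k, hk⟩ := hcode z (i + 1)
          exact ⟨k, (hk i (by omega)).trans hz, fun j hj => (hk j hj).symm⟩
        · rintro ⟨k, hk, hz⟩
          exact (hz i (by omega)).trans hk
      rw [this]
      exact MeasurableSet.iUnion fun k => MeasurableSet.iUnion fun _ =>
        MeasurableSpace.measurableSet_generateFrom ⟨i + 1, k, rfl⟩
    · refine MeasurableSpace.generateFrom_le ?_
      rintro _ ⟨b, k, rfl⟩
      exact hcm b k
  · rintro _ ⟨b, k, rfl⟩ _ ⟨b', k', rfl⟩ ⟨z, hz, hz'⟩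
    obtain ⟨m, hm⟩ := hcode z (max b b')
    refine ⟨max b b', m, ?_⟩
    ext w
    constructor
    · rintro ⟨hw, hw'⟩ i hi
      rw [hm i hi]
      rcases lt_max_iff.1 hi with hi | hi
      · exact (hw i hi).trans (hz i hi).symm
      · exact (hw' i hi).trans (hz' i hi).symm
    · intro hw
      have hwz : ∀ i < max b b', w i = z i := fun i hi => (hw i hi).trans (hm i hi)
      exact ⟨fun i hi => (hwz i (lt_max_of_lt_left hi)).trans (hz i hi),
        fun i hi => (hwz i (lt_max_of_lt_right hi)).trans (hz' i hi)⟩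
  · rintro _ ⟨b, k, rfl⟩
    exact hν b k

theorem full_coding {X : Type*} [MeasurableSpace X] [StandardBorelSpace X]
    (μ : Measure X) [IsProbabilityMeasure μ] [NullSingletonClass μ] (R : X → X → Prop)
    (hR : Equivalence R) (hg : MeasurableSet {p : X × X | R p.1 p.2})
    (hinv : InvariantRel μ R) (herg : ErgodicRel μ R) (hhyp : HyperfiniteRel μ R) :
    ∃ (c : X → ℕ → Bool) (Y : Set X), Measurable c ∧ MeasurableSet Y ∧ μ Yᶜ = 0 ∧ InjOn c Y ∧
      (∀ x ∈ Y, ∀ y ∈ Y, R x y ↔ ∃ n, ∀ i, n ≤ i → c x i = c y i) ∧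
      ∀ b k : ℕ, μ {x | ∀ i < b, c x i = k.testBit i} = ENNReal.ofReal ((1 / 2) ^ b) := by
  obtain ⟨X₁, R', S, γ, D, hX1, hX2, hX3, h⟩ := exists_HF μ R hR hg hinv herg hhyp
  obtain ⟨c, Y, h1, h2, h3, h4, h5, h6⟩ := coding h
  refine ⟨c, Y ∩ X₁, h1, h2.inter hX1, ?_, h4.mono inter_subset_left, ?_, ?_⟩
  · rw [compl_inter]
    exact measure_union_null h3 hX2
  · intro x hx y hy
    rw [hX3 x hx.2 y hy.2, h5 x hx.1 y hy.1]
  · intro b k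
    rw [← h6 b k, ofReal_measureReal]

end Dye

/-- **Dye's theorem.** Any two hyperfinite ergodic measured equivalence relations of
type `II₁` (hyperfinite, countable classes, invariant non-atomic probability measure,
ergodic, on a standard Borel space) are isomorphic: there is a Borel isomorphism `θ`
between conull Borel subsets carrying the first measure class to the second and the
first relation to the second. -/
theorem dye_theorem
    {X₁ : Type*} [MeasurableSpace X₁] [StandardBorelSpace X₁]
    {X₂ : Type*} [MeasurableSpace X₂] [StandardBorelSpace X₂]
    (μ₁ : Measure X₁) (hμ₁ : IsProbabilityMeasure μ₁) (hna₁ : NoAtoms μ₁)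
    (μ₂ : Measure X₂) (hμ₂ : IsProbabilityMeasure μ₂) (hna₂ : NoAtoms μ₂)
    (R₁ : X₁ → X₁ → Prop) (hR₁ : Equivalence R₁)
    (hgraph₁ : MeasurableSet {p : X₁ × X₁ | R₁ p.1 p.2})
    (hcount₁ : ∀ x, {y | R₁ x y}.Countable)
    (hinv₁ : InvariantRel μ₁ R₁) (herg₁ : ErgodicRel μ₁ R₁)
    (hhyp₁ : HyperfiniteRel μ₁ R₁)
    (R₂ : X₂ → X₂ → Prop) (hR₂ : Equivalence R₂)
    (hgraph₂ : MeasurableSet {p : X₂ × X₂ | R₂ p.1 p.2})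
    (hcount₂ : ∀ x, {y | R₂ x y}.Countable)
    (hinv₂ : InvariantRel μ₂ R₂) (herg₂ : ErgodicRel μ₂ R₂)
    (hhyp₂ : HyperfiniteRel μ₂ R₂) :
    ∃ (X₁' : Set X₁) (X₂' : Set X₂) (θ : X₁ → X₂),
      MeasurableSet X₁' ∧ μ₁ X₁'ᶜ = 0 ∧ MeasurableSet X₂' ∧ μ₂ X₂'ᶜ = 0 ∧
      Measurable θ ∧ Set.InjOn θ X₁' ∧ θ '' X₁' = X₂' ∧
      (∀ B : Set X₂, MeasurableSet B → (μ₁ (θ ⁻¹' B) = 0 ↔ μ₂ B = 0)) ∧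
      (∀ x ∈ X₁', ∀ y ∈ X₁', (R₁ x y ↔ R₂ (θ x) (θ y))) := by
  have hn₁ : NullSingletonClass μ₁ := hna₁
  have hn₂ : NullSingletonClass μ₂ := hna₂
  obtain ⟨c₁, Y₁, hc₁, hY₁, hμY₁, hi₁, hr₁, hcyl₁⟩ :=
    Dye.full_coding μ₁ R₁ hR₁ hgraph₁ hinv₁ herg₁ hhyp₁
  obtain ⟨c₂, Y₂, hc₂, hY₂, hμY₂, hi₂, hr₂, hcyl₂⟩ :=
    Dye.full_coding μ₂ R₂ hR₂ hgraph₂ hinv₂ herg₂ hhyp₂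
  have hcm : ∀ b k : ℕ, MeasurableSet {z : ℕ → Bool | ∀ i < b, z i = k.testBit i} := by
    intro b k
    have : {z : ℕ → Bool | ∀ i < b, z i = k.testBit i} =
        ⋂ i, ⋂ (_ : i < b), (fun z : ℕ → Bool => z i) ⁻¹' {k.testBit i} := by
      ext z
      simp
    rw [this]
    exact MeasurableSet.iInter fun i => MeasurableSet.iInter fun _ =>
      measurable_pi_apply i (measurableSet_singleton _)
  have hν : μ₁.map c₁ = μ₂.map c₂ := by
    have := Measure.isProbabilityMeasure_map (μ := μ₁) hc₁.aemeasurable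
    have := Measure.isProbabilityMeasure_map (μ := μ₂) hc₂.aemeasurable
    refine Dye.cantor_ext _ _ fun b k => ?_
    rw [Measure.map_apply hc₁ (hcm b k), Measure.map_apply hc₂ (hcm b k)]
    exact (hcyl₁ b k).trans (hcyl₂ b k).symm
  have htrans : ∀ Z : Set (ℕ → Bool), MeasurableSet Z → μ₁ (c₁ ⁻¹' Z) = μ₂ (c₂ ⁻¹' Z) := by
    intro Z hZ
    rw [← Measure.map_apply hc₁ hZ, ← Measure.map_apply hc₂ hZ, hν]
  have hZ₁ : MeasurableSet (c₁ '' Y₁) := hY₁.image_of_measurable_injOn hc₁ hi₁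
  have hZ₂ : MeasurableSet (c₂ '' Y₂) := hY₂.image_of_measurable_injOn hc₂ hi₂
  have hne : Nonempty Y₂ := by
    by_contra hne
    rw [not_nonempty_iff, Set.isEmpty_coe_sort] at hne
    rw [hne, Set.compl_empty, measure_univ] at hμY₂
    exact one_ne_zero hμY₂
  have := hY₂.standardBorel
  have hemb : MeasurableEmbedding (fun y : Y₂ => c₂ y.1) :=
    (hc₂.comp measurable_subtype_coe).measurableEmbedding
      (fun y y' he => Subtype.ext (hi₂ y.2 y'.2 he))
  obtain ⟨g, hgm, hgl⟩ : ∃ g : (ℕ → Bool) → X₂, Measurable g ∧ ∀ y ∈ Y₂, g (c₂ y) = y :=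
    ⟨fun z => (hemb.invFun z).1, measurable_subtype_coe.comp hemb.measurable_invFun,
      fun y hy => congrArg Subtype.val (hemb.leftInverse_invFun ⟨y, hy⟩)⟩
  have hθ : ∀ x ∈ Y₁ ∩ c₁ ⁻¹' (c₂ '' Y₂), g (c₁ x) ∈ Y₂ ∧ c₂ (g (c₁ x)) = c₁ x := by
    rintro x ⟨-, y, hy, he⟩
    rw [← he, hgl y hy]
    exact ⟨hy, rfl⟩
  refine ⟨Y₁ ∩ c₁ ⁻¹' (c₂ '' Y₂), Y₂ ∩ c₂ ⁻¹' (c₁ '' Y₁), g ∘ c₁, hY₁.inter (hc₁ hZ₂), ?_,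
    hY₂.inter (hc₂ hZ₁), ?_, hgm.comp hc₁, ?_, ?_, ?_, ?_⟩
  · rw [Set.compl_inter]
    refine measure_union_null hμY₁ ?_
    rw [← Set.preimage_compl, htrans _ hZ₂.compl]
    exact measure_mono_null (fun y hy hy' => hy ⟨y, hy', rfl⟩) hμY₂
  · rw [Set.compl_inter]
    refine measure_union_null hμY₂ ?_
    rw [← Set.preimage_compl, ← htrans _ hZ₁.compl]
    exact measure_mono_null (fun y hy hy' => hy ⟨y, hy', rfl⟩) hμY₁
  · intro x hx x' hx' he
    refine hi₁ hx.1 hx'.1 ?_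
    rw [← (hθ x hx).2, ← (hθ x' hx').2]
    exact congrArg c₂ he
  · ext y
    constructor
    · rintro ⟨x, hx, rfl⟩
      exact ⟨(hθ x hx).1, x, hx.1, (hθ x hx).2.symm⟩
    · rintro ⟨hy, x, hx, he⟩
      refine ⟨x, ⟨hx, y, hy, he.symm⟩, ?_⟩
      rw [Function.comp_apply, he, hgl y hy]
  · intro B hB
    rw [Set.preimage_comp, htrans _ (hgm hB)]
    have hae : (c₂ ⁻¹' (g ⁻¹' B) : Set X₂) =ᵐ[μ₂] B := by
      have h0 : ∀ᵐ y ∂μ₂, y ∈ Y₂ := hμY₂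
      filter_upwards [h0] with y hy
      apply propext
      change g (c₂ y) ∈ B ↔ y ∈ B
      rw [hgl y hy]
    rw [measure_congr hae]
  · intro x hx y hy
    rw [hr₁ x hx.1 y hy.1]
    change _ ↔ R₂ (g (c₁ x)) (g (c₁ y))
    rw [hr₂ _ (hθ x hx).1 _ (hθ y hy).1, (hθ x hx).2, (hθ y hy).2]
end
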